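/- arXiv:2410.02105 — 5 statements merged into one kernel-verified Lean document; each statement's English description precedes it below -/
import Mathlib

section
/- For integers n ≥ k ≥ d ≥ 1 and any tuple α = (α_1,…,α_k) of k pairwise distinct rational numbers, the set Z_{n,k,d}(α) is finite with cardinality |Z_{n,k,d}(α)| = (k!·d!/(k−d)!)·Stir(n,d). -/
open MvPolynomial

/-- Stirling numbers of the second kind: the number of set partitions of an `n`-element
set into `d` nonempty blocks, via the standard recurrence. -/
def stirling2 : ℕ → ℕ → ℕ
  | 0, 0 => 1
  | 0, _ + 1 => 0
  | _ + 1, 0 => 0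
  | n + 1, d + 1 => (d + 1) * stirling2 n (d + 1) + stirling2 n d

/-- The locus `Z_{n,k,d}(α) ⊆ ℚ^{n+d}`: points whose coordinates all lie in
`{α_1,…,α_k}`, whose last `d` coordinates are pairwise distinct, and whose first `n`
coordinates form the same set as the last `d` coordinates. -/
def Zfin (n k d : ℕ) (α : Fin k → ℚ) : Set ((Fin n ⊕ Fin d) → ℚ) :=
  {z | (∀ i, ∃ j, z i = α j) ∧
    Function.Injective (fun i : Fin d => z (Sum.inr i)) ∧
    Set.range (fun j : Fin n => z (Sum.inl j)) = Set.range (fun i : Fin d => z (Sum.inr i))}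

/-- Surjections from `Fin n` to a finite type, counted by Stirling numbers. -/
theorem card_surj_aux (n : ℕ) : ∀ (d : ℕ) (β : Type) [Finite β], Nat.card β = d →
    Nat.card {f : Fin n → β // Function.Surjective f} = Nat.factorial d * stirling2 n d := by
  classical
  induction n with
  | zero =>
    intro d β _ hβ
    rcases d with _ | d
    · have : IsEmpty β := by
        rcases Nat.card_eq_zero.1 hβ with h | h
        · exact h
        · exact absurd ‹Finite β› (not_finite_iff_infinite.2 h)
      have : Unique {f : Fin 0 → β // Function.Surjective f} :=
        { default := ⟨Fin.elim0, fun b => isEmptyElim b⟩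
          uniq := fun f => Subtype.ext (Subsingleton.elim _ _) }
      simp [stirling2]
    · have : Nonempty β := (Nat.card_pos_iff.1 (by omega)).1
      have : IsEmpty {f : Fin 0 → β // Function.Surjective f} :=
        ⟨fun f => by
          obtain ⟨i, _⟩ := f.2 (Classical.arbitrary β)
          exact i.elim0⟩
      simp [stirling2]
  | succ n ih =>
    intro d β _ hβ
    rcases d with _ | d
    · have : IsEmpty β := by
        rcases Nat.card_eq_zero.1 hβ with h | h
        · exact h
        · exact absurd ‹Finite β› (not_finite_iff_infinite.2 h)
      have : IsEmpty {f : Fin (n + 1) → β // Function.Surjective f} :=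
        ⟨fun f => isEmptyElim (f.1 0)⟩
      simp [stirling2]
    · have : Fintype β := Fintype.ofFinite β
      let F : (Σ b : β, ({g : Fin n → β // Function.Surjective g} ⊕
          {g : Fin n → {x : β // x ≠ b} // Function.Surjective g})) →
          {f : Fin (n + 1) → β // Function.Surjective f} := fun p =>
        match p with
        | ⟨b, Sum.inl g⟩ => ⟨Fin.cons b g.1, fun x => by
            obtain ⟨i, hi⟩ := g.2 x
            exact ⟨i.succ, by simpa using hi⟩⟩
        | ⟨b, Sum.inr g⟩ => ⟨Fin.cons b (fun i => (g.1 i : β)), fun x => by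
            by_cases hx : x = b
            · exact ⟨0, by simp [hx]⟩
            · obtain ⟨i, hi⟩ := g.2 ⟨x, hx⟩
              exact ⟨i.succ, by simp [hi]⟩⟩
      have hF : Function.Bijective F := by
        constructor
        · rintro ⟨b, g | g⟩ ⟨c, h | h⟩ hh
          · have h0 := congrArg Subtype.val hh
            have h1 : b = c ∧ (g.1) = (h.1) :=
              ⟨congrFun h0 0, funext fun i => congrFun h0 i.succ⟩
            obtain ⟨rfl, h2⟩ := h1
            have : g = h := Subtype.ext h2
            rw [this]
          · exfalso
            have h0 := congrArg Subtype.val hh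
            have h1 : b = c ∧ (g.1) = (fun i => (h.1 i : β)) :=
              ⟨congrFun h0 0, funext fun i => congrFun h0 i.succ⟩
            obtain ⟨rfl, h2⟩ := h1
            obtain ⟨i, hi⟩ := g.2 b
            exact (h.1 i).2 ((congrFun h2 i).symm.trans hi)
          · exfalso
            have h0 := congrArg Subtype.val hh
            have h1 : b = c ∧ (fun i => (g.1 i : β)) = (h.1) :=
              ⟨congrFun h0 0, funext fun i => congrFun h0 i.succ⟩
            obtain ⟨rfl, h2⟩ := h1
            obtain ⟨i, hi⟩ := h.2 b
            exact (g.1 i).2 ((congrFun h2 i).trans hi)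
          · have h0 := congrArg Subtype.val hh
            have h1 : b = c ∧ (fun i => (g.1 i : β)) = (fun i => (h.1 i : β)) :=
              ⟨congrFun h0 0, funext fun i => congrFun h0 i.succ⟩
            obtain ⟨rfl, h2⟩ := h1
            have : g = h := Subtype.ext (funext fun i => Subtype.ext (congrFun h2 i))
            rw [this]
        · rintro ⟨f, hf⟩
          by_cases hs : Function.Surjective (Fin.tail f)
          · exact ⟨⟨f 0, Sum.inl ⟨Fin.tail f, hs⟩⟩, Subtype.ext (Fin.cons_self_tail f)⟩
          · have key : ∀ x, x ≠ f 0 → ∃ i, Fin.tail f i = x := by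
              intro x hx
              obtain ⟨i, hi⟩ := hf x
              induction i using Fin.cases with
              | zero => exact absurd hi.symm hx
              | succ i => exact ⟨i, hi⟩
            have hne : ∀ i, Fin.tail f i ≠ f 0 := by
              intro i hi
              apply hs
              intro x
              by_cases hx : x = f 0
              · exact ⟨i, hi.trans hx.symm⟩
              · exact key x hx
            refine ⟨⟨f 0, Sum.inr ⟨fun i => ⟨Fin.tail f i, hne i⟩, ?_⟩⟩,
              Subtype.ext (Fin.cons_self_tail f)⟩
            rintro ⟨x, hx⟩
            obtain ⟨i, hi⟩ := key x hx
            exact ⟨i, Subtype.ext hi⟩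
      rw [← Nat.card_congr (Equiv.ofBijective F hF), Nat.card_sigma]
      have hb : ∀ b : β, Nat.card ({g : Fin n → β // Function.Surjective g} ⊕
          {g : Fin n → {x : β // x ≠ b} // Function.Surjective g}) =
          Nat.factorial (d + 1) * stirling2 n (d + 1) + Nat.factorial d * stirling2 n d := by
        intro b
        rw [Nat.card_sum, ih (d + 1) β hβ, ih d {x : β // x ≠ b}]
        rw [Nat.card_eq_fintype_card] at hβ ⊢
        rw [Fintype.card_subtype_compl, hβ]
        simp
      simp only [hb, Finset.sum_const, Finset.card_univ, smul_eq_mul]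
      rw [← Nat.card_eq_fintype_card, hβ, stirling2, Nat.factorial_succ]
      ring

/-- For integers `n ≥ k ≥ d ≥ 1` and any tuple of `k` pairwise distinct
rational numbers `α`, the set `Z_{n,k,d}(α)` is finite of cardinality
`(k!·d!/(k−d)!)·Stir(n,d)`. -/
theorem Zfin_finite_and_card (n k d : ℕ) (hd : 1 ≤ d) (hk : d ≤ k) (hn : k ≤ n)
    (α : Fin k → ℚ) (hα : Function.Injective α) :
    (Zfin n k d α).Finite ∧
      Nat.card (Zfin n k d α) =
        Nat.factorial k * Nat.factorial d / Nat.factorial (k - d) * stirling2 n d := by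
  let G : (Fin d ↪ Fin k) × {f : Fin n → Fin d // Function.Surjective f} → Zfin n k d α :=
    fun p => ⟨Sum.elim (fun i => α (p.1 (p.2.1 i))) (fun i => α (p.1 i)), by
      refine ⟨?_, ?_, ?_⟩
      · rintro (i | i)
        · exact ⟨_, rfl⟩
        · exact ⟨_, rfl⟩
      · exact hα.comp p.1.injective
      · exact p.2.2.range_comp (fun i => α (p.1 i))⟩
  have hG : Function.Bijective G := by
    constructor
    · rintro ⟨e, f⟩ ⟨e', f'⟩ h
      have h0 := congrArg Subtype.val h
      have he : e = e' := by
        ext i : 1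
        exact hα (congrFun h0 (Sum.inr i))
      subst he
      have hf : f = f' := Subtype.ext (funext fun i =>
        e.injective (hα (congrFun h0 (Sum.inl i))))
      rw [hf]
    · rintro ⟨z, h1, h2, h3⟩
      choose a ha using id h1
      have hf : ∀ j : Fin n, ∃ i : Fin d, z (Sum.inr i) = z (Sum.inl j) := fun j =>
        h3.subset (Set.mem_range_self (f := fun j : Fin n => z (Sum.inl j)) j)
      choose f hf using hf
      refine ⟨⟨⟨fun i => a (Sum.inr i), fun i j hij => h2 ?_⟩, ⟨f, fun i => ?_⟩⟩,
        Subtype.ext (funext ?_)⟩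
      · have hij' : a (Sum.inr i) = a (Sum.inr j) := hij
        simp only [ha, hij']
      · have : z (Sum.inr i) ∈ Set.range (fun j : Fin n => z (Sum.inl j)) :=
          h3 ▸ Set.mem_range_self (f := fun i : Fin d => z (Sum.inr i)) i
        obtain ⟨j, hj⟩ := this
        exact ⟨j, h2 ((hf j).trans hj)⟩
      · rintro (j | i)
        · exact (ha _).symm.trans (hf j)
        · exact (ha _).symm
  constructor
  · exact Set.finite_coe_iff.1 (Finite.of_surjective G hG.2)
  · rw [← Nat.card_congr (Equiv.ofBijective G hG), Nat.card_prod,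
      card_surj_aux n d (Fin d) (by simp), Nat.card_eq_fintype_card,
      Fintype.card_embedding_eq, Fintype.card_fin, Fintype.card_fin,
      Nat.descFactorial_eq_div hk, ← mul_assoc]
    congr 1
    rw [mul_comm, Nat.mul_comm k.factorial,
      Nat.mul_div_assoc _ (Nat.factorial_dvd_factorial (Nat.sub_le k d))]
end

section
/- Let d ≥ 1 and a ≥ 0 be integers and let I ⊆ ℤ[y_1,…,y_d] be the ideal generated by the complete homogeneous symmetric polynomials h_r(y_1,…,y_d) for all r > a. Then for every 1 ≤ i ≤ d, the polynomial h_{a+i}(y_i, y_{i+1}, …, y_d) lies in I. -/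
open MvPolynomial

open Sym Equiv

theorem hsymm_option_succ {σ : Type} [Fintype σ] [DecidableEq σ] (r : ℕ) :
    hsymm (Option σ) ℤ (r + 1) =
      rename some (hsymm σ ℤ (r + 1)) + X none * hsymm (Option σ) ℤ r := by
  unfold hsymm
  rw [← Equiv.sum_comp (symOptionSuccEquiv (α := σ) (n := r)).symm, Fintype.sum_sum_type, add_comm,
    map_sum, Finset.mul_sum]
  congr 1
  · refine Finset.sum_congr rfl fun s _ => ?_
    simp [symOptionSuccEquiv, SymOptionSuccEquiv.decode, map_multiset_prod, Multiset.map_map]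
  · refine Finset.sum_congr rfl fun s _ => ?_
    simp [symOptionSuccEquiv, SymOptionSuccEquiv.decode]
    change (Multiset.map X (none ::ₘ s.1)).prod = X none * (Multiset.map X s.1).prod
    simp

theorem hsymm_fin_succ (n r : ℕ) :
    hsymm (Fin (n + 1)) ℤ (r + 1) =
      rename Fin.succ (hsymm (Fin n) ℤ (r + 1)) + X 0 * hsymm (Fin (n + 1)) ℤ r := by
  have h := congrArg (rename (finSuccEquiv n).symm) (hsymm_option_succ (σ := Fin n) r)
  rw [map_add, map_mul, rename_hsymm, rename_hsymm, rename_rename, rename_X] at h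
  have e : (⇑(finSuccEquiv n).symm ∘ some) = (Fin.succ : Fin n → Fin (n + 1)) := by
    funext j; simp
  rw [e, finSuccEquiv_symm_none] at h
  exact h

theorem hsymm_tail_aux (d a : ℕ) (i : ℕ) : ∀ (k : ℕ) (h : i + k = d) (r : ℕ), a + i < r →
    rename (fun j : Fin k => (⟨i + (j : ℕ), by have h1 := j.isLt; omega⟩ : Fin d))
      (hsymm (Fin k) ℤ r) ∈
    Ideal.span {p : MvPolynomial (Fin d) ℤ | ∃ r, a < r ∧ p = hsymm (Fin d) ℤ r} := by
  induction i with
  | zero =>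
    intro k h r hr
    obtain rfl : k = d := by omega
    apply Ideal.subset_span
    refine ⟨r, by omega, ?_⟩
    have e : (fun j : Fin k => (⟨0 + (j : ℕ), by have h1 := j.isLt; omega⟩ : Fin k)) = id := by
      funext j; simp
    rw [e, rename_id_apply]
  | succ i ih =>
    intro k h r hr
    obtain ⟨r, rfl⟩ : ∃ s, r = s + 1 := ⟨r - 1, by omega⟩
    have h1 := ih (k + 1) (by omega) (r + 1) (by omega)
    have h2 := ih (k + 1) (by omega) r (by omega)
    rw [hsymm_fin_succ, map_add, map_mul, rename_rename] at h1
    have h3 := (Ideal.add_mem_iff_left _ (Ideal.mul_mem_left _ _ h2)).1 h1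
    convert h3 using 3
    funext j
    simp [Fin.ext_iff]
    omega

/-- If `I ⊆ ℤ[y_1,…,y_d]` is the ideal generated by the complete
homogeneous symmetric polynomials `h_r(y_1,…,y_d)` for all `r > a`, then for every
`1 ≤ i ≤ d` (here `i : Fin d`, zero-indexed), the complete homogeneous symmetric
polynomial `h_{a+i}` in the tail variables `y_i, y_{i+1}, …, y_d` lies in `I`. -/
theorem hsymm_tail_mem_span (d a : ℕ) (hd : 1 ≤ d) (i : Fin d) :
    rename (fun j : Fin (d - (i : ℕ)) =>
        (⟨(i : ℕ) + (j : ℕ), by have h1 := j.isLt; have h2 := i.isLt; omega⟩ : Fin d))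
      (hsymm (Fin (d - (i : ℕ))) ℤ (a + ((i : ℕ) + 1))) ∈
    Ideal.span {p : MvPolynomial (Fin d) ℤ | ∃ r, a < r ∧ p = hsymm (Fin d) ℤ r} := by
  exact hsymm_tail_aux d a i (d - i) (by have := i.isLt; omega) _ (by omega)
end

section
/- For integers n ≥ k ≥ d ≥ 1, the set of monomials A_{n,k,d} descends to a ℚ-vector space basis of the quotient ring ℚ[x_1,…,x_n,y_1,…,y_d]/J_{n,k,d}^ℚ; in particular this quotient has ℚ-dimension (k!·d!/(k−d)!)·Stir(n,d). -/
open MvPolynomial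

/-- The elementary symmetric polynomial `e_r` in the x-variables `x_1, …, x_n`. -/
noncomputable def eX (n d r : ℕ) : MvPolynomial (Fin n ⊕ Fin d) ℚ :=
  rename Sum.inl (esymm (Fin n) ℚ r)

/-- The complete homogeneous symmetric polynomial `h_r` in the y-variables `y_1, …, y_d`. -/
noncomputable def hY (n d r : ℕ) : MvPolynomial (Fin n ⊕ Fin d) ℚ :=
  rename Sum.inr (hsymm (Fin d) ℚ r)

/-- The elementary symmetric polynomial `e_r` in the y-variables `y_1, …, y_d`. -/
noncomputable def eY (n d r : ℕ) : MvPolynomial (Fin n ⊕ Fin d) ℚ :=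
  rename Sum.inr (esymm (Fin d) ℚ r)

/-- `Σ_{a+b=r} (−1)^b e_a(x_1,…,x_n)·h_b(y_1,…,y_d)`. -/
noncomputable def genXY (n d r : ℕ) : MvPolynomial (Fin n ⊕ Fin d) ℚ :=
  ∑ j ∈ Finset.range (r + 1),
    (-1 : MvPolynomial (Fin n ⊕ Fin d) ℚ) ^ j * (eX n d (r - j) * hY n d j)

/-- `Σ_{j=0}^{d} (−1)^j x_i^{d−j} e_j(y_1,…,y_d)`. -/
noncomputable def genPow (n d : ℕ) (i : Fin n) : MvPolynomial (Fin n ⊕ Fin d) ℚ :=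
  ∑ j ∈ Finset.range (d + 1),
    (-1 : MvPolynomial (Fin n ⊕ Fin d) ℚ) ^ j * (X (Sum.inl i) ^ (d - j) * eY n d j)

/-- The generating set of the ideal `J_{n,k,d}^ℚ ⊆ ℚ[x_1,…,x_n,y_1,…,y_d]`. -/
def JgensQ (n k d : ℕ) : Set (MvPolynomial (Fin n ⊕ Fin d) ℚ) :=
  {p | ∃ r, k - d < r ∧ p = hY n d r} ∪
  {p | ∃ r, n - d < r ∧ p = genXY n d r} ∪
  {p | ∃ i : Fin n, p = genPow n d i}

/-- An `(n,d)`-staircase: a shuffle of the sequence `(0,1,…,d−1)` with `n−d` copies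
of `d−1`, i.e. the values `0, 1, …, d−1` appear in this order at some increasing set of
`d` positions and every other entry equals `d−1`. -/
def IsStaircase (n d : ℕ) (s : Fin n → ℕ) : Prop :=
  ∃ φ : Fin d → Fin n, StrictMono φ ∧ (∀ t, s (φ t) = t) ∧
    ∀ j : Fin n, (∀ t, j ≠ φ t) → s j = d - 1

/-- An `(n,d)`-substaircase sequence: componentwise at most some `(n,d)`-staircase. -/
def IsSubstaircase (n d : ℕ) (a : Fin n → ℕ) : Prop :=
  ∃ s, IsStaircase n d s ∧ ∀ j, a j ≤ s j

/-- The set of monomials `A_{n,k,d}`: products `x^a · y^b` with `a` an `(n,d)`-substaircase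
sequence and `b_i < k−d+i` for `1 ≤ i ≤ d`. -/
def Aset (n k d : ℕ) : Set (MvPolynomial (Fin n ⊕ Fin d) ℚ) :=
  {p | ∃ a : Fin n → ℕ, ∃ b : Fin d → ℕ, IsSubstaircase n d a ∧
    (∀ i : Fin d, b i < k - d + ((i : ℕ) + 1)) ∧
    p = (∏ j, X (Sum.inl j) ^ a j) * ∏ i, X (Sum.inr i) ^ b i}



/-- Greedy acceptance of words. -/
def okW (d : ℕ) : (n : ℕ) → ℕ → (Fin n → ℕ) → Prop
  | 0, r, _ => d ≤ r
  | n + 1, r, a => a 0 < d ∧ okW d n (if a 0 ≤ r then r + 1 else r) (Fin.tail a)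

section SpanX
variable {S P : Type*} [CommRing S] [CommRing P] [Algebra S P]

noncomputable def Es (Q : PowerSeries S) {n : ℕ} (x : Fin n → P) : PowerSeries P :=
  PowerSeries.map (algebraMap S P) Q * ∏ j, (1 + PowerSeries.C (x j) * PowerSeries.X)

lemma Es_succ (Q : PowerSeries S) {n : ℕ} (x : Fin (n + 1) → P) (m : ℕ) :
    PowerSeries.coeff (m + 1) (Es Q x) =
      PowerSeries.coeff (m + 1) (Es Q (Fin.tail x)) + x 0 * PowerSeries.coeff m (Es Q (Fin.tail x)) := by
  have : Es Q x = Es Q (Fin.tail x) + PowerSeries.C (x 0) * (Es Q (Fin.tail x) * PowerSeries.X) := by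
    simp only [Es, Fin.prod_univ_succ, Fin.tail]
    ring
  rw [this, map_add, PowerSeries.coeff_C_mul, PowerSeries.coeff_succ_mul_X]

def Tx (S : Type*) {P : Type*} [CommRing S] [CommRing P] [Algebra S P]
    {n : ℕ} (x : Fin n → P) : Subalgebra S P := Algebra.adjoin S (Set.range x)

lemma Tx_tail_le {n : ℕ} (x : Fin (n + 1) → P) : Tx S (Fin.tail x) ≤ Tx S x := by
  apply Algebra.adjoin_mono
  rintro _ ⟨j, rfl⟩
  exact ⟨j.succ, rfl⟩

lemma mem_Tx {n : ℕ} (x : Fin n → P) (j : Fin n) : x j ∈ Tx S x :=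
  Algebra.subset_adjoin ⟨j, rfl⟩

lemma Es_mem (Q : PowerSeries S) {n : ℕ} (x : Fin n → P) (m : ℕ) :
    PowerSeries.coeff m (Es Q x) ∈ Tx S x := by
  induction n generalizing m with
  | zero =>
    simp only [Es, Finset.univ_eq_empty, Finset.prod_empty, mul_one, PowerSeries.coeff_map]
    exact Subalgebra.algebraMap_mem _ _
  | succ n ih =>
    cases m with
    | zero =>
      simp only [Es, PowerSeries.coeff_zero_eq_constantCoeff, map_mul, map_prod, map_add,
        PowerSeries.constantCoeff_X, mul_zero, map_one, add_zero, Finset.prod_const_one, mul_one]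
      rw [← PowerSeries.coeff_zero_eq_constantCoeff_apply, PowerSeries.coeff_map]
      exact Subalgebra.algebraMap_mem _ _
    | succ m =>
      rw [Es_succ]
      exact add_mem (Tx_tail_le x (ih _ _)) (mul_mem (mem_Tx x 0) (Tx_tail_le x (ih _ _)))

noncomputable def Kdet (Q : PowerSeries S) {n : ℕ} (x : Fin n → P) (r : ℕ) (c : Fin (r + 1) → ℕ) : P :=
  (Matrix.of fun i j : Fin (r + 1) => PowerSeries.coeff (c j + i) (Es Q x)).det

def Kgen (Q : PowerSeries S) (g : Polynomial S) {n : ℕ} (x : Fin n → P) (r : ℕ) : Set P :=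
  {p | ∃ c : Fin (r + 1) → ℕ, (∀ j, n < c j) ∧ p = Kdet Q x r c} ∪
  {p | ∃ j, p = Polynomial.aeval (x j) g}

def Kx (Q : PowerSeries S) (g : Polynomial S) {n : ℕ} (x : Fin n → P) (r : ℕ) : Submodule S P :=
  Subalgebra.toSubmodule (Tx S x) * Submodule.span S (Kgen Q g x r)

lemma Kx_mul (Q : PowerSeries S) (g : Polynomial S) {n : ℕ} (x : Fin n → P) (r : ℕ)
    {t p : P} (ht : t ∈ Tx S x) (hp : p ∈ Kx Q g x r) : t * p ∈ Kx Q g x r := by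
  have h := Submodule.mul_mem_mul (M := Subalgebra.toSubmodule (Tx S x)) ht hp
  rwa [Kx, ← mul_assoc, (Subalgebra.isIdempotentElem_toSubmodule (Tx S x)).eq] at h

lemma Kgen_mem (Q : PowerSeries S) (g : Polynomial S) {n : ℕ} (x : Fin n → P) (r : ℕ)
    {p : P} (hp : p ∈ Kgen Q g x r) : p ∈ Kx Q g x r := by
  have h := Submodule.mul_mem_mul (M := Subalgebra.toSubmodule (Tx S x)) (one_mem (Tx S x))
    (Submodule.subset_span (R := S) hp)
  rwa [one_mul] at h

lemma Kx_le (Q : PowerSeries S) (g : Polynomial S) {n : ℕ} (x : Fin n → P) (r : ℕ)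
    (N : Submodule S P) (h : ∀ t ∈ Tx S x, ∀ p ∈ Kgen Q g x r, t * p ∈ N) : Kx Q g x r ≤ N := by
  rw [Kx, Submodule.mul_le]
  intro t ht p hp
  induction hp using Submodule.span_induction with
  | mem p hp => exact h t ht p hp
  | zero => simp
  | add a b _ _ ha hb => rw [mul_add]; exact add_mem ha hb
  | smul s a _ ha => rw [mul_smul_comm]; exact N.smul_mem s ha

/-- step (a) -/
lemma Kx_tail_le (Q : PowerSeries S) (g : Polynomial S) {n : ℕ} (x : Fin (n + 1) → P) (r : ℕ) :
    Kx Q g (Fin.tail x) (r + 1) ≤ Kx Q g x r := by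
  apply Kx_le
  intro t ht p hp
  refine Kx_mul Q g x r (Tx_tail_le x ht) ?_
  rcases hp with ⟨c, hc, rfl⟩ | ⟨j, rfl⟩
  · have key : Kdet Q (Fin.tail x) (r + 1) c =
        (Matrix.of fun i j : Fin (r + 2) => if i = 0 then PowerSeries.coeff (c j) (Es Q (Fin.tail x))
          else PowerSeries.coeff (c j + i) (Es Q x)).det := by
      unfold Kdet
      refine Matrix.det_eq_of_forall_row_eq_smul_add_pred (fun _ => - x 0) ?_ ?_
      · intro j; simp
      · intro i j
        simp only [Matrix.of_apply, Fin.val_succ, Fin.succ_ne_zero, if_false, Fin.val_castSucc]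
        rw [← add_assoc, Es_succ]
        ring
    rw [key, Matrix.det_succ_row_zero]
    refine sum_mem fun j _ => ?_
    refine Kx_mul Q g x r (t := _) ?_ (Kgen_mem Q g x r (Or.inl ⟨fun i => c (j.succAbove i) + 1, ?_, ?_⟩))
    · simp only [Matrix.of_apply, if_true]
      exact mul_mem (pow_mem (neg_mem (one_mem _)) _) (Tx_tail_le x (Es_mem _ _ _))
    · intro i; have := hc (j.succAbove i); dsimp only; omega
    · unfold Kdet
      congr 1
      ext a b
      simp only [Matrix.submatrix_apply, Matrix.of_apply, Fin.succ_ne_zero, if_false, Fin.val_succ]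
      congr 2
      ring
  · exact Kgen_mem Q g x r (Or.inr ⟨j.succ, rfl⟩)

/-- the span of `x₀^c t`, `c < m`. -/
def Lo {n : ℕ} (x : Fin (n + 1) → P) (m : ℕ) : Submodule S P :=
  Submodule.span S {p | ∃ c < m, ∃ t ∈ Tx S (Fin.tail x), p = x 0 ^ c * t}

lemma Lo_mul {n : ℕ} (x : Fin (n + 1) → P) (m : ℕ) (e : ℕ) {t p : P} (ht : t ∈ Tx S (Fin.tail x))
    (hp : p ∈ Lo (S := S) x m) : x 0 ^ e * t * p ∈ Lo (S := S) x (m + e) := by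
  induction hp using Submodule.span_induction with
  | mem p hp =>
    obtain ⟨c, hc, s, hs, rfl⟩ := hp
    exact Submodule.subset_span ⟨c + e, by omega, t * s, mul_mem ht hs, by ring⟩
  | zero => simp
  | add a b _ _ ha hb => rw [mul_add]; exact add_mem ha hb
  | smul s a _ ha => rw [mul_smul_comm]; exact Submodule.smul_mem _ s ha

lemma Tx_Lo {n : ℕ} (x : Fin (n + 1) → P) : ∀ p ∈ Tx S x, ∃ m, p ∈ Lo (S := S) x m := by
  intro p hp
  induction hp using Algebra.adjoin_induction with
  | mem p hp =>
    obtain ⟨j, rfl⟩ := hp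
    induction j using Fin.cases with
    | zero => exact ⟨2, Submodule.subset_span ⟨1, by omega, 1, one_mem _, by simp⟩⟩
    | succ j => exact ⟨1, Submodule.subset_span ⟨0, by omega, _, mem_Tx (Fin.tail x) j, by simp [Fin.tail]⟩⟩
  | algebraMap s => exact ⟨1, Submodule.subset_span ⟨0, by omega, _, Subalgebra.algebraMap_mem _ s, by simp⟩⟩
  | add a b _ _ ha hb =>
    obtain ⟨m, hm⟩ := ha
    obtain ⟨m', hm'⟩ := hb
    have mono : ∀ m m' : ℕ, m ≤ m' → Lo (S := S) x m ≤ Lo (S := S) x m' := by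
      intro m m' h
      apply Submodule.span_mono
      rintro _ ⟨c, hc, t, ht, rfl⟩
      exact ⟨c, by omega, t, ht, rfl⟩
    exact ⟨max m m', add_mem (mono _ _ (le_max_left _ _) hm) (mono _ _ (le_max_right _ _) hm')⟩
  | mul a b haa _ ha hb =>
    clear haa
    obtain ⟨m, hm⟩ := ha
    obtain ⟨m', hm'⟩ := hb
    refine ⟨m' + m, ?_⟩
    have mono : ∀ m m' : ℕ, m ≤ m' → Lo (S := S) x m ≤ Lo (S := S) x m' := by
      intro m m' h
      apply Submodule.span_mono
      rintro _ ⟨c, hc, t, ht, rfl⟩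
      exact ⟨c, by omega, t, ht, rfl⟩
    induction hm using Submodule.span_induction with
    | mem p hp =>
      obtain ⟨c, hc, s, hs, rfl⟩ := hp
      exact mono _ _ (by omega) (Lo_mul x m' c hs hm')
    | zero => simp
    | add a b _ _ ha hb => rw [add_mul]; exact add_mem ha hb
    | smul s a _ ha => rw [smul_mul_assoc]; exact Submodule.smul_mem _ s ha

lemma det_lead {R : Type*} [CommRing R] [Algebra R P] (m : ℕ) (M N : Matrix (Fin m) (Fin m) R) (z : P) :
    ∃ u : ℕ → R, (z • M.map (algebraMap R P) + N.map (algebraMap R P)).det =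
      z ^ m * algebraMap R P M.det + ∑ c ∈ Finset.range m, z ^ c * algebraMap R P (u c) := by
  let p : Polynomial R := ((Polynomial.X : Polynomial R) • M.map Polynomial.C + N.map Polynomial.C).det
  refine ⟨p.coeff, ?_⟩
  have h1 : (z • M.map (algebraMap R P) + N.map (algebraMap R P)).det = Polynomial.aeval z p := by
    simp only [p]
    rw [AlgHom.map_det]
    congr 1
    ext i j
    simp only [Matrix.add_apply, Matrix.smul_apply, Matrix.map_apply, AlgHom.mapMatrix_apply]
    simp
    exact mul_comm _ _
  have h2 : p.natDegree < m + 1 := by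
    have := Polynomial.natDegree_det_X_add_C_le M N
    simpa using Nat.lt_succ_of_le this
  rw [h1, Polynomial.aeval_eq_sum_range' h2, Finset.sum_range_succ, add_comm]
  congr 1
  · have := Polynomial.coeff_det_X_add_C_card M N
    simp only [Fintype.card_fin] at this
    rw [Algebra.smul_def, this, mul_comm]
  · exact Finset.sum_congr rfl fun c _ => by rw [Algebra.smul_def, mul_comm]

/-- step (b) -/
lemma Kx_lead (Q : PowerSeries S) (g : Polynomial S) {n : ℕ} (x : Fin (n + 1) → P) (r : ℕ) {p : P}
    (hp : p ∈ Kx Q g (Fin.tail x) r) : x 0 ^ (r + 1) * p ∈ Kx Q g x r ⊔ Lo (S := S) x (r + 1) := by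
  suffices h : Kx Q g (Fin.tail x) r ≤
      (Kx Q g x r ⊔ Lo (S := S) x (r + 1)).comap (LinearMap.mulLeft S (x 0 ^ (r + 1))) from h hp
  apply Kx_le
  intro t ht p hp
  rw [Submodule.mem_comap, LinearMap.mulLeft_apply]
  rcases hp with ⟨c, hc, rfl⟩ | ⟨j, rfl⟩
  · let M : Matrix (Fin (r+1)) (Fin (r+1)) (Tx S (Fin.tail x)) :=
      Matrix.of fun i j => ⟨PowerSeries.coeff (c j + i) (Es Q (Fin.tail x)), Es_mem _ _ _⟩
    let N : Matrix (Fin (r+1)) (Fin (r+1)) (Tx S (Fin.tail x)) :=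
      Matrix.of fun i j => ⟨PowerSeries.coeff (c j + i + 1) (Es Q (Fin.tail x)), Es_mem _ _ _⟩
    obtain ⟨u, hu⟩ := det_lead (r + 1) M N (x 0)
    have h1 : (x 0 • M.map (algebraMap _ P) + N.map (algebraMap _ P)).det = Kdet Q x r (fun j => c j + 1) := by
      unfold Kdet
      congr 1
      ext i j
      have : c j + 1 + (i : ℕ) = c j + i + 1 := by ring
      simp only [Matrix.of_apply, this, Es_succ, M, N, Matrix.add_apply, Matrix.smul_apply, Matrix.map_apply, smul_eq_mul]
      rw [add_comm]
      rfl
    have h2 : algebraMap _ P M.det = Kdet Q (Fin.tail x) r c := by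
      unfold Kdet
      rw [RingHom.map_det]
      congr 1
    rw [h1, h2] at hu
    have h3 : x 0 ^ (r + 1) * (t * Kdet Q (Fin.tail x) r c) = t * Kdet Q x r (fun j => c j + 1)
        - ∑ i ∈ Finset.range (r + 1), x 0 ^ i * (t * algebraMap _ P (u i)) := by
      rw [hu, mul_add, Finset.mul_sum]
      have : ∀ i, t * (x 0 ^ i * algebraMap _ P (u i)) = x 0 ^ i * (t * algebraMap _ P (u i)) := fun i => by ring
      simp only [this]
      ring
    rw [h3]
    refine sub_mem (Submodule.mem_sup_left ?_) (Submodule.mem_sup_right ?_)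
    · exact Kx_mul Q g x r (Tx_tail_le x ht) (Kgen_mem Q g x r (Or.inl ⟨_, fun j => by have := hc j; omega, rfl⟩))
    · exact sum_mem fun i hi => Submodule.subset_span ⟨i, Finset.mem_range.1 hi, _, mul_mem ht (u i).2, rfl⟩
  · rw [← mul_assoc]
    exact Submodule.mem_sup_left (Kx_mul Q g x r (mul_mem (pow_mem (mem_Tx x 0) _) (Tx_tail_le x ht))
      (Kgen_mem Q g x r (Or.inr ⟨j.succ, rfl⟩)))

def Wx (S : Type*) {P : Type*} [CommRing S] [CommRing P] [Algebra S P] (d : ℕ) {n : ℕ} (x : Fin n → P) (r : ℕ) :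
    Submodule S P :=
  Submodule.span S {p | ∃ a : Fin n → ℕ, okW d n r a ∧ p = ∏ j, x j ^ a j}

lemma Wx_cons (d : ℕ) {n : ℕ} (x : Fin (n + 1) → P) (r c : ℕ) (hc : c < d) {w : P}
    (hw : w ∈ Wx S d (Fin.tail x) (if c ≤ r then r + 1 else r)) : x 0 ^ c * w ∈ Wx S d x r := by
  induction hw using Submodule.span_induction with
  | mem p hp =>
    obtain ⟨a, ha, rfl⟩ := hp
    refine Submodule.subset_span ⟨Fin.cons c a, ⟨by simpa using hc, by simpa using ha⟩, ?_⟩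
    simp [Fin.prod_univ_succ, Fin.tail]
  | zero => simp
  | add a b _ _ ha hb => rw [mul_add]; exact add_mem ha hb
  | smul s a _ ha => rw [mul_smul_comm]; exact Submodule.smul_mem _ s ha

theorem Tx_le (Q : PowerSeries S) (g : Polynomial S) (d : ℕ) (hg : g.Monic) (hgd : g.natDegree = d)
    (hQ0 : ∀ m < d, PowerSeries.coeff m Q = 0) (hQ1 : PowerSeries.coeff d Q = 1)
    {n : ℕ} (x : Fin n → P) (r : ℕ) :
    Subalgebra.toSubmodule (Tx S x) ≤ Wx S d x r ⊔ Kx Q g x r := by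
  induction n generalizing r with
  | zero =>
    by_cases hr : d ≤ r
    · refine le_trans ?_ le_sup_left
      have : (Tx S x) = ⊥ := by
        simp [Tx, Set.range_eq_empty]
      rw [this, Algebra.toSubmodule_bot, Submodule.one_eq_span]
      refine Submodule.span_mono ?_
      rintro _ rfl
      exact ⟨fun _ => 0, hr, by simp⟩
    · push Not at hr
      refine le_trans ?_ le_sup_right
      intro t ht
      have h1 : (1 : P) ∈ Kx Q g x r := by
        refine Kgen_mem Q g x r (Or.inl ⟨fun j => d - j, fun j => by have := j.2; dsimp only; omega, ?_⟩)
        unfold Kdet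
        rw [Matrix.det_of_isLowerTriangular]
        · symm
          apply Finset.prod_eq_one
          intro i _
          have : d - (i : ℕ) + i = d := by have := i.2; omega
          simp [Es, this, hQ1]
        · intro i j hij
          have hij : (i : ℕ) < j := hij
          have : d - (j : ℕ) + i < d := by have := j.2; omega
          simp [Es, hQ0 _ this]
      simpa using Kx_mul Q g x r ht h1
  | succ n ih =>
    set U := Wx S d x r ⊔ Kx Q g x r with hU
    have hK : Kx Q g x r ≤ U := le_sup_right
    have main : ∀ c : ℕ, ∀ t ∈ Tx S (Fin.tail x), x 0 ^ c * t ∈ U := by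
      intro c
      induction c using Nat.strong_induction_on with
      | _ c ihc =>
      have hLo : Lo (S := S) x c ≤ U := by
        refine Submodule.span_le.2 ?_
        rintro _ ⟨e, he, t, ht, rfl⟩
        exact ihc e he t ht
      intro t ht
      by_cases hcd : c < d
      · by_cases hcr : c ≤ r
        · obtain ⟨w, hw, κ, hκ, rfl⟩ := Submodule.mem_sup.1 (ih (Fin.tail x) (r + 1) ht)
          rw [mul_add]
          refine add_mem (Submodule.mem_sup_left (Wx_cons d x r c hcd (by simpa [hcr] using hw))) (hK ?_)
          exact Kx_mul Q g x r (pow_mem (mem_Tx x 0) _) (Kx_tail_le Q g x r hκ)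
        · obtain ⟨w, hw, κ, hκ, rfl⟩ := Submodule.mem_sup.1 (ih (Fin.tail x) r ht)
          rw [mul_add]
          refine add_mem (Submodule.mem_sup_left (Wx_cons d x r c hcd (by simpa [hcr] using hw))) ?_
          obtain ⟨u, hu, v, hv, huv⟩ := Submodule.mem_sup.1 (Kx_lead Q g x r hκ)
          have hc : c = (c - (r + 1)) + (r + 1) := by omega
          rw [hc, pow_add, mul_assoc, ← huv, mul_add]
          refine add_mem (hK (Kx_mul Q g x r (pow_mem (mem_Tx x 0) _) hu)) (hLo ?_)
          have := Lo_mul x (r + 1) (c - (r + 1)) (one_mem _) hv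
          rwa [mul_one, show r + 1 + (c - (r + 1)) = c by omega] at this
      · push Not at hcd
        have h0 := hg.as_sum
        rw [hgd] at h0
        have h1 : Polynomial.aeval (x 0) g = x 0 ^ d + ∑ i ∈ Finset.range d, algebraMap S P (g.coeff i) * x 0 ^ i := by
          conv_lhs => rw [h0]
          simp
        have h2 : x 0 ^ c * t = (x 0 ^ (c - d) * t) * Polynomial.aeval (x 0) g
            - ∑ i ∈ Finset.range d, x 0 ^ (c - d + i) * (t * algebraMap S P (g.coeff i)) := by
          rw [h1, mul_add, Finset.mul_sum]
          have : ∀ i, x 0 ^ (c - d) * t * (algebraMap S P (g.coeff i) * x 0 ^ i) =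
            x 0 ^ (c - d + i) * (t * algebraMap S P (g.coeff i)) := fun i => by ring
          simp only [this, add_sub_cancel_right]
          rw [mul_right_comm, ← pow_add, Nat.sub_add_cancel hcd]
        rw [h2]
        refine sub_mem (hK ?_) (sum_mem fun i hi => ?_)
        · exact Kx_mul Q g x r (mul_mem (pow_mem (mem_Tx x 0) _) (Tx_tail_le x ht))
            (Kgen_mem Q g x r (Or.inr ⟨0, rfl⟩))
        · have := Finset.mem_range.1 hi
          exact ihc _ (by omega) _ (mul_mem ht (Subalgebra.algebraMap_mem _ _))
    intro p hp
    obtain ⟨m, hm⟩ := Tx_Lo x p hp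
    refine (Submodule.span_le.2 ?_ : Lo (S := S) x m ≤ U) hm
    rintro _ ⟨c, _, t, ht, rfl⟩
    exact main c t ht

end SpanX


section SpanY
variable {B A : Type*} [CommRing B] [CommRing A] [Algebra B A]

lemma coeff_H_mem (F : PowerSeries B) {d : ℕ} (y : Fin d → A) (H : PowerSeries A)
    (hH : H * ∏ j, (1 - PowerSeries.C (y j) * PowerSeries.X) = PowerSeries.map (algebraMap B A) F) (m : ℕ) :
    PowerSeries.coeff m H ∈ Tx B y := by
  induction d generalizing H m with
  | zero =>
    simp only [Finset.univ_eq_empty, Finset.prod_empty, mul_one] at hH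
    rw [hH, PowerSeries.coeff_map]
    exact Subalgebra.algebraMap_mem _ _
  | succ d ih =>
    have h' := ih (Fin.tail y) (H * (1 - PowerSeries.C (y 0) * PowerSeries.X))
      (by rw [← hH, Fin.prod_univ_succ, mul_assoc]; rfl)
    have e : H = H * (1 - PowerSeries.C (y 0) * PowerSeries.X) + PowerSeries.C (y 0) * (H * PowerSeries.X) := by ring
    induction m with
    | zero =>
      have : PowerSeries.coeff 0 H = PowerSeries.coeff 0 (H * (1 - PowerSeries.C (y 0) * PowerSeries.X)) := by simp
      rw [this]
      exact Tx_tail_le y (h' 0)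
    | succ m ihm =>
      rw [e, map_add, PowerSeries.coeff_C_mul, PowerSeries.coeff_succ_mul_X]
      exact add_mem (Tx_tail_le y (h' _)) (mul_mem (mem_Tx y 0) ihm)

theorem Ty_le (F : PowerSeries B) (hF : PowerSeries.coeff 0 F = 1) (k : ℕ) {d : ℕ} (hdk : d ≤ k)
    (y : Fin d → A) (H : PowerSeries A)
    (hH : H * ∏ j, (1 - PowerSeries.C (y j) * PowerSeries.X) = PowerSeries.map (algebraMap B A) F)
    (hH0 : ∀ r, k < r + d → PowerSeries.coeff r H = 0) :
    Subalgebra.toSubmodule (Tx B y) ≤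
      Submodule.span B {p | ∃ b : Fin d → ℕ, (∀ i, b i + d < k + i + 1) ∧ p = ∏ i, y i ^ b i} := by
  induction d generalizing H with
  | zero =>
    have : (Tx B y) = ⊥ := by simp [Tx, Set.range_eq_empty]
    rw [this, Algebra.toSubmodule_bot, Submodule.one_eq_span]
    refine Submodule.span_mono ?_
    rintro _ rfl
    exact ⟨fun _ => 0, fun i => i.elim0, by simp⟩
  | succ d ih =>
    set H' := H * (1 - PowerSeries.C (y 0) * PowerSeries.X) with hH'def
    have e : H = H' + PowerSeries.C (y 0) * (H * PowerSeries.X) := by rw [hH'def]; ring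
    have hH' : H' * ∏ j, (1 - PowerSeries.C (Fin.tail y j) * PowerSeries.X) = PowerSeries.map (algebraMap B A) F := by
      rw [← hH, Fin.prod_univ_succ, hH'def, mul_assoc]; rfl
    have hsucc : ∀ m, PowerSeries.coeff (m + 1) H = PowerSeries.coeff (m + 1) H' + y 0 * PowerSeries.coeff m H := by
      intro m
      conv_lhs => rw [e]
      rw [map_add, PowerSeries.coeff_C_mul, PowerSeries.coeff_succ_mul_X]
    have ih' := ih (by omega) (Fin.tail y) H' hH' (by
      intro r hr
      cases r with
      | zero => omega
      | succ r =>
        have h1 := hsucc r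
        rw [hH0 (r + 1) (by omega), hH0 r (by omega)] at h1
        simpa using h1.symm)
    have hc0 : PowerSeries.coeff 0 H = 1 := by
      have := congrArg (PowerSeries.coeff 0) hH
      simp only [PowerSeries.coeff_map, hF, map_one] at this
      simpa [map_prod] using this
    have hlead : ∀ m, PowerSeries.coeff m H - y 0 ^ m ∈ Lo (S := B) y m := by
      intro m
      induction m with
      | zero => simp [hc0]
      | succ m ihm =>
        have : PowerSeries.coeff (m + 1) H - y 0 ^ (m + 1) =
          y 0 ^ 0 * PowerSeries.coeff (m + 1) H' + y 0 ^ 1 * 1 * (PowerSeries.coeff m H - y 0 ^ m) := by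
          rw [hsucc]; ring
        rw [this]
        refine add_mem (Submodule.subset_span ⟨0, by omega, _, coeff_H_mem F _ H' hH' _, rfl⟩) ?_
        exact Lo_mul y m 1 (one_mem _) ihm
    set U := Submodule.span B {p | ∃ b : Fin (d+1) → ℕ, (∀ i, b i + (d + 1) < k + i + 1) ∧ p = ∏ i, y i ^ b i} with hU
    have main : ∀ c : ℕ, ∀ t ∈ Tx B (Fin.tail y), y 0 ^ c * t ∈ U := by
      intro c
      induction c using Nat.strong_induction_on with
      | _ c ihc =>
      have hLo : Lo (S := B) y c ≤ U := by
        refine Submodule.span_le.2 ?_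
        rintro _ ⟨e, he, t, ht, rfl⟩
        exact ihc e he t ht
      intro t ht
      by_cases hcd : c < k - d
      · have ht' := ih' ht
        induction ht' using Submodule.span_induction with
        | mem p hp =>
          obtain ⟨b, hb, rfl⟩ := hp
          refine Submodule.subset_span ⟨Fin.cons c b, ?_, ?_⟩
          · intro i
            induction i using Fin.cases with
            | zero => simp; omega
            | succ i => have := hb i; simp; omega
          · simp [Fin.prod_univ_succ, Fin.tail]
        | zero => simp
        | add a b ha' hb' ha hb =>
          rw [mul_add]
          have back : ∀ a, a ∈ Submodule.span B {p | ∃ b : Fin d → ℕ, (∀ i, b i + d < k + i + 1) ∧ p = ∏ i, Fin.tail y i ^ b i} → a ∈ Tx B (Fin.tail y) := by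
            intro a ha
            refine (Submodule.span_le.2 ?_ : _ ≤ Subalgebra.toSubmodule (Tx B (Fin.tail y))) ha
            rintro _ ⟨b, _, rfl⟩
            exact (prod_mem fun i _ => pow_mem (mem_Tx _ i) _ : _ ∈ Tx B (Fin.tail y))
          exact add_mem (ha (back _ ha')) (hb (back _ hb'))
        | smul s a ha' ha =>
          rw [mul_smul_comm]
          refine Submodule.smul_mem _ s (ha ?_)
          refine (Submodule.span_le.2 ?_ : _ ≤ Subalgebra.toSubmodule (Tx B (Fin.tail y))) ha'
          rintro _ ⟨b, _, rfl⟩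
          exact (prod_mem fun i _ => pow_mem (mem_Tx _ i) _ : _ ∈ Tx B (Fin.tail y))
      · push Not at hcd
        have h1 := hlead (k - d)
        rw [hH0 (k - d) (by omega), zero_sub] at h1
        have h2 := Lo_mul y (k - d) (c - (k - d)) ht h1
        rw [Nat.add_sub_cancel' hcd] at h2
        have h3 := hLo h2
        have h4 : y 0 ^ c * t = - (y 0 ^ (c - (k - d)) * t * -y 0 ^ (k - d)) := by
          rw [mul_neg, neg_neg, mul_right_comm, ← pow_add, Nat.sub_add_cancel hcd]
        rw [h4]
        exact neg_mem h3
    intro p hp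
    obtain ⟨m, hm⟩ := Tx_Lo y p hp
    refine (Submodule.span_le.2 ?_ : Lo (S := B) y m ≤ U) hm
    rintro _ ⟨c, _, t, ht, rfl⟩
    exact main c t ht

end SpanY

section Gen
variable {A : Type*} [CommRing A]

def hv {d : ℕ} (y : Fin d → A) (m : ℕ) : A := ∑ s : Sym (Fin d) m, (s.1.map y).prod

def ev {n : ℕ} (x : Fin n → A) (m : ℕ) : A := ∑ t ∈ Finset.powersetCard m Finset.univ, ∏ i ∈ t, x i

lemma geo (a : A) : PowerSeries.mk (fun m => a ^ m) * (1 - PowerSeries.C a * PowerSeries.X) = 1 := by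
  have : PowerSeries.mk (fun m => a ^ m) * (1 - PowerSeries.C a * PowerSeries.X) =
    PowerSeries.mk (fun m => a ^ m) - PowerSeries.C a * (PowerSeries.mk (fun m => a ^ m) * PowerSeries.X) := by ring
  rw [this]
  ext m
  cases m with
  | zero => simp
  | succ m =>
    rw [map_sub, PowerSeries.coeff_C_mul, PowerSeries.coeff_succ_mul_X]
    simp [PowerSeries.coeff_one, pow_succ, mul_comm]

lemma mk_hv {d : ℕ} (y : Fin d → A) :
    PowerSeries.mk (hv y) = ∏ j, PowerSeries.mk (fun m => y j ^ m) := by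
  ext m
  rw [PowerSeries.coeff_mk, PowerSeries.coeff_prod, hv]
  refine Finset.sum_bij' (fun s _ => Multiset.toFinsupp s.1)
    (fun l hl => ⟨Finsupp.toMultiset l, ?_⟩) ?_ ?_ ?_ ?_ ?_
  · rw [Finsupp.card_toMultiset]
    have := (Finset.mem_finsuppAntidiag.1 hl).1
    rw [← this, Finsupp.sum_fintype _ _ (fun _ => rfl)]
    rfl
  · intro s _
    rw [Finset.mem_finsuppAntidiag]
    refine ⟨?_, Finset.subset_univ _⟩
    refine Eq.trans ?_ s.2
    have h := Multiset.sum_count_eq_card (s := Finset.univ) (m := s.1) (by simp)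
    exact h
  · intro l hl; exact Finset.mem_univ _
  · intro s _
    apply Subtype.ext
    simp
  · intro l _
    simp
  · intro s _
    simp only [PowerSeries.coeff_mk, Multiset.toFinsupp_apply]
    exact Finset.prod_multiset_map_count s.1 y |>.trans (Finset.prod_subset (Finset.subset_univ _) (by
      intro i _ hi
      simp at hi
      simp [hi]))

lemma hv_mul {d : ℕ} (y : Fin d → A) :
    PowerSeries.mk (hv y) * ∏ j, (1 - PowerSeries.C (y j) * PowerSeries.X) = 1 := by
  rw [mk_hv, ← Finset.prod_mul_distrib]
  exact Finset.prod_eq_one fun j _ => geo _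

lemma hv_mul_neg {d : ℕ} (y : Fin d → A) :
    PowerSeries.mk (fun m => (-1) ^ m * hv y m) * ∏ j, (1 + PowerSeries.C (y j) * PowerSeries.X) = 1 := by
  have h := congrArg (PowerSeries.rescale (-1 : A)) (hv_mul y)
  rw [map_mul, map_prod, map_one, PowerSeries.rescale_mk] at h
  refine Eq.trans ?_ h
  congr 1
  refine Finset.prod_congr rfl fun j _ => ?_
  rw [map_sub, map_mul, map_one, PowerSeries.rescale_X]
  have : PowerSeries.rescale (-1 : A) (PowerSeries.C (y j)) = PowerSeries.C (y j) := by
    ext m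
    rw [PowerSeries.coeff_rescale, PowerSeries.coeff_C]
    split_ifs with hm
    · simp [hm]
    · simp
  rw [this]
  simp

lemma mk_ev {n : ℕ} (x : Fin n → A) :
    PowerSeries.mk (ev x) = ∏ j, (1 + PowerSeries.C (x j) * PowerSeries.X) := by
  rw [Finset.prod_one_add]
  ext m
  rw [PowerSeries.coeff_mk, map_sum, ev]
  simp only [Finset.prod_mul_distrib, Finset.prod_const, ← map_prod, PowerSeries.coeff_C_mul, PowerSeries.coeff_X_pow]
  simp only [mul_ite, mul_one, mul_zero]
  rw [← Finset.sum_filter]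
  refine Finset.sum_congr ?_ fun _ _ => rfl
  ext t
  simp [Finset.mem_powersetCard, eq_comm]

end Gen


section Indep

/-- a polynomial with few possible coefficients vanishing on a large set -/
lemma vand {K : Type*} [CommRing K] [IsDomain K] {m : ℕ} (g : Fin m → K) (N : ℕ) (hg : ∀ c : Fin m, N ≤ c → g c = 0) (s : Finset K)
    (hs : N ≤ s.card) (h : ∀ z ∈ s, ∑ c, g c * z ^ (c : ℕ) = 0) : ∀ c, g c = 0 := by
  let p : Polynomial K := ∑ c : Fin m, Polynomial.monomial c (g c)
  have hcoeff : ∀ c : Fin m, p.coeff c = g c := by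
    intro c
    simp only [p, Polynomial.finsetSum_coeff, Polynomial.coeff_monomial]
    rw [Finset.sum_eq_single c]
    · simp
    · intro b _ hb
      rw [if_neg]
      intro h
      exact hb (Fin.ext h)
    · simp
  have hp : p = 0 := by
    by_contra hp0
    have hdeg : p.natDegree < N := by
      rw [Polynomial.natDegree_lt_iff_degree_lt hp0, Polynomial.degree_lt_iff_coeff_zero]
      intro e he
      simp only [p, Polynomial.finsetSum_coeff, Polynomial.coeff_monomial]
      refine Finset.sum_eq_zero fun c _ => ?_
      split_ifs with hce
      · exact hg c (by omega)
      · rfl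
    refine hp0 (Polynomial.eq_zero_of_natDegree_lt_card_of_eval_eq_zero' p s ?_ (by omega))
    intro z hz
    have := h z hz
    simpa [p, Polynomial.eval_finsetSum] using this
  intro c
  rw [← hcoeff, hp, Polynomial.coeff_zero]

lemma sum_cons {K : Type*} [AddCommMonoid K] {n m : ℕ} (F : (Fin (n + 1) → Fin m) → K) :
    ∑ a, F a = ∑ c : Fin m, ∑ a : Fin n → Fin m, F (Fin.cons c a) := by
  rw [← Fintype.sum_prod_type' (f := fun c a => F (Fin.cons c a))]
  exact (Fintype.sum_equiv (Fin.consEquiv (fun _ => Fin m)) _ _ (fun p => rfl)).symm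

lemma image_cons {n d : ℕ} (v : Fin d) (f : Fin n → Fin d) :
    Finset.univ.image (Fin.cons v f : Fin (n + 1) → Fin d) = insert v (Finset.univ.image f) := by
  ext z
  simp [Fin.exists_fin_succ, eq_comm]

theorem indepX {K : Type*} [CommRing K] [IsDomain K] {d : ℕ} (y : Fin d → K) (hy : Function.Injective y) {n : ℕ} (r : ℕ)
    (c : (Fin n → Fin d) → K) (hc : ∀ a, ¬ okW d n r (fun j => (a j : ℕ)) → c a = 0)
    (h : ∀ f : Fin n → Fin d, d ≤ (Finset.univ.image f).card + r →
      ∑ a, c a * ∏ j, y (f j) ^ (a j : ℕ) = 0) : ∀ a, c a = 0 := by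
  classical
  induction n generalizing r with
  | zero =>
    intro a
    by_cases hr : d ≤ r
    · have := h finZeroElim (by omega)
      rw [Fintype.sum_unique] at this
      rw [Subsingleton.elim a default]
      simpa using this
    · exact hc a hr
  | succ n ih =>
    have hsplit : ∀ (v : Fin d) (f : Fin n → Fin d),
        ∑ a, c a * ∏ j, y ((Fin.cons v f : Fin (n + 1) → Fin d) j) ^ (a j : ℕ) =
        ∑ e : Fin d, (∑ a : Fin n → Fin d, c (Fin.cons e a) * ∏ j, y (f j) ^ (a j : ℕ)) * y v ^ (e : ℕ) := by
      intro v f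
      rw [sum_cons]
      refine Finset.sum_congr rfl fun e _ => ?_
      rw [Finset.sum_mul]
      refine Finset.sum_congr rfl fun a _ => ?_
      rw [Fin.prod_univ_succ]
      simp only [Fin.cons_zero, Fin.cons_succ]
      ring
    have hok : ∀ (e : Fin d) (a : Fin n → Fin d), ¬ okW d n (if (e : ℕ) ≤ r then r + 1 else r) (fun j => (a j : ℕ)) →
        c (Fin.cons e a) = 0 := by
      intro e a hn
      apply hc
      rintro ⟨_, h2⟩
      apply hn
      exact h2
    -- full fibres
    have hfull : ∀ f : Fin n → Fin d, d ≤ (Finset.univ.image f).card + r → ∀ e : Fin d,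
        ∑ a : Fin n → Fin d, c (Fin.cons e a) * ∏ j, y (f j) ^ (a j : ℕ) = 0 := by
      intro f hf
      refine vand _ d (fun c hc => absurd c.2 (by omega)) (Finset.univ.image y) ?_ ?_
      · rw [Finset.card_image_of_injective _ hy]; simp
      · intro z hz
        obtain ⟨v, _, rfl⟩ := Finset.mem_image.1 hz
        rw [← hsplit]
        apply h
        rw [image_cons]
        have := Finset.card_le_card (Finset.subset_insert v (Finset.univ.image f))
        omega
    have hbig : ∀ e : Fin d, r < e → ∀ a, c (Fin.cons e a) = 0 := by
      intro e he
      refine ih r _ ?_ (fun f hf => hfull f hf e)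
      intro a ha
      exact hok e a (by rwa [if_neg (by omega)])
    have hsmall : ∀ e : Fin d, (e : ℕ) ≤ r → ∀ a, c (Fin.cons e a) = 0 := by
      intro e he
      refine ih (r + 1) _ ?_ ?_
      · intro a ha
        exact hok e a (by rwa [if_pos he])
      · intro f hf
        by_cases hf' : d ≤ (Finset.univ.image f).card + r
        · exact hfull f hf' e
        · refine vand (fun e : Fin d => ∑ a : Fin n → Fin d, c (Fin.cons e a) * ∏ j, y (f j) ^ (a j : ℕ))
            (r + 1) ?_ ((Finset.univ.image f)ᶜ.image y) ?_ ?_ e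
          · intro e' he'
            exact Finset.sum_eq_zero fun a _ => by rw [hbig e' (by omega), zero_mul]
          · rw [Finset.card_image_of_injective _ hy, Finset.card_compl, Fintype.card_fin]
            omega
          · intro z hz
            obtain ⟨v, hv, rfl⟩ := Finset.mem_image.1 hz
            rw [← hsplit]
            apply h
            rw [image_cons, Finset.card_insert_of_notMem (Finset.mem_compl.1 hv)]
            omega
    intro a
    rw [← Fin.cons_self_tail a]
    by_cases he : (a 0 : ℕ) ≤ r
    · exact hsmall _ he _
    · exact hbig _ (by omega) _

theorem indepY {K : Type*} [CommRing K] [IsDomain K] {k : ℕ} (α : Fin k → K) (hα : Function.Injective α) {d : ℕ} (hd : d ≤ k)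
    (c : (Fin d → Fin k) → K) (hc : ∀ b : Fin d → Fin k, ¬ (∀ i, (b i : ℕ) + d < k + i + 1) → c b = 0)
    (h : ∀ g : Fin d → Fin k, Function.Injective g → ∑ b, c b * ∏ i, α (g i) ^ (b i : ℕ) = 0) :
    ∀ b, c b = 0 := by
  classical
  induction d with
  | zero =>
    intro b
    have := h finZeroElim (fun i => i.elim0)
    rw [Fintype.sum_unique] at this
    rw [Subsingleton.elim b default]
    simpa using this
  | succ d ih =>
    have key : ∀ e : Fin k, ∀ b, c (Fin.cons e b) = 0 := by
      intro e
      refine ih (by omega) _ ?_ ?_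
      · intro b hb
        apply hc
        intro h'
        apply hb
        intro i
        have := h' i.succ
        simp at this
        omega
      · intro g hg
        refine vand (fun e : Fin k => ∑ b : Fin d → Fin k, c (Fin.cons e b) * ∏ j, α (g j) ^ (b j : ℕ))
            (k - d) ?_ ((Finset.univ.image g)ᶜ.image α) ?_ ?_ e
        · intro e' he'
          refine Finset.sum_eq_zero fun b _ => ?_
          rw [hc, zero_mul]
          intro h'
          have := h' 0
          simp at this
          omega
        · rw [Finset.card_image_of_injective _ hα, Finset.card_compl, Fintype.card_fin,
            Finset.card_image_of_injective _ hg]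
          simp
        · intro z hz
          obtain ⟨v, hv, rfl⟩ := Finset.mem_image.1 hz
          have h1 := h (Fin.cons v g) (by
            rw [Fin.cons_injective_iff]
            refine ⟨?_, hg⟩
            simpa using hv)
          rw [sum_cons] at h1
          rw [← h1]
          refine Finset.sum_congr rfl fun e _ => ?_
          rw [Finset.sum_mul]
          refine Finset.sum_congr rfl fun a _ => ?_
          rw [Fin.prod_univ_succ]
          simp only [Fin.cons_zero, Fin.cons_succ]
          ring
    intro b
    rw [← Fin.cons_self_tail b]
    exact key _ _

theorem indepXY {K : Type*} [CommRing K] [IsDomain K] {n k d : ℕ} (hd : d ≤ k) (α : Fin k → K) (hα : Function.Injective α)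
    (c : (Fin n → Fin d) → (Fin d → Fin k) → K)
    (hc1 : ∀ a b, ¬ okW d n 0 (fun j => (a j : ℕ)) → c a b = 0)
    (hc2 : ∀ a (b : Fin d → Fin k), ¬ (∀ i, (b i : ℕ) + d < k + i + 1) → c a b = 0)
    (h : ∀ (g : Fin d → Fin k) (f : Fin n → Fin d), Function.Injective g → Function.Surjective f →
      ∑ a, ∑ b, c a b * ((∏ j, α (g (f j)) ^ (a j : ℕ)) * ∏ i, α (g i) ^ (b i : ℕ)) = 0) :
    ∀ a b, c a b = 0 := by
  intro a
  refine indepY α hα hd (c a) (hc2 a) ?_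
  intro g hg
  refine indepX (fun i => α (g i)) (hα.comp hg) 0 (fun a => ∑ b, c a b * ∏ i, α (g i) ^ (b i : ℕ)) ?_ ?_ a
  · intro a ha
    exact Finset.sum_eq_zero fun b _ => by rw [hc1 a b ha, zero_mul]
  · intro f hf
    have hs : Function.Surjective f := by
      have h1 : Finset.univ.image f = Finset.univ := by
        rw [← Finset.card_eq_iff_eq_univ]
        refine le_antisymm (Finset.card_le_univ _) ?_
        simpa using hf
      intro v
      have := Finset.mem_univ v
      rw [← h1] at this
      simpa using this
    rw [← h g f hg hs]
    refine Finset.sum_congr rfl fun a _ => ?_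
    rw [Finset.sum_mul]
    exact Finset.sum_congr rfl fun b _ => by ring

end Indep


section Words

def stt (b : ℕ → ℕ) (r : ℕ) : ℕ → ℕ
  | 0 => r
  | j + 1 => if b j ≤ stt b r j then stt b r j + 1 else stt b r j

lemma stt_shift (b : ℕ → ℕ) (r j : ℕ) :
    stt b r (j + 1) = stt (fun i => b (i + 1)) (if b 0 ≤ r then r + 1 else r) j := by
  induction j with
  | zero => rfl
  | succ j ih => rw [stt, ih, stt]

def extW {n : ℕ} (a : Fin n → ℕ) (j : ℕ) : ℕ := if h : j < n then a ⟨j, h⟩ else 0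

lemma okW_iff (d n r : ℕ) (a : Fin n → ℕ) :
    okW d n r a ↔ (∀ j, a j < d) ∧ d ≤ stt (extW a) r n := by
  induction n generalizing r with
  | zero => simp [okW, stt]
  | succ n ih =>
    have h1 : (fun i => extW a (i + 1)) = extW (Fin.tail a) := by
      funext i
      simp [extW, Fin.tail, Fin.succ]
    have h2 : extW a 0 = a 0 := by simp [extW]
    rw [okW, ih, stt_shift, h1, h2, Fin.forall_fin_succ, and_assoc]
    rfl

lemma stt_mono (b : ℕ → ℕ) (r : ℕ) : Monotone (stt b r) := by
  refine monotone_nat_of_le_succ fun j => ?_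
  rw [stt]; split_ifs <;> omega

lemma stt_hit (b : ℕ → ℕ) (n t : ℕ) (ht : t < stt b 0 n) :
    ∃ j < n, stt b 0 j = t ∧ b j ≤ t := by
  induction n with
  | zero => simp [stt] at ht
  | succ n ih =>
    by_cases h : t < stt b 0 n
    · obtain ⟨j, hj, h'⟩ := ih h
      exact ⟨j, by omega, h'⟩
    · rw [stt] at ht
      split_ifs at ht with h'
      · exact ⟨n, by omega, by omega, by omega⟩
      · omega

theorem substaircase_iff (n d : ℕ) (hd : 1 ≤ d) (a : Fin n → ℕ) :
    IsSubstaircase n d a ↔ okW d n 0 a := by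
  rw [okW_iff]
  constructor
  · rintro ⟨s, ⟨φ, hφ, h1, h2⟩, h3⟩
    refine ⟨?_, ?_⟩
    · intro j
      by_cases hj : ∃ t, j = φ t
      · obtain ⟨t, rfl⟩ := hj
        have := h3 (φ t)
        rw [h1] at this
        omega
      · push Not at hj
        have := h3 j
        rw [h2 j hj] at this
        omega
    · have key : ∀ t : ℕ, ∀ ht : t < d, t + 1 ≤ stt (extW a) 0 (φ ⟨t, ht⟩ + 1) := by
        intro t
        induction t with
        | zero =>
          intro ht
          have h4 := h3 (φ ⟨0, ht⟩)
          rw [h1] at h4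
          rw [stt]
          have : extW a (φ ⟨0, ht⟩) = a (φ ⟨0, ht⟩) := by simp [extW]
          simp only at h4
          rw [if_pos (by omega)]
          omega
        | succ t ih =>
          intro ht
          have h5 := ih (by omega)
          have h6 : φ ⟨t, by omega⟩ < φ ⟨t + 1, ht⟩ := hφ (by simp)
          have h7 := stt_mono (extW a) 0 (show (φ ⟨t, by omega⟩ : ℕ) + 1 ≤ φ ⟨t + 1, ht⟩ from h6)
          have h4 := h3 (φ ⟨t + 1, ht⟩)
          rw [h1] at h4
          rw [stt]
          have : extW a (φ ⟨t + 1, ht⟩) = a (φ ⟨t + 1, ht⟩) := by simp [extW]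
          simp only at h4
          rw [if_pos (by omega)]
          omega
      have h8 := key (d - 1) (by omega)
      have h9 := stt_mono (extW a) 0 (show (φ ⟨d - 1, by omega⟩ : ℕ) + 1 ≤ n from (φ ⟨d - 1, by omega⟩).2)
      omega
  · rintro ⟨h1, h2⟩
    choose j hjn hj1 hj2 using fun t : Fin d => stt_hit (extW a) n t (lt_of_lt_of_le t.2 h2)
    have hmono : StrictMono (fun t : Fin d => (⟨j t, hjn t⟩ : Fin n)) := by
      intro t t' htt
      rw [Fin.mk_lt_mk]
      by_contra hcon
      push Not at hcon
      have := stt_mono (extW a) 0 hcon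
      rw [hj1, hj1] at this
      have : (t : ℕ) < t' := htt
      omega
    classical
    refine ⟨fun i => if h : ∃ t, i = (⟨j t, hjn t⟩ : Fin n) then (h.choose : ℕ) else d - 1,
      ⟨fun t => ⟨j t, hjn t⟩, hmono, ?_, ?_⟩, ?_⟩
    · intro t
      have h : ∃ t', (⟨j t, hjn t⟩ : Fin n) = ⟨j t', hjn t'⟩ := ⟨t, rfl⟩
      simp only [dif_pos h]
      have := hmono.injective h.choose_spec
      rw [← this]
    · intro i hi
      dsimp only
      rw [dif_neg]
      rintro ⟨t, ht⟩
      exact hi t ht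
    · intro i
      dsimp only
      split_ifs with h
      · have h3 := h.choose_spec
        have h4 := hj2 h.choose
        have : extW a (j h.choose) = a i := by
          conv_rhs => rw [h3]
          simp [extW, hjn]
        omega
      · have := h1 i
        omega

/-- closed form for the number of accepted words -/
def Gct (d n : ℕ) : ℕ → ℕ
  | 0 => d.descFactorial d * stirling2 n d
  | r + 1 => Gct d n r + if r < d then d.descFactorial (d - r - 1) * stirling2 n (d - r - 1) else 0

lemma stirling2_succ (n p : ℕ) (hp : 1 ≤ p) :
    stirling2 (n + 1) p = p * stirling2 n p + stirling2 n (p - 1) := by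
  obtain ⟨q, rfl⟩ : ∃ q, p = q + 1 := ⟨p - 1, by omega⟩
  rfl

lemma descF_pred (d p : ℕ) (hp : 1 ≤ p) :
    d.descFactorial p = (d - (p - 1)) * d.descFactorial (p - 1) := by
  obtain ⟨q, rfl⟩ : ∃ q, p = q + 1 := ⟨p - 1, by omega⟩
  exact Nat.descFactorial_succ d q

lemma Gct_step (d n r : ℕ) (hr : r < d) :
    Gct d (n + 1) r = (r + 1) * Gct d n (r + 1) + (d - (r + 1)) * Gct d n r := by
  induction r with
  | zero =>
    simp only [Gct, if_pos hr]
    rw [stirling2_succ n d hr, descF_pred d d hr]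
    obtain ⟨q, rfl⟩ : ∃ q, d = q + 1 := ⟨d - 1, by omega⟩
    simp only [Nat.add_sub_cancel, Nat.sub_zero, zero_add, Nat.add_sub_cancel_left]
    ring
  | succ r ih =>
    have ih' := ih (by omega)
    obtain ⟨p, rfl⟩ : ∃ p, d = r + 1 + (p + 1) := ⟨d - r - 2, by omega⟩
    rw [Gct, ih', if_pos (by omega)]
    have e1 : r + 1 + (p + 1) - r - 1 = p + 1 := by omega
    have e2 : r + 1 + (p + 1) - (r + 1) - 1 = p := by omega
    have e3 : r + 1 + (p + 1) - (r + 1) = p + 1 := by omega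
    have e4 : r + 1 + (p + 1) - (r + 1 + 1) = p := by omega
    have hD := Nat.descFactorial_succ (r + 1 + (p + 1)) p
    have e5 : r + 1 + (p + 1) - p = r + 2 := by omega
    rw [e5] at hD
    have hG1 : Gct (r + 1 + (p + 1)) n (r + 1) = Gct (r + 1 + (p + 1)) n r +
      (r + 1 + (p + 1)).descFactorial (p + 1) * stirling2 n (p + 1) := by
      rw [Gct, if_pos (by omega), e1]
    have hG2 : Gct (r + 1 + (p + 1)) n (r + 1 + 1) = Gct (r + 1 + (p + 1)) n (r + 1) +
      (r + 1 + (p + 1)).descFactorial p * stirling2 n p := by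
      rw [Gct, if_pos (by omega), e2]
    rw [e1, e3, e4, hG2, hG1, stirling2_succ n (p + 1) (by omega), hD, Nat.add_sub_cancel]
    ring

lemma Gct_ge (d n r : ℕ) (hr : d ≤ r) : Gct d n r = Gct d n d := by
  induction r, hr using Nat.le_induction with
  | base => rfl
  | succ r hr ih => rw [Gct, if_neg (by omega), ih, add_zero]

lemma Gct_top (d n r : ℕ) (hd : 1 ≤ d) (hr : d ≤ r) : Gct d (n + 1) r = d * Gct d n (r + 1) := by
  rw [Gct_ge d _ r hr, Gct_ge d _ (r + 1) (by omega)]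
  obtain ⟨q, rfl⟩ : ∃ q, d = q + 1 := ⟨d - 1, by omega⟩
  rw [Gct, Gct_step _ _ _ (by omega)]
  simp [stirling2]

lemma Gct_zero (d r : ℕ) (hd : 1 ≤ d) : Gct d 0 r = if d ≤ r then 1 else 0 := by
  have h0 : ∀ p, 1 ≤ p → stirling2 0 p = 0 := by
    intro p hp
    obtain ⟨q, rfl⟩ : ∃ q, p = q + 1 := ⟨p - 1, by omega⟩
    rfl
  induction r with
  | zero => simp [Gct, h0 d hd]; omega
  | succ r ih =>
    rw [Gct, ih]
    by_cases h1 : d ≤ r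
    · rw [if_pos h1, if_neg (by omega), if_pos (by omega)]
    · rw [if_neg h1, if_pos (by omega)]
      by_cases h2 : d = r + 1
      · subst h2
        simp [stirling2]
      · rw [if_neg (by omega), h0 _ (by omega)]
        simp

open Classical in
theorem card_okW (d n r : ℕ) (hd : 1 ≤ d) :
    ∑ a : Fin n → Fin d, (if okW d n r (fun j => (a j : ℕ)) then 1 else 0) = Gct d n r := by
  induction n generalizing r with
  | zero =>
    rw [Gct_zero d r hd, Fintype.sum_unique]
    by_cases h : d ≤ r
    · rw [if_pos h, if_pos (show okW d 0 r _ from h)]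
    · rw [if_neg h, if_neg (show ¬ okW d 0 r _ from h)]
  | succ n ih =>
    rw [sum_cons]
    have h1 : ∀ e : Fin d, ∑ a : Fin n → Fin d,
        (if okW d (n + 1) r (fun j => ((Fin.cons e a : Fin (n + 1) → Fin d) j : ℕ)) then 1 else 0) =
        if (e : ℕ) < r + 1 then Gct d n (r + 1) else Gct d n r := by
      intro e
      have h2 : ∀ a : Fin n → Fin d, okW d (n + 1) r (fun j => ((Fin.cons e a : Fin (n + 1) → Fin d) j : ℕ)) ↔
          okW d n (if (e : ℕ) ≤ r then r + 1 else r) (fun j => (a j : ℕ)) := by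
        intro a
        exact ⟨fun h => h.2, fun h => ⟨e.2, h⟩⟩
      simp only [h2]
      rw [ih]
      simp only [Nat.lt_succ_iff]
      split_ifs <;> rfl
    simp only [h1]
    rw [Fin.sum_univ_eq_sum_range (fun e => if e < r + 1 then Gct d n (r + 1) else Gct d n r) d]
    by_cases hr : r < d
    · rw [Gct_step d n r hr]
      obtain ⟨q, rfl⟩ : ∃ q, d = (r + 1) + q := ⟨d - (r + 1), by omega⟩
      rw [Finset.sum_range_add, Finset.sum_congr rfl (g := fun _ => Gct (r + 1 + q) n (r + 1)),
        Finset.sum_congr (s₁ := Finset.range q) rfl (g := fun _ => Gct (r + 1 + q) n r)]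
      · simp
      · intro i hi
        rw [if_neg (by omega)]
      · intro i hi
        rw [if_pos (Finset.mem_range.1 hi)]
    · rw [Gct_top d n r hd (by omega), Finset.sum_congr rfl (g := fun _ => Gct d n (r + 1))]
      · simp
      · intro i hi
        have := Finset.mem_range.1 hi
        rw [if_pos (by omega)]

/-- index type of the basis -/
abbrev Idx (n k d : ℕ) := {p : (Fin n → Fin d) × (Fin d → Fin k) //
  okW d n 0 (fun j => (p.1 j : ℕ)) ∧ ∀ i, (p.2 i : ℕ) + d < k + i + 1}

noncomputable instance (n k d : ℕ) : Fintype (Idx n k d) := Fintype.ofFinite _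

theorem card_Idx (n k d : ℕ) (hd : 1 ≤ d) (hk : d ≤ k) :
    Fintype.card (Idx n k d) = Nat.factorial k * Nat.factorial d / Nat.factorial (k - d) * stirling2 n d := by
  classical
  have h1 : Fintype.card (Idx n k d) =
      Fintype.card {a : Fin n → Fin d // okW d n 0 (fun j => (a j : ℕ))} *
      Fintype.card {b : Fin d → Fin k // ∀ i, (b i : ℕ) + d < k + i + 1} := by
    rw [← Fintype.card_prod]
    exact Fintype.card_congr (Equiv.subtypeProdEquivProd (p := fun a : Fin n → Fin d => okW d n 0 (fun j => (a j : ℕ)))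
      (q := fun b : Fin d → Fin k => ∀ i, (b i : ℕ) + d < k + i + 1))
  have h2 : Fintype.card {a : Fin n → Fin d // okW d n 0 (fun j => (a j : ℕ))} = d.factorial * stirling2 n d := by
    have := card_okW d n 0 hd
    rw [Gct, Nat.descFactorial_self] at this
    rw [← this, Fintype.card_subtype, Finset.card_filter]
  have h3 : Fintype.card {b : Fin d → Fin k // ∀ i, (b i : ℕ) + d < k + i + 1} = k.factorial / (k - d).factorial := by
    rw [Fintype.card_congr (Equiv.subtypePiEquivPi (p := fun (i : Fin d) (b : Fin k) => (b : ℕ) + d < k + i + 1)),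
      Fintype.card_pi]
    have h4 : ∀ i : Fin d, Fintype.card {b : Fin k // (b : ℕ) + d < k + i + 1} = k - d + 1 + i := by
      intro i
      rw [Fintype.card_congr (Equiv.subtypeEquivRight (q := fun b : Fin k => (b : ℕ) < k - d + 1 + i) (by intro b; omega)),
        Fintype.card_subtype, Fin.card_filter_val_lt]
      omega
    simp only [h4]
    rw [Fin.prod_univ_eq_prod_range (fun i => k - d + 1 + i) d, ← Nat.ascFactorial_eq_prod_range,
      Nat.ascFactorial_eq_div, Nat.sub_add_cancel hk]
  rw [h1, h2, h3, mul_comm k.factorial, Nat.mul_div_assoc _ (Nat.factorial_dvd_factorial (Nat.sub_le k d))]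
  ring

end Words


section Nat1
variable {A A' : Type*} [CommRing A] [CommRing A']

lemma map_hv (φ : A →+* A') {d : ℕ} (y : Fin d → A) (m : ℕ) : φ (hv y m) = hv (fun j => φ (y j)) m := by
  simp only [hv, map_sum, map_multiset_prod, Multiset.map_map]
  rfl

lemma map_ev (φ : A →+* A') {n : ℕ} (x : Fin n → A) (m : ℕ) : φ (ev x m) = ev (fun j => φ (x j)) m := by
  simp only [ev, map_sum, map_prod]

lemma hv_zero {d : ℕ} (y : Fin d → A) : hv y 0 = 1 := by
  have h := congrArg (PowerSeries.coeff 0) (hv_mul y)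
  simpa [map_prod] using h

/-- first family of relations -/
noncomputable def R1 {B : Type*} [CommRing B] (φ : B →+* A) (F : PowerSeries B) {d : ℕ} (y : Fin d → A) (r : ℕ) : A :=
  PowerSeries.coeff r (PowerSeries.map φ F * PowerSeries.mk (hv y))

noncomputable def R2 {n d : ℕ} (x : Fin n → A) (y : Fin d → A) (r : ℕ) : A :=
  PowerSeries.coeff r (PowerSeries.mk (ev x) * PowerSeries.mk (fun m => (-1) ^ m * hv y m))

noncomputable def R3 {n d : ℕ} (x : Fin n → A) (y : Fin d → A) (i : Fin n) : A :=
  ∏ j, (x i - y j)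

lemma map_R1 (ψ : A →+* A') {B : Type*} [CommRing B] (φ : B →+* A) (F : PowerSeries B) {d : ℕ} (y : Fin d → A) (r : ℕ) :
    ψ (R1 φ F y r) = R1 (ψ.comp φ) F (fun j => ψ (y j)) r := by
  simp [R1, PowerSeries.coeff_mul, map_sum, map_hv]

lemma map_R2 (ψ : A →+* A') {n d : ℕ} (x : Fin n → A) (y : Fin d → A) (r : ℕ) :
    ψ (R2 x y r) = R2 (fun j => ψ (x j)) (fun j => ψ (y j)) r := by
  simp [R2, PowerSeries.coeff_mul, map_sum, map_hv, map_ev]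

lemma map_R3 (ψ : A →+* A') {n d : ℕ} (x : Fin n → A) (y : Fin d → A) (i : Fin n) :
    ψ (R3 x y i) = R3 (fun j => ψ (x j)) (fun j => ψ (y j)) i := by
  simp [R3, map_prod]

end Nat1

section Span
variable {B A : Type*} [CommRing B] [CommRing A] [Algebra B A]

theorem spanXY (F : PowerSeries B) (hF : PowerSeries.coeff 0 F = 1) {n k d : ℕ} (hdk : d ≤ k) (hdn : d ≤ n)
    (x : Fin n → A) (y : Fin d → A)
    (h1 : ∀ r, k - d < r → R1 (algebraMap B A) F y r = 0)
    (h2 : ∀ r, n - d < r → R2 x y r = 0) (h3 : ∀ i, R3 x y i = 0) (s : MvPolynomial (Fin n ⊕ Fin d) B) :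
    aeval (Sum.elim x y) s ∈ Submodule.span B
      (Set.range fun p : Idx n k d => (∏ j, x j ^ (p.1.1 j : ℕ)) * ∏ i, y i ^ (p.1.2 i : ℕ)) := by
  set M := Submodule.span B
      (Set.range fun p : Idx n k d => (∏ j, x j ^ (p.1.1 j : ℕ)) * ∏ i, y i ^ (p.1.2 i : ℕ)) with hM
  let S := MvPolynomial (Fin d) B
  let _ : Algebra S A := (aeval y : MvPolynomial (Fin d) B →ₐ[B] A).toAlgebra
  have hal : ∀ s : S, algebraMap S A s = aeval y s := fun s => rfl
  have : IsScalarTower B S A := IsScalarTower.of_algHom (aeval y : MvPolynomial (Fin d) B →ₐ[B] A)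
  let Y : Fin d → S := fun j => X j
  have hY : (fun j => algebraMap S A (Y j)) = y := by
    funext j
    simp [hal, Y]
  let Q : PowerSeries S := PowerSeries.X ^ d * PowerSeries.mk (fun m => (-1) ^ m * hv Y m)
  let g : Polynomial S := ∏ j, (Polynomial.X - Polynomial.C (Y j))
  have hQ0 : ∀ m < d, PowerSeries.coeff m Q = 0 := by
    intro m hm
    simp only [Q]
    rw [PowerSeries.coeff_X_pow_mul', if_neg (by omega)]
  have hQ1 : PowerSeries.coeff d Q = 1 := by
    simp only [Q]
    rw [PowerSeries.coeff_X_pow_mul', if_pos le_rfl]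
    simp [hv_zero]
  have hg : g.Monic := Polynomial.monic_prod_of_monic _ _ (fun i _ => Polynomial.monic_X_sub_C _)
  by_cases htriv : Subsingleton A
  · rw [Subsingleton.elim (aeval (Sum.elim x y) s) 0]
    exact zero_mem _
  rw [not_subsingleton_iff_nontrivial] at htriv
  have : Nontrivial S := RingHom.domain_nontrivial (algebraMap S A)
  have hgd : g.natDegree = d := by
    simp only [g]
    rw [Polynomial.natDegree_prod_of_monic _ _ (fun i _ => Polynomial.monic_X_sub_C _)]
    simp
  have hEs : ∀ c, n < c → PowerSeries.coeff c (Es Q x) = 0 := by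
    intro c hc
    have : Es Q x = PowerSeries.X ^ d * (PowerSeries.mk (ev x) * PowerSeries.mk (fun m => (-1) ^ m * hv y m)) := by
      rw [Es, mk_ev]
      simp only [Q, map_mul, map_pow, PowerSeries.map_X]
      have : PowerSeries.map (algebraMap S A) (PowerSeries.mk fun m => (-1) ^ m * hv Y m) =
          PowerSeries.mk (fun m => (-1) ^ m * hv y m) := by
        ext m
        simp only [PowerSeries.coeff_map, PowerSeries.coeff_mk, map_mul, map_pow, map_neg, map_one, map_hv, hY]
      rw [this]
      ring
    rw [this, PowerSeries.coeff_X_pow_mul', if_pos (by omega)]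
    exact h2 _ (by omega)
  have hK : Kx Q g x 0 ≤ ⊥ := by
    apply Kx_le
    rintro t - p (⟨c, hc, rfl⟩ | ⟨j, rfl⟩)
    · rw [Kdet]
      simp [hEs _ (hc 0)]
    · have : Polynomial.aeval (x j) g = R3 x y j := by
        simp only [g, R3, map_prod, map_sub, Polynomial.aeval_X, Polynomial.aeval_C]
        rw [← hY]
      rw [this, h3]
      simp
  have hT := Tx_le Q g d hg hgd hQ0 hQ1 x 0
  have hT2 : Subalgebra.toSubmodule (Tx S x) ≤ Wx S d x 0 := by
    refine hT.trans (sup_le le_rfl (hK.trans bot_le))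
  have hTy := Ty_le F hF k hdk y (PowerSeries.map (algebraMap B A) F * PowerSeries.mk (hv y))
    (by rw [mul_assoc, hv_mul, mul_one]) (fun r hr => h1 r (by omega))
  have hsy : ∀ s : S, aeval y s ∈ Tx B y := by
    intro s
    induction s using MvPolynomial.induction_on with
    | C a => rw [aeval_C]; exact Subalgebra.algebraMap_mem _ _
    | add p q hp hq => rw [map_add]; exact add_mem hp hq
    | mul_X p i hp => rw [map_mul, aeval_X]; exact mul_mem hp (mem_Tx y i)
  have hmem : aeval (Sum.elim x y) s ∈ Tx S x := by
    induction s using MvPolynomial.induction_on with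
    | C a =>
      rw [aeval_C, IsScalarTower.algebraMap_apply B S A]; exact Subalgebra.algebraMap_mem _ _
    | add p q hp hq => rw [map_add]; exact add_mem hp hq
    | mul_X p i hp =>
      rw [map_mul, aeval_X]
      refine mul_mem hp ?_
      cases i with
      | inl i => exact mem_Tx x i
      | inr j =>
        have : y j = algebraMap S A (Y j) := by rw [← hY]
        rw [Sum.elim_inr, this]
        exact Subalgebra.algebraMap_mem _ _
  have hW := hT2 hmem
  rw [Wx] at hW
  have key : ∀ q ∈ Submodule.span S {p : A | ∃ a : Fin n → ℕ, okW d n 0 a ∧ p = ∏ j, x j ^ a j},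
      ∀ s : S, s • q ∈ M := by
    intro q hq
    induction hq using Submodule.span_induction with
    | zero => intro s; rw [smul_zero]; exact zero_mem _
    | add p q _ _ hp hq => intro s; rw [smul_add]; exact add_mem (hp s) (hq s)
    | smul t p _ hp => intro s; rw [smul_smul]; exact hp _
    | mem p hp =>
      intro s
      obtain ⟨a, ha, rfl⟩ := hp
      rw [Algebra.smul_def, hal]
      have hs := hTy (hsy s)
      generalize (aeval y) s = z at hs ⊢
      induction hs using Submodule.span_induction with
      | zero => rw [zero_mul]; exact zero_mem _
      | add p q _ _ hp hq => rw [add_mul]; exact add_mem hp hq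
      | smul t p _ hp => rw [smul_mul_assoc]; exact Submodule.smul_mem _ _ hp
      | mem p hp =>
        obtain ⟨b, hb, rfl⟩ := hp
        have had := ((okW_iff d n 0 a).1 ha).1
        have hbk : ∀ i, b i < k := fun i => by
          have := hb i
          have := i.2
          omega
        refine Submodule.subset_span ⟨⟨(fun j => ⟨a j, had j⟩, fun i => ⟨b i, hbk i⟩), ha, hb⟩, ?_⟩
        exact mul_comm _ _
  have := key _ hW 1
  rwa [one_smul] at this
end Span


section Gens

noncomputable def xv (B : Type*) [CommRing B] (n d : ℕ) (i : Fin n) : MvPolynomial (Fin n ⊕ Fin d) B := X (Sum.inl i)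
noncomputable def yv (B : Type*) [CommRing B] (n d : ℕ) (i : Fin d) : MvPolynomial (Fin n ⊕ Fin d) B := X (Sum.inr i)

/-- generators of the deformed ideal -/
def JB {B : Type*} [CommRing B] (F : PowerSeries B) (n k d : ℕ) : Set (MvPolynomial (Fin n ⊕ Fin d) B) :=
  {p | ∃ r, k - d < r ∧ p = R1 C F (yv B n d) r} ∪
  {p | ∃ r, n - d < r ∧ p = R2 (xv B n d) (yv B n d) r} ∪
  {p | ∃ i : Fin n, p = R3 (xv B n d) (yv B n d) i}

lemma hY_eq (n d r : ℕ) : hY n d r = hv (yv ℚ n d) r := by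
  have h : hsymm (Fin d) ℚ r = hv (fun j => X j) r := rfl
  rw [hY, h]
  have := map_hv (rename (Sum.inr : Fin d → Fin n ⊕ Fin d) : MvPolynomial (Fin d) ℚ →ₐ[ℚ] _).toRingHom (fun j => X j) r
  refine this.trans ?_
  congr 1
  funext j
  exact rename_X _ _

lemma eX_eq (n d r : ℕ) : eX n d r = ev (xv ℚ n d) r := by
  have h : esymm (Fin n) ℚ r = ev (fun j => X j) r := rfl
  rw [eX, h]
  have := map_ev (rename (Sum.inl : Fin n → Fin n ⊕ Fin d) : MvPolynomial (Fin n) ℚ →ₐ[ℚ] _).toRingHom (fun j => X j) r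
  refine this.trans ?_
  congr 1
  funext j
  exact rename_X _ _

lemma eY_eq (n d r : ℕ) : eY n d r = ev (yv ℚ n d) r := by
  have h : esymm (Fin d) ℚ r = ev (fun j => X j) r := rfl
  rw [eY, h]
  have := map_ev (rename (Sum.inr : Fin d → Fin n ⊕ Fin d) : MvPolynomial (Fin d) ℚ →ₐ[ℚ] _).toRingHom (fun j => X j) r
  refine this.trans ?_
  congr 1
  funext j
  exact rename_X _ _

lemma R3_eq (n d : ℕ) (i : Fin n) : genPow n d i = R3 (xv ℚ n d) (yv ℚ n d) i := by
  rw [genPow, R3]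
  have : ∀ j, xv ℚ n d i - yv ℚ n d j = - yv ℚ n d j + xv ℚ n d i := fun j => by ring
  simp only [this]
  rw [Finset.prod_add, Finset.sum_powerset, Finset.card_univ, Fintype.card_fin]
  refine Finset.sum_congr rfl fun j _ => ?_
  rw [eY_eq, ev, Finset.mul_sum, Finset.mul_sum]
  refine Finset.sum_congr rfl fun t ht => ?_
  have ht' := (Finset.mem_powersetCard.1 ht).2
  rw [Finset.prod_neg, ht', Finset.prod_const, Finset.card_sdiff_of_subset (Finset.subset_univ t), ht', Finset.card_univ,
    Fintype.card_fin]
  simp only [xv]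
  ring

lemma R2_eq (n d r : ℕ) : genXY n d r = R2 (xv ℚ n d) (yv ℚ n d) r := by
  rw [genXY, R2, mul_comm (PowerSeries.mk (ev _)), PowerSeries.coeff_mul,
    Finset.Nat.sum_antidiagonal_eq_sum_range_succ_mk]
  refine Finset.sum_congr rfl fun j _ => ?_
  rw [eX_eq, hY_eq, PowerSeries.coeff_mk, PowerSeries.coeff_mk]
  ring

lemma JgensQ_eq (n k d : ℕ) : JgensQ n k d = JB (1 : PowerSeries ℚ) n k d := by
  have h1 : ∀ r, hY n d r = R1 C (1 : PowerSeries ℚ) (yv ℚ n d) r := by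
    intro r
    rw [hY_eq, R1]
    simp
  simp only [JgensQ, JB, h1, R2_eq, R3_eq]

lemma R1_map {B B' A' : Type*} [CommRing B] [CommRing B'] [CommRing A'] (π : B →+* B') (φ : B' →+* A')
    (F : PowerSeries B) {d : ℕ} (y : Fin d → A') (r : ℕ) :
    R1 (φ.comp π) F y r = R1 φ (PowerSeries.map π F) y r := by
  simp [R1, PowerSeries.coeff_mul]

lemma map_JB {B B' : Type*} [CommRing B] [CommRing B'] (π : B →+* B') (F : PowerSeries B) (n k d : ℕ) :
    Ideal.map (MvPolynomial.map π : MvPolynomial (Fin n ⊕ Fin d) B →+* _) (Ideal.span (JB F n k d)) =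
      Ideal.span (JB (PowerSeries.map π F) n k d) := by
  rw [Ideal.map_span]
  have hx : (fun i => MvPolynomial.map π (xv B n d i)) = xv B' n d := by funext i; simp [xv]
  have hy : (fun i => MvPolynomial.map π (yv B n d i)) = yv B' n d := by funext i; simp [yv]
  have hC : (MvPolynomial.map π : MvPolynomial (Fin n ⊕ Fin d) B →+* _).comp C = C.comp π := by
    ext b; simp
  have h1 : ∀ r, MvPolynomial.map π (R1 C F (yv B n d) r) = R1 C (PowerSeries.map π F) (yv B' n d) r := by
    intro r
    rw [map_R1, hy, hC, R1_map]
  have h2 : ∀ r, MvPolynomial.map π (R2 (xv B n d) (yv B n d) r) = R2 (xv B' n d) (yv B' n d) r := by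
    intro r
    rw [map_R2, hy, hx]
  have h3 : ∀ r, MvPolynomial.map π (R3 (xv B n d) (yv B n d) r) = R3 (xv B' n d) (yv B' n d) r := by
    intro r
    rw [map_R3, hy, hx]
  congr 1
  ext p
  simp only [JB, Set.image_union, Set.mem_union, Set.mem_image, Set.mem_ofPred_eq]
  constructor
  · rintro ((⟨_, ⟨r, hr, rfl⟩, rfl⟩ | ⟨_, ⟨r, hr, rfl⟩, rfl⟩) | ⟨_, ⟨r, rfl⟩, rfl⟩)
    · exact Or.inl (Or.inl ⟨r, hr, h1 r⟩)
    · exact Or.inl (Or.inr ⟨r, hr, h2 r⟩)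
    · exact Or.inr ⟨r, h3 r⟩
  · rintro ((⟨r, hr, rfl⟩ | ⟨r, hr, rfl⟩) | ⟨r, rfl⟩)
    · exact Or.inl (Or.inl ⟨_, ⟨r, hr, rfl⟩, h1 r⟩)
    · exact Or.inl (Or.inr ⟨_, ⟨r, hr, rfl⟩, h2 r⟩)
    · exact Or.inr ⟨_, ⟨r, rfl⟩, h3 r⟩

noncomputable def vm (B : Type*) [CommRing B] (n k d : ℕ) (p : Idx n k d) : MvPolynomial (Fin n ⊕ Fin d) B :=
  (∏ j, X (Sum.inl j) ^ (p.1.1 j : ℕ)) * ∏ i, X (Sum.inr i) ^ (p.1.2 i : ℕ)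

theorem span_quot {B : Type*} [CommRing B] (F : PowerSeries B) (hF : PowerSeries.coeff 0 F = 1) {n k d : ℕ}
    (hdk : d ≤ k) (hdn : d ≤ n) (s : MvPolynomial (Fin n ⊕ Fin d) B) :
    Ideal.Quotient.mk (Ideal.span (JB F n k d)) s ∈ Submodule.span B
      (Set.range fun p => Ideal.Quotient.mk (Ideal.span (JB F n k d)) (vm B n k d p)) := by
  set q := Ideal.Quotient.mk (Ideal.span (JB F n k d)) with hq
  have h := spanXY (A := MvPolynomial (Fin n ⊕ Fin d) B ⧸ Ideal.span (JB F n k d)) F hF hdk hdn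
    (fun i => q (xv B n d i)) (fun i => q (yv B n d i)) ?_ ?_ ?_ s
  · have h2 : aeval (Sum.elim (fun i => q (xv B n d i)) (fun i => q (yv B n d i))) s = q s := by
      have : aeval (Sum.elim (fun i => q (xv B n d i)) (fun i => q (yv B n d i))) =
          Ideal.Quotient.mkₐ B (Ideal.span (JB F n k d)) := by
        apply MvPolynomial.algHom_ext
        rintro (i | i) <;> rw [aeval_X] <;> rfl
      rw [this]
      rfl
    rw [h2] at h
    have h3 : (fun p => q (vm B n k d p)) =
        fun p : Idx n k d => (∏ j, q (xv B n d j) ^ (p.1.1 j : ℕ)) * ∏ i, q (yv B n d i) ^ (p.1.2 i : ℕ) := by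
      funext p
      simp [vm, map_prod, xv, yv]
    rw [h3]
    exact h
  · intro r hr
    have : R1 (algebraMap B (MvPolynomial (Fin n ⊕ Fin d) B ⧸ Ideal.span (JB F n k d))) F (fun i => q (yv B n d i)) r
        = q (R1 C F (yv B n d) r) := by
      rw [map_R1]
      rfl
    rw [this, hq, Ideal.Quotient.eq_zero_iff_mem]
    exact Ideal.subset_span (Or.inl (Or.inl ⟨r, hr, rfl⟩))
  · intro r hr
    rw [← map_R2, hq, Ideal.Quotient.eq_zero_iff_mem]
    exact Ideal.subset_span (Or.inl (Or.inr ⟨r, hr, rfl⟩))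
  · intro r
    rw [← map_R3, hq, Ideal.Quotient.eq_zero_iff_mem]
    exact Ideal.subset_span (Or.inr ⟨r, rfl⟩)

end Gens

section Points
variable {K : Type*} [CommRing K]

lemma coeff_prod_van {ι : Type*} (s : Finset ι) (u : ι → K) (r : ℕ) (hr : s.card < r) :
    PowerSeries.coeff r (∏ i ∈ s, (1 + PowerSeries.C (u i) * PowerSeries.X)) = 0 := by
  classical
  induction s using Finset.induction_on generalizing r with
  | empty =>
    rw [Finset.prod_empty, PowerSeries.coeff_one, if_neg]
    simp at hr; omega
  | insert a s ha ih =>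
    rw [Finset.card_insert_of_notMem ha] at hr
    obtain ⟨r, rfl⟩ : ∃ t, r = t + 1 := ⟨r - 1, by omega⟩
    rw [Finset.prod_insert ha, add_mul, one_mul, map_add, ih _ (by omega), zero_add, mul_assoc,
      PowerSeries.coeff_C_mul, mul_comm PowerSeries.X, PowerSeries.coeff_succ_mul_X, ih _ (by omega), mul_zero]

lemma coeff_ratio {N d : ℕ} (u : Fin N → K) (s : Fin d → Fin N) (hs : Function.Injective s) (G : PowerSeries K)
    (hG : G * ∏ j, (1 + PowerSeries.C (u (s j)) * PowerSeries.X) = 1) (r : ℕ) (hr : N - d < r) :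
    PowerSeries.coeff r ((∏ i, (1 + PowerSeries.C (u i) * PowerSeries.X)) * G) = 0 := by
  classical
  have h1 : ∏ j, (1 + PowerSeries.C (u (s j)) * PowerSeries.X) =
      ∏ i ∈ Finset.univ.image s, (1 + PowerSeries.C (u i) * PowerSeries.X) := by
    rw [Finset.prod_image (fun a _ b _ h => hs h)]
  have h2 := Finset.prod_sdiff (Finset.subset_univ (Finset.univ.image s))
    (f := fun i => 1 + PowerSeries.C (u i) * PowerSeries.X)
  rw [← h2, ← h1, mul_assoc, mul_comm _ G, hG, mul_one]
  apply coeff_prod_van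
  rw [Finset.card_sdiff_of_subset (Finset.subset_univ _), Finset.card_image_of_injective _ hs]
  simpa using hr

theorem point_vanish {n k d : ℕ} (α : Fin k → K) (g : Fin d → Fin k) (f : Fin n → Fin d)
    (hg : Function.Injective g) (hf : Function.Surjective f) (p : MvPolynomial (Fin n ⊕ Fin d) K)
    (hp : p ∈ Ideal.span (JB (∏ i, (1 - PowerSeries.C (α i) * PowerSeries.X)) n k d)) :
    eval (Sum.elim (fun j => α (g (f j))) (fun i => α (g i))) p = 0 := by
  set e := (eval (Sum.elim (fun j => α (g (f j))) (fun i => α (g i))) :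
    MvPolynomial (Fin n ⊕ Fin d) K →+* K) with he
  have hx : (fun i => e (xv K n d i)) = fun j => α (g (f j)) := by funext i; simp [xv, he]
  have hy : (fun i => e (yv K n d i)) = fun i => α (g i) := by funext i; simp [yv, he]
  have hC : e.comp C = RingHom.id K := by ext b; simp [he]
  have hle : Ideal.span (JB (∏ i, (1 - PowerSeries.C (α i) * PowerSeries.X)) n k d) ≤ RingHom.ker e := by
    rw [Ideal.span_le]
    rintro _ ((⟨r, hr, rfl⟩ | ⟨r, hr, rfl⟩) | ⟨r, rfl⟩) <;> rw [SetLike.mem_coe, RingHom.mem_ker]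
    · rw [map_R1, hy, hC, R1]
      have h := coeff_ratio (fun i => - α i) g hg (PowerSeries.mk (hv fun i => α (g i))) ?_ r hr
      · rw [← h]
        simp [sub_eq_add_neg]
      · refine Eq.trans ?_ (hv_mul (fun i => α (g i)))
        simp [sub_eq_add_neg]
    · rw [map_R2, hy, hx, R2, mk_ev]
      obtain ⟨s, hs⟩ := hf.hasRightInverse
      apply coeff_ratio (fun j => α (g (f j))) s hs.injective _ _ r hr
      refine Eq.trans ?_ (hv_mul_neg (fun i => α (g i)))
      simp only [hs _]
    · rw [map_R3, hy, hx, R3]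
      exact Finset.prod_eq_zero (Finset.mem_univ (f r)) (sub_self _)
  exact hle hp

theorem indepIdx [IsDomain K] {n k d : ℕ} (hd : d ≤ k) (α : Fin k → K) (hα : Function.Injective α)
    (c : Idx n k d → K) (h : ∑ p, C (c p) * vm K n k d p ∈
      Ideal.span (JB (∏ i, (1 - PowerSeries.C (α i) * PowerSeries.X)) n k d)) : ∀ p, c p = 0 := by
  classical
  have hinj : Function.Injective (Subtype.val : Idx n k d → _) := Subtype.val_injective
  let c' : (Fin n → Fin d) × (Fin d → Fin k) → K := Function.extend Subtype.val c 0
  have hc0 : ∀ q, ¬ (okW d n 0 (fun j => (q.1 j : ℕ)) ∧ ∀ i : Fin d, (q.2 i : ℕ) + d < k + i + 1) → c' q = 0 := by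
    intro q hq
    simp only [c']
    rw [Function.extend_apply', Pi.zero_apply]
    rintro ⟨a, rfl⟩
    exact hq a.2
  have := indepXY (n := n) hd α hα (fun a b => c' (a, b)) (fun a b hab => hc0 (a, b) (fun h => hab h.1))
    (fun a b hab => hc0 (a, b) (fun h => hab h.2)) ?_
  · intro p
    have h2 := this p.1.1 p.1.2
    simp only [c', Prod.mk.eta] at h2
    rwa [hinj.extend_apply] at h2
  · intro g f hg hf
    have h3 := point_vanish α g f hg hf _ h
    rw [map_sum] at h3
    rw [← h3, ← Fintype.sum_prod_type' (f := fun a b => c' (a, b) * ((∏ j, α (g (f j)) ^ (a j:ℕ)) * ∏ i, α (g i) ^ (b i:ℕ)))]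
    symm
    apply Fintype.sum_of_injective Subtype.val hinj
    · intro q hq
      rw [hc0, zero_mul]
      intro h
      exact hq ⟨⟨q, h⟩, rfl⟩
    · intro p
      simp only [c', Prod.mk.eta]
      rw [hinj.extend_apply]
      simp [vm, map_prod]

end Points


section Final

theorem indepQ {n k d : ℕ} (hdk : d ≤ k) (hdn : d ≤ n) (c : Idx n k d → ℚ)
    (h : ∑ p, C (c p) * vm ℚ n k d p ∈ Ideal.span (JgensQ n k d)) : ∀ p, c p = 0 := by
  let α : Fin k → Polynomial ℚ := fun i => Polynomial.C ((i : ℕ) : ℚ) * Polynomial.X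
  have hα : Function.Injective α := by
    intro i j hij
    have := congrArg (fun q => Polynomial.coeff q 1) hij
    simp only [α, Polynomial.coeff_C_mul, Polynomial.coeff_X_one, mul_one] at this
    exact Fin.ext (by exact_mod_cast this)
  let F : PowerSeries (Polynomial ℚ) := ∏ i, (1 - PowerSeries.C (α i) * PowerSeries.X)
  have hF : PowerSeries.coeff 0 F = 1 := by simp [F, map_prod]
  let π : Polynomial ℚ →+* ℚ := Polynomial.evalRingHom 0
  have hπF : PowerSeries.map π F = 1 := by simp [F, map_prod, α, π]
  let Pm : MvPolynomial (Fin n ⊕ Fin d) (Polynomial ℚ) →+* MvPolynomial (Fin n ⊕ Fin d) ℚ := MvPolynomial.map π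
  have hπs : Function.Surjective π := fun a => ⟨Polynomial.C a, by simp [π]⟩
  have hPms : Function.Surjective Pm := MvPolynomial.map_surjective _ hπs
  rw [JgensQ_eq, ← hπF, ← map_JB, Ideal.mem_map_iff_of_surjective _ hPms] at h
  obtain ⟨f, hf, hfe⟩ := h
  let f' : MvPolynomial (Fin n ⊕ Fin d) (Polynomial ℚ) := ∑ p, C (Polynomial.C (c p)) * vm (Polynomial ℚ) n k d p
  have hvm : ∀ p, Pm (vm (Polynomial ℚ) n k d p) = vm ℚ n k d p := by
    intro p
    simp [vm, Pm, map_prod]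
  have hf' : Pm f' = ∑ p, C (c p) * vm ℚ n k d p := by
    simp only [f', map_sum, map_mul, hvm]
    refine Finset.sum_congr rfl fun p _ => ?_
    simp [Pm, π]
  have hdiv : C (Polynomial.X : Polynomial ℚ) ∣ f' - f := by
    rw [MvPolynomial.C_dvd_iff_dvd_coeff]
    intro m
    rw [Polynomial.X_dvd_iff]
    have h0 : Pm (f' - f) = 0 := by rw [map_sub, hf', ← hfe]; exact sub_self _
    have h1 := congrArg (MvPolynomial.coeff m) h0
    simp only [Pm, MvPolynomial.coeff_map, MvPolynomial.coeff_zero, π, Polynomial.coe_evalRingHom] at h1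
    rw [Polynomial.coeff_zero_eq_eval_zero]
    exact h1
  obtain ⟨g, hg⟩ := hdiv
  have hgs := span_quot F hF hdk hdn g
  rw [Submodule.mem_span_range_iff_exists_fun] at hgs
  obtain ⟨u, hu⟩ := hgs
  have hg2 : g - ∑ p, C (u p) * vm (Polynomial ℚ) n k d p ∈ Ideal.span (JB F n k d) := by
    rw [← Ideal.Quotient.eq, ← hu, map_sum]
    refine Finset.sum_congr rfl fun p _ => ?_
    rw [← MvPolynomial.smul_eq_C_mul]
    rfl
  have hfin : ∑ p, C (Polynomial.C (c p) - Polynomial.X * u p) * vm (Polynomial ℚ) n k d p ∈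
      Ideal.span (JB F n k d) := by
    have : ∑ p, C (Polynomial.C (c p) - Polynomial.X * u p) * vm (Polynomial ℚ) n k d p =
        f + C Polynomial.X * (g - ∑ p, C (u p) * vm (Polynomial ℚ) n k d p) := by
      rw [mul_sub, ← hg, Finset.mul_sum]
      simp only [f', map_sub, map_mul, sub_mul, Finset.sum_sub_distrib, mul_assoc]
      ring
    rw [this]
    exact add_mem hf (Ideal.mul_mem_left _ _ hg2)
  have h0 := indepIdx hdk α hα _ hfin
  intro p
  have h1 := congrArg (Polynomial.eval 0) (h0 p)
  simpa using h1

lemma Aset_eq (n k d : ℕ) (hd : 1 ≤ d) (hk : d ≤ k) : Aset n k d = Set.range (vm ℚ n k d) := by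
  ext p
  constructor
  · rintro ⟨a, b, ha, hb, rfl⟩
    rw [substaircase_iff n d hd] at ha
    have had := ((okW_iff d n 0 a).1 ha).1
    have hbk : ∀ i, b i < k := fun i => by
      have := hb i
      have := i.2
      omega
    refine ⟨⟨(fun j => ⟨a j, had j⟩, fun i => ⟨b i, hbk i⟩), ha, fun i => ?_⟩, rfl⟩
    have := hb i
    simp only
    omega
  · rintro ⟨q, rfl⟩
    refine ⟨fun j => q.1.1 j, fun i => q.1.2 i, (substaircase_iff n d hd _).2 q.2.1, fun i => ?_, rfl⟩
    have := q.2.2 i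
    dsimp only
    omega

theorem vm_li {n k d : ℕ} (hdk : d ≤ k) (hdn : d ≤ n) :
    LinearIndependent ℚ (fun p => Ideal.Quotient.mk (Ideal.span (JgensQ n k d)) (vm ℚ n k d p)) := by
  rw [Fintype.linearIndependent_iff]
  intro c hc
  apply indepQ hdk hdn
  rw [← Ideal.Quotient.eq_zero_iff_mem, map_sum, ← hc]
  refine Finset.sum_congr rfl fun p _ => ?_
  rw [← MvPolynomial.smul_eq_C_mul]
  rfl

theorem vm_span {n k d : ℕ} (hdk : d ≤ k) (hdn : d ≤ n) :
    Submodule.span ℚ (Set.range fun p => Ideal.Quotient.mk (Ideal.span (JgensQ n k d)) (vm ℚ n k d p)) = ⊤ := by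
  rw [eq_top_iff]
  rintro z -
  obtain ⟨s, rfl⟩ := Ideal.Quotient.mk_surjective z
  rw [JgensQ_eq]
  exact span_quot 1 (by simp) hdk hdn s

end Final

/-- The monomials of `A_{n,k,d}` descend to a `ℚ`-basis of
`ℚ[x,y]/J_{n,k,d}^ℚ`; in particular this quotient has dimension
`(k!·d!/(k−d)!)·Stir(n,d)` over `ℚ`. -/
theorem Aset_descends_to_basis (n k d : ℕ) (hd : 1 ≤ d) (hk : d ≤ k) (hn : k ≤ n) :
    LinearIndependent ℚ (fun p : Aset n k d =>
      Ideal.Quotient.mk (Ideal.span (JgensQ n k d)) (p : MvPolynomial (Fin n ⊕ Fin d) ℚ)) ∧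
    Submodule.span ℚ
      (⇑(Ideal.Quotient.mk (Ideal.span (JgensQ n k d))) '' Aset n k d) = ⊤ ∧
    Module.finrank ℚ (MvPolynomial (Fin n ⊕ Fin d) ℚ ⧸ Ideal.span (JgensQ n k d)) =
      Nat.factorial k * Nat.factorial d / Nat.factorial (k - d) * stirling2 n d := by
  have hli := vm_li (n := n) hk (hk.trans hn)
  have hsp := vm_span (n := n) hk (hk.trans hn)
  refine ⟨?_, ?_, ?_⟩
  · rw [Aset_eq n k d hd hk]
    have hinj : Function.Injective (vm ℚ n k d) := fun p q hpq => hli.injective (by simp only [hpq])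
    rw [← linearIndependent_equiv (Equiv.ofInjective _ hinj)]
    exact hli
  · rw [Aset_eq n k d hd hk, ← Set.range_comp]
    exact hsp
  · rw [Module.finrank_eq_card_basis (Module.Basis.mk hli hsp.ge), card_Idx n k d hd hk]
end

section
/- Let d ≥ 1, let R be a commutative ℚ-algebra carrying an action of the symmetric group S_d by ℚ-algebra automorphisms, let R^{S_d} ⊆ R be the invariant subalgebra, and let S ⊆ R^{S_d} be a set of S_d-invariant elements. Then the intersection with R^{S_d} of the ideal of R generated by S equals the ideal of R^{S_d} generated by S. -/
open MvPolynomial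

/-- The subalgebra of invariants of an action of a group `G` on a commutative
`ℚ`-algebra `R` by `ℚ`-algebra automorphisms. -/
noncomputable def fixedSubalgebra {R : Type*} [CommRing R] [Algebra ℚ R] {G : Type*}
    [Group G] (ρ : G →* (R ≃ₐ[ℚ] R)) : Subalgebra ℚ R where
  carrier := {x | ∀ g : G, ρ g x = x}
  mul_mem' := fun ha hb g => by rw [map_mul, ha g, hb g]
  add_mem' := fun ha hb g => by rw [map_add, ha g, hb g]
  one_mem' := fun g => by rw [map_one]
  zero_mem' := fun g => by rw [map_zero]
  algebraMap_mem' := fun r g => by rw [AlgEquiv.commutes]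

/-- Let `R` be a commutative `ℚ`-algebra carrying an action of `S_d` by
`ℚ`-algebra automorphisms and let `S` be a set of `S_d`-invariant elements. Then the
intersection with `R^{S_d}` of the ideal of `R` generated by `S` equals the ideal of
`R^{S_d}` generated by `S`. -/
theorem span_inter_invariants_eq_span (d : ℕ) (hd : 1 ≤ d) {R : Type*} [CommRing R]
    [Algebra ℚ R] (ρ : Equiv.Perm (Fin d) →* (R ≃ₐ[ℚ] R)) (S : Set R)
    (hS : S ⊆ (fixedSubalgebra ρ : Set R)) :
    Ideal.comap (fixedSubalgebra ρ).val (Ideal.span S) =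
      Ideal.span (Subtype.val ⁻¹' S : Set ↥(fixedSubalgebra ρ)) := by
  have hinv : ∀ a : R, (∑ g, ρ g a) ∈ fixedSubalgebra ρ := by
    intro a h
    rw [map_sum]
    refine Fintype.sum_equiv (Equiv.mulLeft h) _ _ ?_
    intro g
    simp [map_mul]
  have key : ∀ x ∈ Ideal.span S, ∀ a : R,
      ∃ y ∈ Ideal.span (Subtype.val ⁻¹' S : Set ↥(fixedSubalgebra ρ)),
        (y : R) = ∑ g, ρ g (a * x) := by
    intro x hx
    induction hx using Submodule.span_induction with
    | mem s hs =>
      intro a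
      refine ⟨⟨∑ g, ρ g a, hinv a⟩ * ⟨s, hS hs⟩,
        Ideal.mul_mem_left _ _ (Ideal.subset_span hs), ?_⟩
      have h1 : ∀ g, ρ g s = s := hS hs
      simp [Finset.sum_mul, h1]
    | zero => exact fun a => ⟨0, Ideal.zero_mem _, by simp⟩
    | add x y _ _ hx hy =>
      intro a
      obtain ⟨u, hu, hu'⟩ := hx a
      obtain ⟨v, hv, hv'⟩ := hy a
      exact ⟨u + v, Ideal.add_mem _ hu hv, by
        simp [hu', hv', mul_add, Finset.sum_add_distrib]⟩
    | smul b x _ hx =>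
      intro a
      obtain ⟨u, hu, hu'⟩ := hx (a * b)
      exact ⟨u, hu, by rw [hu', smul_eq_mul, mul_assoc]⟩
  apply le_antisymm
  · intro x hx
    obtain ⟨y, hy, hy'⟩ := key x.1 hx 1
    have hfix : ∀ g, ρ g x.1 = x.1 := x.2
    have hc : ((Fintype.card (Equiv.Perm (Fin d)) : ℕ) : ℚ) ≠ 0 :=
      Nat.cast_ne_zero.mpr Fintype.card_ne_zero
    have hyx : y = ((Fintype.card (Equiv.Perm (Fin d)) : ℕ) : ℚ) • x := by
      apply Subtype.ext
      rw [hy']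
      simp only [one_mul, hfix, Finset.sum_const, Finset.card_univ]
      rw [Nat.cast_smul_eq_nsmul]
      rfl
    have hxy : x = ((Fintype.card (Equiv.Perm (Fin d)) : ℕ) : ℚ)⁻¹ • y := by
      rw [hyx, smul_smul, inv_mul_cancel₀ hc, one_smul]
    rw [hxy, Algebra.smul_def]
    exact Ideal.mul_mem_left _ _ hy
  · rw [Ideal.span_le]
    intro x hx
    exact Ideal.subset_span hx
end

section
/- For integers n ≥ k ≥ d ≥ 1, the quotient ℚ[x_1,…,x_n,y_1,…,y_d]^{S_d}/(J_{n,k,d}^ℚ ∩ ℚ[x_1,…,x_n,y_1,…,y_d]^{S_d}) has ℚ-dimension (k!/(k−d)!)·Stir(n,d), where S_d acts by permuting the variables y_1,…,y_d. -/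
open MvPolynomial

/-- The permutation of the variable index set `Fin n ⊕ Fin d` induced by a permutation
of the y-indices. -/
def permY (n d : ℕ) (g : Equiv.Perm (Fin d)) : (Fin n ⊕ Fin d) ≃ (Fin n ⊕ Fin d) :=
  Equiv.sumCongr (Equiv.refl (Fin n)) g

/-- The subalgebra of `S_d`-invariants of `ℚ[x_1,…,x_n,y_1,…,y_d]`, where `S_d` permutes
the variables `y_1,…,y_d` and fixes the x-variables. -/
noncomputable def invQ2 (n d : ℕ) : Subalgebra ℚ (MvPolynomial (Fin n ⊕ Fin d) ℚ) where
  carrier := {f | ∀ g : Equiv.Perm (Fin d), rename (⇑(permY n d g)) f = f}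
  mul_mem' := fun ha hb g => by rw [map_mul, ha g, hb g]
  add_mem' := fun ha hb g => by rw [map_add, ha g, hb g]
  one_mem' := fun g => by rw [map_one]
  zero_mem' := fun g => by rw [map_zero]
  algebraMap_mem' := fun r g => by rw [MvPolynomial.algebraMap_eq, rename_C]


/-- `M` is generated over `S` by `N` elements. -/
def GenBy (S M : Type) [CommRing S] [AddCommGroup M] [Module S M] (N : ℕ) : Prop :=
  ∃ v : Fin N → M, ∀ m : M, ∃ c : Fin N → S, ∑ i, c i • v i = m

theorem genBy_of_fintype {S M ι : Type} [CommRing S] [AddCommGroup M] [Module S M] [Fintype ι]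
    (v : ι → M) (h : ∀ m : M, ∃ c : ι → S, ∑ i, c i • v i = m) {N : ℕ}
    (hN : Fintype.card ι = N) : GenBy S M N := by
  subst hN
  let e := Fintype.equivFin ι
  refine ⟨v ∘ e.symm, fun m => ?_⟩
  obtain ⟨c, hc⟩ := h m
  refine ⟨c ∘ e.symm, ?_⟩
  rw [← hc]
  exact Equiv.sum_comp e.symm (fun i => c i • v i)

theorem genBy_of_subsingleton {S M : Type} [CommRing S] [AddCommGroup M] [Module S M]
    [Subsingleton M] (N : ℕ) : GenBy S M N :=
  ⟨0, fun _ => ⟨0, Subsingleton.elim _ _⟩⟩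

theorem genBy_trans {S T M : Type} [CommRing S] [CommRing T] [Algebra S T] [AddCommGroup M]
    [Module S M] [Module T M] [IsScalarTower S T M] {a b : ℕ} (h1 : GenBy S T a)
    (h2 : GenBy T M b) : GenBy S M (a * b) := by
  obtain ⟨v, hv⟩ := h1
  obtain ⟨w, hw⟩ := h2
  refine genBy_of_fintype (ι := Fin a × Fin b) (fun p => v p.1 • w p.2) (fun m => ?_) (by simp)
  obtain ⟨c, rfl⟩ := hw m
  choose e he using fun i => hv (c i)
  refine ⟨fun p => e p.2 p.1, ?_⟩
  rw [Fintype.sum_prod_type_right]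
  refine Finset.sum_congr rfl fun j _ => ?_
  conv_rhs => rw [← he j]
  rw [Finset.sum_smul]
  simp [smul_assoc]

theorem genBy_split {S A : Type} [CommRing S] [CommRing A] [Algebra S A] (γ : A) {a b : ℕ}
    (h1 : GenBy S (A ⧸ Ideal.span {γ}) a) (h2 : GenBy S (A ⧸ Ideal.torsionOf A A γ) b) :
    GenBy S A (a + b) := by
  obtain ⟨v, hv⟩ := h1
  obtain ⟨w, hw⟩ := h2
  choose v' hv' using fun i => Ideal.Quotient.mk_surjective (v i)
  choose w' hw' using fun i => Ideal.Quotient.mk_surjective (w i)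
  refine genBy_of_fintype (ι := Fin a ⊕ Fin b) (Sum.elim v' (fun i => γ * w' i)) (fun m => ?_)
    (by simp)
  obtain ⟨c, hc⟩ := hv (Ideal.Quotient.mk _ m)
  have h3 : m - ∑ i, c i • v' i ∈ Ideal.span {γ} := by
    rw [← Ideal.Quotient.eq, ← hc]
    simp only [← hv', map_sum, ← Ideal.Quotient.mkₐ_eq_mk S, map_smul]
  obtain ⟨q, hq⟩ := Ideal.mem_span_singleton'.1 h3
  obtain ⟨e, he⟩ := hw (Ideal.Quotient.mk _ q)
  have h4 : q - ∑ i, e i • w' i ∈ Ideal.torsionOf A A γ := by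
    rw [← Ideal.Quotient.eq, ← he]
    simp only [← hw', map_sum, ← Ideal.Quotient.mkₐ_eq_mk S, map_smul]
  rw [Ideal.mem_torsionOf_iff, smul_eq_mul, sub_mul, sub_eq_zero, hq] at h4
  refine ⟨Sum.elim c e, ?_⟩
  simp only [Fintype.sum_sum_type, Sum.elim_inl, Sum.elim_inr]
  rw [sub_eq_iff_eq_add] at h4
  rw [h4, add_comm, Finset.sum_mul]
  congr 1
  refine Finset.sum_congr rfl fun i _ => ?_
  rw [smul_mul_assoc, mul_comm]

theorem genBy_adjoin {S A : Type} [CommRing S] [CommRing A] [Algebra S A] (x : A)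
    (g : Polynomial S) (hg : g.Monic) (hx : Polynomial.aeval x g = 0) {N : ℕ}
    (hN : g.natDegree = N) :
    GenBy S (Algebra.adjoin S {x}) N := by
  rcases subsingleton_or_nontrivial S with hS | hS
  · have : Subsingleton (Algebra.adjoin S {x}) := Module.subsingleton S _
    exact genBy_of_subsingleton _
  subst hN
  refine ⟨fun i => ⟨x, Algebra.self_mem_adjoin_singleton S x⟩ ^ (i : ℕ), fun m => ?_⟩
  obtain ⟨m, hm⟩ := m
  have hm' := hm
  rw [Algebra.adjoin_singleton_eq_range_aeval] at hm'
  obtain ⟨p, rfl⟩ := hm'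
  refine ⟨fun i => (p %ₘ g).coeff i, ?_⟩
  apply Subtype.ext
  simp only [AddSubmonoidClass.coe_finsetSum, SetLike.val_smul, SubmonoidClass.coe_pow]
  have : Polynomial.aeval x p = Polynomial.aeval x (p %ₘ g) := by
    conv_lhs => rw [← Polynomial.modByMonic_add_div p g]
    simp [hx]
  change _ = Polynomial.aeval x p
  rw [this]
  by_cases h1 : g = 1
  · subst h1
    have : Subsingleton A := by
      rw [map_one] at hx
      exact subsingleton_of_zero_eq_one hx.symm
    exact Subsingleton.elim _ _
  rw [Polynomial.aeval_eq_sum_range' (Polynomial.natDegree_modByMonic_lt p hg h1)]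
  exact Fin.sum_univ_eq_sum_range (fun i => (p %ₘ g).coeff i • x ^ i) _

theorem trick {A : Type} [CommRing A] (g P : Polynomial A) (hg : g.Monic) (a : A)
    (h : g ∣ (Polynomial.X - Polynomial.C a) * P) :
    g.map (Ideal.Quotient.mk (Ideal.torsionOf A A (g.eval a))) ∣
      P.map (Ideal.Quotient.mk (Ideal.torsionOf A A (g.eval a))) := by
  nontriviality A
  set γ := g.eval a with hγ
  have e1 : Polynomial.C γ * (P %ₘ g) = 0 := by
    have h2 : g ∣ Polynomial.C γ * (P %ₘ g) := by
      have h3 : Polynomial.C γ = g - (Polynomial.X - Polynomial.C a) *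
          (g /ₘ (Polynomial.X - Polynomial.C a)) := by
        have := Polynomial.modByMonic_add_div g (Polynomial.X - Polynomial.C a)
        rw [Polynomial.modByMonic_X_sub_C_eq_C_eval] at this
        linear_combination this
      have h4 : P %ₘ g = P - g * (P /ₘ g) := by
        linear_combination Polynomial.modByMonic_add_div P g
      obtain ⟨q, hq⟩ := h
      refine ⟨(P %ₘ g) - (g /ₘ (Polynomial.X - Polynomial.C a)) * q +
        (Polynomial.X - Polynomial.C a) * (g /ₘ (Polynomial.X - Polynomial.C a)) * (P /ₘ g), ?_⟩
      rw [h3, sub_mul, h4]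
      linear_combination (-(g /ₘ (Polynomial.X - Polynomial.C a))) * hq
    rw [← Polynomial.modByMonic_eq_zero_iff_dvd hg] at h2
    rw [← h2, eq_comm, Polynomial.modByMonic_eq_self_iff hg]
    refine lt_of_le_of_lt ?_ (Polynomial.degree_modByMonic_lt P hg)
    rw [← Polynomial.smul_eq_C_mul]
    exact Polynomial.degree_smul_le _ _
  have e2 : (P %ₘ g).map (Ideal.Quotient.mk (Ideal.torsionOf A A γ)) = 0 := by
    ext i
    rw [Polynomial.coeff_map, Polynomial.coeff_zero, Ideal.Quotient.eq_zero_iff_mem,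
      Ideal.mem_torsionOf_iff, smul_eq_mul, mul_comm, ← Polynomial.coeff_C_mul, e1,
      Polynomial.coeff_zero]
  have e3 := congrArg (Polynomial.map (Ideal.Quotient.mk (Ideal.torsionOf A A γ)))
    (Polynomial.modByMonic_add_div P g)
  rw [Polynomial.map_add, e2, zero_add, Polynomial.map_mul] at e3
  exact Dvd.intro _ e3

theorem adjoin_mk_top {S A : Type} [CommRing S] [CommRing A] [Algebra S A] (I : Ideal A)
    (s : Set A) (hs : Algebra.adjoin S s = ⊤) :
    Algebra.adjoin S ((Ideal.Quotient.mk I) '' s) = ⊤ := by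
  have := AlgHom.map_adjoin (Ideal.Quotient.mkₐ S I) s
  rw [hs, Algebra.map_top] at this
  rw [← Ideal.Quotient.mkₐ_eq_mk S, ← this]
  rw [AlgHom.range_eq_top]
  exact Ideal.Quotient.mkₐ_surjective S I

theorem genBy_one {S A : Type} [CommRing S] [CommRing A] [Algebra S A] (s : Set A)
    (hs : Algebra.adjoin S s = ⊤) (h : ∀ a ∈ s, a ∈ (⊥ : Subalgebra S A)) : GenBy S A 1 := by
  refine ⟨fun _ => 1, fun m => ?_⟩
  have : Algebra.adjoin S s ≤ ⊥ := Algebra.adjoin_le h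
  rw [hs] at this
  obtain ⟨c, hc⟩ := Algebra.mem_bot.1 (this (Algebra.mem_top (x := m)))
  refine ⟨fun _ => c, ?_⟩
  simp [← hc, Algebra.algebraMap_eq_smul_one]

theorem genBy_grass {S : Type} [CommRing S] (k : ℕ) : ∀ (d : ℕ) (A : Type) [CommRing A]
    [Algebra S A] (f : Polynomial A), f.Monic → f.natDegree = d → f ∣ Polynomial.X ^ k →
    Algebra.adjoin S (Set.range f.coeff) = ⊤ → GenBy S A (k.choose d) := by
  have hzero : ∀ (A : Type) [CommRing A] [Algebra S A] (f : Polynomial A), f.Monic →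
      f.natDegree = 0 → Algebra.adjoin S (Set.range f.coeff) = ⊤ → GenBy S A 1 := by
    intro A _ _ f hf hd hs
    have h1 : f = 1 := Polynomial.eq_one_of_monic_natDegree_zero hf hd
    subst h1
    refine genBy_one _ hs ?_
    rintro _ ⟨i, rfl⟩
    rw [Polynomial.coeff_one]
    split_ifs
    · exact one_mem _
    · exact zero_mem _
  induction k with
  | zero =>
    intro d A _ _ f hf hd hdvd hs
    cases d with
    | zero => simpa using hzero A f hf hd hs
    | succ d =>
      have : Subsingleton A := by
        by_contra hA
        rw [not_subsingleton_iff_nontrivial] at hA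
        rw [pow_zero] at hdvd
        have := hf.eq_one_of_isUnit (isUnit_of_dvd_one hdvd)
        rw [this] at hd
        simp at hd
      exact genBy_of_subsingleton _
  | succ k ih =>
    intro d A _ _ f hf hd hdvd hs
    cases d with
    | zero => simpa using hzero A f hf hd hs
    | succ d =>
      rw [Nat.choose_succ_succ]
      apply genBy_split (f.eval 0)
      · rcases subsingleton_or_nontrivial (A ⧸ Ideal.span {f.eval 0}) with hA | hA
        · exact genBy_of_subsingleton _
        set π := Ideal.Quotient.mk (Ideal.span {f.eval 0}) with hπ
        have hroot : (f.map π).coeff 0 = 0 := by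
          rw [Polynomial.coeff_map, Ideal.Quotient.eq_zero_iff_mem, Polynomial.coeff_zero_eq_eval_zero]
          exact Ideal.mem_span_singleton_self _
        have hX : f.map π = Polynomial.X * (f.map π).divX := by
          conv_lhs => rw [← Polynomial.X_mul_divX_add (f.map π), hroot]
          simp
        have hm : (f.map π).Monic := hf.map π
        have hm' : (f.map π).divX.Monic := by
          rw [hX] at hm
          exact Polynomial.Monic.of_mul_monic_left Polynomial.monic_X hm
        refine ih d _ (f.map π).divX hm' ?_ ?_ ?_
        · rw [Polynomial.natDegree_divX_eq_natDegree_tsub_one, hf.natDegree_map, hd]; rfl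
        · have := Polynomial.map_dvd π hdvd
          rw [hX, Polynomial.map_pow, Polynomial.map_X, pow_succ'] at this
          obtain ⟨q, hq⟩ := this
          refine ⟨q, ?_⟩
          rw [mul_assoc] at hq
          exact Polynomial.monic_X.isRegular.left hq
        · have := adjoin_mk_top (Ideal.span {f.eval 0}) _ hs
          rw [eq_top_iff, ← this]
          apply Algebra.adjoin_le
          rintro _ ⟨_, ⟨i, rfl⟩, rfl⟩
          cases i with
          | zero =>
            have h0 := hroot
            rw [Polynomial.coeff_map] at h0
            change π (f.coeff 0) ∈ _
            rw [h0]
            exact zero_mem _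
          | succ i =>
            apply Algebra.subset_adjoin
            refine ⟨i, ?_⟩
            rw [Polynomial.coeff_divX, Polynomial.coeff_map]
      · rcases subsingleton_or_nontrivial (A ⧸ Ideal.torsionOf A A (f.eval 0)) with hA | hA
        · exact genBy_of_subsingleton _
        refine ih (d + 1) _ (f.map (Ideal.Quotient.mk _)) (hf.map _) ?_ ?_ ?_
        · rw [hf.natDegree_map, hd]
        · have := trick f (Polynomial.X ^ k) hf 0 (by simpa [pow_succ'] using hdvd)
          simpa using this
        · have := adjoin_mk_top (Ideal.torsionOf A A (f.eval 0)) _ hs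
          rw [← this, ← Set.range_comp]
          congr 2
          ext i
          simp

theorem stir_rec (n d : ℕ) :
    stirling2 (n + 1) (d + 1) = (d + 1) * stirling2 n (d + 1) + stirling2 n d := by
  rw [stirling2]

/-- Number of maps from an `n`-set to a `(b+c)`-set which cover a given `b`-subset. -/
def covN (n : ℕ) : ℕ → ℕ → ℕ
  | b, 0 => b.factorial * stirling2 n b
  | b, c + 1 => covN n b c + covN n (b + 1) c

theorem covN_zero_zero (c : ℕ) : ∀ b, covN 0 b c = if b = 0 then 1 else 0 := by
  induction c with
  | zero => intro b; cases b <;> simp [covN, stirling2]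
  | succ c ih => intro b; cases b <;> simp [covN, ih]

theorem covN_succ_zero (n c : ℕ) : covN (n + 1) 0 c = c * covN n 0 c ∧
    ∀ b, covN (n + 1) (b + 1) c = (b + 1) * covN n b (c + 1) + c * covN n (b + 1) c := by
  induction c with
  | zero =>
    constructor
    · simp [covN, stirling2]
    · intro b
      simp only [covN, stir_rec, Nat.factorial_succ]
      ring
  | succ c ih =>
    obtain ⟨h0, h1⟩ := ih
    constructor
    · rw [covN, h0, h1]; simp only [covN]; ring
    · intro b
      rw [covN, h1, h1]; simp only [covN]; ring

theorem genBy_cover (n : ℕ) : ∀ (b c : ℕ) (S A : Type) [CommRing S] [CommRing A]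
    [Algebra S A] (g h : Polynomial S) (x : Fin n → A), g.Monic → h.Monic → g.natDegree = b →
    h.natDegree = c → (∀ i, Polynomial.aeval (x i) (g * h) = 0) →
    g.map (algebraMap S A) ∣ ∏ i, (Polynomial.X - Polynomial.C (x i)) →
    Algebra.adjoin S (Set.range x) = ⊤ → GenBy S A (covN n b c) := by
  induction n with
  | zero =>
    intro b c S A _ _ _ g h x hg hh hb hc hx hdvd hs
    rcases subsingleton_or_nontrivial A with hA | hA
    · exact genBy_of_subsingleton _
    have : Nontrivial S := (algebraMap S A).domain_nontrivial
    rw [covN_zero_zero]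
    rw [Finset.univ_eq_empty, Finset.prod_empty] at hdvd
    have h1 := (hg.map (algebraMap S A)).eq_one_of_isUnit (isUnit_of_dvd_one hdvd)
    have h2 : b = 0 := by
      rw [← hb, ← hg.natDegree_map (algebraMap S A), h1, Polynomial.natDegree_one]
    rw [if_pos h2]
    refine genBy_one _ hs ?_
    rintro _ ⟨i, rfl⟩
    exact i.elim0
  | succ n ih =>
    intro b c S A _ _ _ g h x hg hh hb hc hx hdvd hs
    set γ := Polynomial.aeval (x 0) g with hγ
    have hγ' : (g.map (algebraMap S A)).eval (x 0) = γ := by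
      rw [hγ, Polynomial.eval_map_algebraMap]
    rw [Fin.prod_univ_succ] at hdvd
    have hr : Set.range x = {x 0} ∪ Set.range (fun i : Fin n => x i.succ) := by
      ext a
      simp [Fin.exists_fin_succ, eq_comm]
    -- generation after passing to a quotient
    have hgen : ∀ I : Ideal A, Algebra.adjoin
        (Algebra.adjoin S {Ideal.Quotient.mk I (x 0)})
        (Set.range (fun i : Fin n => Ideal.Quotient.mk I (x i.succ))) = ⊤ := by
      intro I
      have h1 := adjoin_mk_top I _ hs
      rw [hr, Set.image_union, Set.image_singleton, ← Set.range_comp,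
        Algebra.adjoin_union_eq_adjoin_adjoin] at h1
      rw [eq_top_iff]
      intro y _
      have h2 : y ∈ (⊤ : Subalgebra S (A ⧸ I)) := Algebra.mem_top
      rw [← h1] at h2
      exact h2
    have hmk : ∀ (I : Ideal A) (p : Polynomial S) (y : A),
        Polynomial.aeval (Ideal.Quotient.mk I y) p = Ideal.Quotient.mk I (Polynomial.aeval y p) := by
      intro I p y
      rw [← Ideal.Quotient.mkₐ_eq_mk S, Polynomial.aeval_algHom_apply]
    have hsecond : GenBy S (A ⧸ Ideal.torsionOf A A γ) (c * covN n b c) := by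
      set I := Ideal.torsionOf A A γ with hI
      rcases subsingleton_or_nontrivial (A ⧸ I) with hA | hA
      · exact genBy_of_subsingleton _
      have hroot : Polynomial.aeval (Ideal.Quotient.mk I (x 0)) h = 0 := by
        rw [hmk, Ideal.Quotient.eq_zero_iff_mem, Ideal.mem_torsionOf_iff, smul_eq_mul, hγ, mul_comm,
          ← map_mul, hx]
      refine genBy_trans (genBy_adjoin _ h hh hroot hc) ?_
      set T := Algebra.adjoin S {Ideal.Quotient.mk I (x 0)} with hT
      refine ih b c T (A ⧸ I) (g.map (algebraMap S T)) (h.map (algebraMap S T)) _ (hg.map _)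
        (hh.map _) ?_ ?_ ?_ ?_ (hgen I)
      · rw [hg.natDegree_map, hb]
      · rw [hh.natDegree_map, hc]
      · intro i
        rw [← Polynomial.map_mul, Polynomial.aeval_map_algebraMap, hmk, hx, map_zero]
      · have := trick _ _ (hg.map (algebraMap S A)) _ hdvd
        rw [hγ', Polynomial.map_map, Polynomial.map_prod] at this
        rw [Polynomial.map_map, ← IsScalarTower.algebraMap_eq]
        simpa using this
    have hfirst : ∀ b', b = b' + 1 →
        GenBy S (A ⧸ Ideal.span {γ}) ((b' + 1) * covN n b' (c + 1)) := by
      rintro b' rfl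
      set I := Ideal.span {γ} with hI
      rcases subsingleton_or_nontrivial (A ⧸ I) with hA | hA
      · exact genBy_of_subsingleton _
      have hroot : Polynomial.aeval (Ideal.Quotient.mk I (x 0)) g = 0 := by
        rw [hmk, Ideal.Quotient.eq_zero_iff_mem]
        exact Ideal.mem_span_singleton_self _
      refine genBy_trans (genBy_adjoin _ g hg hroot hb) ?_
      set T := Algebra.adjoin S {Ideal.Quotient.mk I (x 0)} with hT
      let α : T := ⟨Ideal.Quotient.mk I (x 0), Algebra.self_mem_adjoin_singleton S _⟩
      set G := g.map (algebraMap S T) with hG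
      have hGm : G.Monic := hg.map _
      have hα : G.IsRoot α := by
        rw [Polynomial.IsRoot, hG, Polynomial.eval_map_algebraMap]
        apply Subtype.ext
        rw [← Subalgebra.coe_val, ← Polynomial.aeval_algHom_apply]
        exact hroot
      have hfac := Polynomial.mul_divByMonic_eq_iff_isRoot.2 hα
      set G1 := G /ₘ (Polynomial.X - Polynomial.C α) with hG1
      have hG1m : G1.Monic := by
        rw [← hfac] at hGm
        exact Polynomial.Monic.of_mul_monic_left (Polynomial.monic_X_sub_C α) hGm
      have hmap : ∀ p : Polynomial S, p.map ((Ideal.Quotient.mk I).comp (algebraMap S A)) =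
          (p.map (algebraMap S T)).map (algebraMap T (A ⧸ I)) := by
        intro p
        rw [Polynomial.map_map, ← IsScalarTower.algebraMap_eq]
        rfl
      refine ih b' (c + 1) T (A ⧸ I) G1
        ((Polynomial.X - Polynomial.C α) * h.map (algebraMap S T)) _ hG1m
        ((Polynomial.monic_X_sub_C α).mul (hh.map _)) ?_ ?_ ?_ ?_ (hgen I)
      · have h1 : G.natDegree = b' + 1 := by rw [hG, hg.natDegree_map, hb]
        rw [← hfac, (Polynomial.monic_X_sub_C α).natDegree_mul hG1m,
          Polynomial.natDegree_X_sub_C] at h1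
        omega
      · rw [(Polynomial.monic_X_sub_C α).natDegree_mul (hh.map _), Polynomial.natDegree_X_sub_C,
          hh.natDegree_map, hc, add_comm]
      · intro i
        have : G1 * ((Polynomial.X - Polynomial.C α) * h.map (algebraMap S T)) =
            (g * h).map (algebraMap S T) := by
          rw [Polynomial.map_mul, ← hG, ← hfac]; ring
        rw [this, Polynomial.aeval_map_algebraMap, hmk, hx, map_zero]
      · have := Polynomial.map_dvd (Ideal.Quotient.mk I) hdvd
        rw [Polynomial.map_map, Polynomial.map_mul, Polynomial.map_prod, hmap, ← hG, ← hfac,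
          Polynomial.map_mul] at this
        obtain ⟨q, hq⟩ := this
        refine ⟨q, ?_⟩
        simp only [Polynomial.map_sub, Polynomial.map_X, Polynomial.map_C] at hq
        rw [mul_assoc] at hq
        exact (Polynomial.monic_X_sub_C _).isRegular.left hq
    cases b with
    | zero =>
      rw [(covN_succ_zero n c).1, ← Nat.zero_add (c * covN n 0 c)]
      refine genBy_split γ ?_ hsecond
      have h1 : g = 1 := Polynomial.eq_one_of_monic_natDegree_zero hg hb
      have : γ = 1 := by rw [hγ, h1, map_one]
      rw [this, Ideal.span_singleton_one]
      have : Subsingleton (A ⧸ (⊤ : Ideal A)) := Ideal.Quotient.subsingleton_iff.2 rfl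
      exact genBy_of_subsingleton _
    | succ b =>
      rw [(covN_succ_zero n c).2]
      exact genBy_split γ (hfirst b rfl) hsecond

theorem coeff_prod_one_sub {σ R : Type} [Fintype σ] [CommRing R] (a : ℕ) :
    (∏ i : σ, (1 - Polynomial.C (X i : MvPolynomial σ R) * Polynomial.X)).coeff a =
      (-1) ^ a * esymm σ R a := by
  classical
  simp only [sub_eq_add_neg]
  rw [Finset.prod_one_add, Polynomial.finsetSum_coeff]
  have : ∀ t : Finset σ, (∏ i ∈ t, -(Polynomial.C (X i : MvPolynomial σ R) * Polynomial.X)).coeff a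
      = if t.card = a then (-1) ^ a * ∏ i ∈ t, X i else 0 := by
    intro t
    have h1 : ∀ i ∈ t, -(Polynomial.C (X i : MvPolynomial σ R) * Polynomial.X) =
        Polynomial.C ((-1) * X i) * Polynomial.X := by
      intro i _
      rw [Polynomial.C_mul, Polynomial.C_neg, Polynomial.C_1]
      ring
    rw [Finset.prod_congr rfl h1, Finset.prod_mul_distrib, Finset.prod_const, ← map_prod,
      Finset.prod_mul_distrib, Finset.prod_const, Polynomial.coeff_C_mul_X_pow]
    by_cases h : a = t.card
    · subst h; simp
    · rw [if_neg h, if_neg (Ne.symm h)]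
  rw [Finset.sum_congr rfl fun t _ => this t, ← Finset.sum_filter, esymm, Finset.mul_sum,
    Finset.powersetCard_eq_filter]

theorem mk_pow_mul {R : Type} [CommRing R] (a : R) :
    (1 - PowerSeries.C a * PowerSeries.X) * PowerSeries.mk (fun i => a ^ i) = 1 := by
  ext r
  rw [sub_mul, one_mul, mul_assoc, map_sub, PowerSeries.coeff_C_mul, PowerSeries.coeff_mk]
  cases r with
  | zero => simp
  | succ r =>
    rw [PowerSeries.coeff_succ_X_mul, PowerSeries.coeff_mk, PowerSeries.coeff_one]
    simp [pow_succ']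

theorem mk_hsymm {σ R : Type} [Fintype σ] [DecidableEq σ] [CommRing R] :
    PowerSeries.mk (hsymm σ R) = ∏ i : σ, PowerSeries.mk (fun j => (X i : MvPolynomial σ R) ^ j) := by
  ext1 r
  rw [PowerSeries.coeff_prod, PowerSeries.coeff_mk, hsymm]
  simp only [PowerSeries.coeff_mk]
  refine Finset.sum_bij' (fun s _ => Multiset.toFinsupp s.1)
    (fun l hl => ⟨Finsupp.toMultiset l, ?_⟩) ?_ ?_ ?_ ?_ ?_
  · rw [Finset.mem_finsuppAntidiag] at hl
    rw [Finsupp.card_toMultiset, Finsupp.sum_fintype _ _ (fun _ => rfl)]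
    exact hl.1
  · intro s _
    rw [Finset.mem_finsuppAntidiag]
    refine ⟨?_, Finset.subset_univ _⟩
    change ∑ i, Multiset.count i s.1 = r
    rw [Multiset.sum_count_eq_card (fun a _ => Finset.mem_univ a)]
    exact s.2
  · intro l _; exact Finset.mem_univ _
  · intro s _; apply Subtype.ext; simp
  · intro l _; simp
  · intro s _
    simp only [Multiset.toFinsupp_apply]
    rw [Finset.prod_multiset_map_count]
    refine Finset.prod_subset (Finset.subset_univ _) fun x _ hx => ?_
    rw [Multiset.mem_toFinset] at hx
    rw [Multiset.count_eq_zero_of_notMem hx, pow_zero]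

theorem prod_mul_mk_hsymm {σ R : Type} [Fintype σ] [DecidableEq σ] [CommRing R] :
    ((∏ i : σ, (1 - Polynomial.C (X i : MvPolynomial σ R) * Polynomial.X) : Polynomial _) :
      PowerSeries (MvPolynomial σ R)) * PowerSeries.mk (hsymm σ R) = 1 := by
  rw [mk_hsymm]
  have : ((∏ i : σ, (1 - Polynomial.C (X i : MvPolynomial σ R) * Polynomial.X) : Polynomial _) :
      PowerSeries (MvPolynomial σ R)) =
      ∏ i : σ, (1 - PowerSeries.C (X i : MvPolynomial σ R) * PowerSeries.X) := by
    rw [← Polynomial.coeToPowerSeries.ringHom_apply, map_prod]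
    simp [Polynomial.coeToPowerSeries.ringHom_apply]
  rw [this, ← Finset.prod_mul_distrib]
  exact Finset.prod_eq_one fun i _ => mk_pow_mul _

/-- `∏_j (1 - y_j u)` -/
noncomputable def EP (n d : ℕ) : Polynomial (MvPolynomial (Fin n ⊕ Fin d) ℚ) :=
  ∏ j : Fin d, (1 - Polynomial.C (X (Sum.inr j)) * Polynomial.X)

/-- `∏_i (1 - x_i u)` -/
noncomputable def FP (n d : ℕ) : Polynomial (MvPolynomial (Fin n ⊕ Fin d) ℚ) :=
  ∏ i : Fin n, (1 - Polynomial.C (X (Sum.inl i)) * Polynomial.X)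

/-- `∑ h_r u^r` -/
noncomputable def HP (n d : ℕ) : PowerSeries (MvPolynomial (Fin n ⊕ Fin d) ℚ) :=
  PowerSeries.mk (hY n d)

theorem EP_eq_map (n d : ℕ) : EP n d = (∏ i : Fin d, (1 - Polynomial.C
    (X i : MvPolynomial (Fin d) ℚ) * Polynomial.X)).map
      (rename (Sum.inr : Fin d → Fin n ⊕ Fin d) : _ →ₐ[ℚ] _).toRingHom := by
  rw [Polynomial.map_prod, EP]
  simp

theorem FP_eq_map (n d : ℕ) : FP n d = (∏ i : Fin n, (1 - Polynomial.C
    (X i : MvPolynomial (Fin n) ℚ) * Polynomial.X)).map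
      (rename (Sum.inl : Fin n → Fin n ⊕ Fin d) : _ →ₐ[ℚ] _).toRingHom := by
  rw [Polynomial.map_prod, FP]
  simp

theorem EP_coeff (n d a : ℕ) : (EP n d).coeff a = (-1) ^ a * eY n d a := by
  rw [EP_eq_map, Polynomial.coeff_map, coeff_prod_one_sub, eY]
  simp

theorem FP_coeff (n d a : ℕ) : (FP n d).coeff a = (-1) ^ a * eX n d a := by
  rw [FP_eq_map, Polynomial.coeff_map, coeff_prod_one_sub, eX]
  simp

theorem EP_mul_HP (n d : ℕ) :
    (EP n d : PowerSeries (MvPolynomial (Fin n ⊕ Fin d) ℚ)) * HP n d = 1 := by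
  have h := congrArg (PowerSeries.map
    (rename (Sum.inr : Fin d → Fin n ⊕ Fin d) : _ →ₐ[ℚ] _).toRingHom)
    (prod_mul_mk_hsymm (σ := Fin d) (R := ℚ))
  rw [map_mul, map_one, ← Polynomial.polynomial_map_coe, ← EP_eq_map] at h
  rw [← h]
  congr 1

theorem coeff_FP_mul_HP (n d r : ℕ) :
    PowerSeries.coeff r ((FP n d : PowerSeries (MvPolynomial (Fin n ⊕ Fin d) ℚ)) * HP n d) =
      (-1) ^ r * genXY n d r := by
  rw [mul_comm, PowerSeries.coeff_mul, Finset.Nat.sum_antidiagonal_eq_sum_range_succ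
    (fun i j => PowerSeries.coeff i (HP n d) *
      PowerSeries.coeff j (FP n d : PowerSeries (MvPolynomial (Fin n ⊕ Fin d) ℚ))), genXY,
    Finset.mul_sum]
  refine Finset.sum_congr rfl fun j hj => ?_
  have hj' : j ≤ r := Nat.lt_succ_iff.1 (Finset.mem_range.1 hj)
  rw [Polynomial.coeff_coe, FP_coeff, HP, PowerSeries.coeff_mk]
  obtain ⟨m, rfl⟩ := Nat.exists_eq_add_of_le hj'
  rw [Nat.add_sub_cancel_left, pow_add]
  have : ((-1 : MvPolynomial (Fin n ⊕ Fin d) ℚ) ^ j) * (-1) ^ j = 1 := by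
    rw [← mul_pow]; simp
  linear_combination (-((-1) ^ m * eX n d m * hY n d j)) * this

theorem reflect_prod_one_sub {ι A : Type} [CommRing A] (s : Finset ι) (y : ι → A) :
    Polynomial.reflect s.card (∏ i ∈ s, (1 - Polynomial.C (y i) * Polynomial.X)) =
      ∏ i ∈ s, (Polynomial.X - Polynomial.C (y i)) := by
  classical
  have hdeg : ∀ a : A, (1 - Polynomial.C a * Polynomial.X).natDegree ≤ 1 := by
    intro a
    compute_degree
  induction s using Finset.induction_on with
  | empty => simp
  | insert i s hi ih =>
    rw [Finset.prod_insert hi, Finset.prod_insert hi, Finset.card_insert_of_notMem hi, add_comm,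
      Polynomial.reflect_mul _ _ (hdeg _), ih]
    · congr 1
      rw [Polynomial.reflect_sub, Polynomial.reflect_C_mul, Polynomial.reflect_one]
      congr 1
      · simp
      · have := Polynomial.reflect_monomial (R := A) 1 1
        rw [pow_one] at this
        rw [this]
        simp
    · refine (Polynomial.natDegree_prod_le _ _).trans ?_
      refine (Finset.sum_le_card_nsmul _ _ 1 fun j _ => hdeg _).trans ?_
      simp

theorem natDegree_prod_one_sub_le {ι A : Type} [CommRing A] (s : Finset ι) (y : ι → A) :
    (∏ i ∈ s, (1 - Polynomial.C (y i) * Polynomial.X)).natDegree ≤ s.card := by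
  refine (Polynomial.natDegree_prod_le _ _).trans ?_
  refine (Finset.sum_le_card_nsmul _ _ 1 fun j _ => ?_).trans (by simp)
  compute_degree

theorem dvd_of_series {A : Type} [CommRing A] {d N : ℕ} (hdN : d ≤ N) (E F : Polynomial A)
    (hE : E.natDegree ≤ d) (H : PowerSeries A) (hEH : (E : PowerSeries A) * H = 1)
    (h : ∀ r, N - d < r → PowerSeries.coeff r ((F : PowerSeries A) * H) = 0) :
    Polynomial.reflect d E ∣ Polynomial.reflect N F := by
  set K := PowerSeries.trunc (N - d + 1) ((F : PowerSeries A) * H) with hK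
  have h1 : (K : PowerSeries A) = F * H := by
    ext r
    rw [Polynomial.coeff_coe, hK, PowerSeries.coeff_trunc]
    split_ifs with hr
    · rfl
    · rw [h r (by omega)]
  have h2 : E * K = F := by
    apply Polynomial.coe_injective A
    rw [Polynomial.coe_mul, h1]
    linear_combination (F : PowerSeries A) * hEH
  have h3 : K.natDegree ≤ N - d := by
    rw [Polynomial.natDegree_le_iff_coeff_eq_zero]
    intro r hr
    rw [hK, PowerSeries.coeff_trunc, if_neg (by omega)]
  rw [← h2, show N = d + (N - d) by omega, Polynomial.reflect_mul _ _ hE h3]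
  exact Dvd.intro _ rfl

theorem upper_abstract {A : Type} [CommRing A] [Algebra ℚ A] (n k d : ℕ) (f : Polynomial A)
    (x : Fin n → A) (hf : f.Monic) (hd : f.natDegree = d) (hk : f ∣ Polynomial.X ^ k)
    (hx : f ∣ ∏ i, (Polynomial.X - Polynomial.C (x i))) (hr : ∀ i, f.eval (x i) = 0)
    (hs : Algebra.adjoin ℚ (Set.range f.coeff ∪ Set.range x) = ⊤) :
    GenBy ℚ A (k.choose d * (d.factorial * stirling2 n d)) := by
  rcases subsingleton_or_nontrivial A with hA | hA
  · exact genBy_of_subsingleton _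
  set T := Algebra.adjoin ℚ (Set.range f.coeff) with hT
  have hl : f ∈ Polynomial.lifts (algebraMap T A) := by
    rw [Polynomial.lifts_iff_coeff_lifts]
    intro i
    exact ⟨⟨f.coeff i, Algebra.subset_adjoin ⟨i, rfl⟩⟩, rfl⟩
  obtain ⟨f1, hf1, hdeg, hm⟩ := Polynomial.lifts_and_natDegree_eq_and_monic hl hf
  have hinj : Function.Injective (algebraMap T A) := Subtype.val_injective
  refine genBy_trans (T := T) ?_ ?_
  · refine genBy_grass k d T f1 hm (hdeg.trans hd) ?_ ?_
    · rw [← Polynomial.map_dvd_map _ hinj hm, hf1]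
      simpa using hk
    · rw [← Algebra.adjoin_adjoin_coe_preimage (R := ℚ) (s := Set.range f.coeff)]
      congr 1
      ext a
      simp only [Set.mem_range, Set.mem_preimage]
      refine exists_congr fun i => ?_
      have h1 : ((f1.coeff i : T) : A) = f.coeff i := by
        have h2 := congrArg (fun q => Polynomial.coeff q i) hf1
        simpa [Polynomial.coeff_map] using h2
      rw [← h1]
      exact ⟨fun h => by rw [h], fun h => Subtype.ext h⟩
  · have := genBy_cover n d 0 T A f1 1 x hm Polynomial.monic_one (hdeg.trans hd) (by simp) ?_ ?_ ?_
    · exact this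
    · intro i
      rw [mul_one, ← Polynomial.eval_map_algebraMap, hf1, hr]
    · rw [hf1]; exact hx
    · rw [Algebra.adjoin_union_eq_adjoin_adjoin] at hs
      rw [eq_top_iff]
      intro y _
      have h2 : y ∈ (⊤ : Subalgebra ℚ A) := Algebra.mem_top
      rw [← hs] at h2
      exact h2

theorem inv_le_adjoin (n d : ℕ) (p : MvPolynomial (Fin n ⊕ Fin d) ℚ) (hp : p ∈ invQ2 n d) :
    p ∈ Algebra.adjoin ℚ (Set.range (fun j : Fin d => eY n d (j + 1)) ∪
      Set.range (fun i : Fin n => (X (Sum.inl i) : MvPolynomial (Fin n ⊕ Fin d) ℚ))) := by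
  set B := Algebra.adjoin ℚ (Set.range (fun j : Fin d => eY n d (j + 1)) ∪
      Set.range (fun i : Fin n => (X (Sum.inl i) : MvPolynomial (Fin n ⊕ Fin d) ℚ))) with hB
  let Φ : MvPolynomial (Fin n ⊕ Fin d) ℚ ≃ₐ[ℚ] MvPolynomial (Fin d) (MvPolynomial (Fin n) ℚ) :=
    (renameEquiv ℚ (Equiv.sumComm (Fin n) (Fin d))).trans (sumAlgEquiv ℚ (Fin d) (Fin n))
  have hl : ∀ i, Φ (X (Sum.inl i)) = C (X i) := by
    intro i; simp [Φ]
  have hrr : ∀ i, Φ (X (Sum.inr i)) = X i := by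
    intro i; simp [Φ]
  have hsym : (Φ p).IsSymmetric := by
    intro g
    have key : ((rename g : MvPolynomial (Fin d) (MvPolynomial (Fin n) ℚ) →ₐ[_] _).restrictScalars
        ℚ).comp Φ.toAlgHom = Φ.toAlgHom.comp (rename (permY n d g)) := by
      ext1 i
      rcases i with i | i
      · simp [permY, hl]
      · simp [permY, hrr]
    have := DFunLike.congr_fun key p
    simp only [AlgHom.comp_apply, hp g] at this
    exact this
  obtain ⟨q, hq⟩ := esymmAlgHom_surjective (σ := Fin d) (MvPolynomial (Fin n) ℚ) (n := d)
    (by simp) ⟨Φ p, hsym⟩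
  have hq' := congrArg Subtype.val hq
  rw [esymmAlgHom_apply] at hq'
  have hes : ∀ r, Φ (eY n d r) = esymm (Fin d) (MvPolynomial (Fin n) ℚ) r := by
    intro r
    rw [eY, esymm, esymm]
    simp [map_sum, map_prod, hrr]
  have hCC : ∀ c : MvPolynomial (Fin n) ℚ, Φ.symm (C c) ∈ B := by
    intro c
    induction c using MvPolynomial.induction_on with
    | C a =>
      have : Φ.symm (C (C a)) = algebraMap ℚ _ a := by
        rw [AlgEquiv.symm_apply_eq, AlgEquiv.commutes]; rfl
      rw [this]
      exact Subalgebra.algebraMap_mem _ _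
    | add p q hp hq => rw [map_add, map_add]; exact add_mem hp hq
    | mul_X p i hp =>
      rw [map_mul, map_mul, ← hl, AlgEquiv.symm_apply_apply]
      exact mul_mem hp (Algebra.subset_adjoin (Or.inr ⟨i, rfl⟩))
  have main : Φ.symm (aeval (fun i : Fin d => esymm (Fin d) (MvPolynomial (Fin n) ℚ) (i + 1)) q)
      ∈ B := by
    clear hq hq'
    induction q using MvPolynomial.induction_on with
    | C a => rw [aeval_C]; exact hCC a
    | add p q hp hq => rw [map_add, map_add]; exact add_mem hp hq
    | mul_X p i hp =>
      rw [map_mul, map_mul, aeval_X, ← hes, AlgEquiv.symm_apply_apply]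
      exact mul_mem hp (Algebra.subset_adjoin (Or.inl ⟨i, rfl⟩))
  rw [hq'] at main
  simpa using main

theorem eY_mem (n d r : ℕ) : eY n d r ∈ invQ2 n d := by
  intro g
  rw [eY, rename_rename]
  have : (permY n d g : Fin n ⊕ Fin d → Fin n ⊕ Fin d) ∘ Sum.inr = Sum.inr ∘ g := by
    ext i; simp [permY]
  rw [this, ← rename_rename, esymm_isSymmetric]

theorem hY_mem (n d r : ℕ) : hY n d r ∈ invQ2 n d := by
  intro g
  rw [hY, rename_rename]
  have : (permY n d g : Fin n ⊕ Fin d → Fin n ⊕ Fin d) ∘ Sum.inr = Sum.inr ∘ g := by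
    ext i; simp [permY]
  rw [this, ← rename_rename, hsymm_isSymmetric]

theorem xX_mem (n d : ℕ) (i : Fin n) :
    (X (Sum.inl i) : MvPolynomial (Fin n ⊕ Fin d) ℚ) ∈ invQ2 n d := by
  intro g
  simp [permY]

theorem natDegree_EP_le (n d : ℕ) : (EP n d).natDegree ≤ d := by
  have := natDegree_prod_one_sub_le (Finset.univ : Finset (Fin d))
    (fun j => (X (Sum.inr j) : MvPolynomial (Fin n ⊕ Fin d) ℚ))
  simpa [EP] using this

theorem eval_reflect {A : Type} [CommRing A] (d : ℕ) (E : Polynomial A) (hE : E.natDegree ≤ d)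
    (x : A) : (Polynomial.reflect d E).eval x =
      ∑ j ∈ Finset.range (d + 1), E.coeff j * x ^ (d - j) := by
  have h1 : (Polynomial.reflect d E).natDegree < d + 1 := by
    have := Polynomial.natDegree_reflect_le (N := d) (p := E)
    rw [max_eq_left hE] at this
    omega
  rw [Polynomial.eval_eq_sum_range' h1, ← Finset.sum_range_reflect]
  refine Finset.sum_congr rfl fun j hj => ?_
  have hj' : j ≤ d := Nat.lt_succ_iff.1 (Finset.mem_range.1 hj)
  rw [Polynomial.coeff_reflect, Polynomial.revAt_le (by omega),
    show d + 1 - 1 - j = d - j by omega, show d - (d - j) = j by omega]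

theorem upper_bound_aux (n k d : ℕ) (hk : d ≤ k) (hn : k ≤ n) {A : Type} [CommRing A]
    [Algebra ℚ A] (π₀ : invQ2 n d →ₐ[ℚ] A) (hsurj : Function.Surjective π₀)
    (hπ₀ : ∀ c : invQ2 n d, (c : MvPolynomial (Fin n ⊕ Fin d) ℚ) ∈ Ideal.span (JgensQ n k d) →
      π₀ c = 0) :
    GenBy ℚ A (k.choose d * (d.factorial * stirling2 n d)) := by
  rcases subsingleton_or_nontrivial A with hA | hA
  · exact genBy_of_subsingleton _
  obtain ⟨π, hπdef⟩ : ∃ π : invQ2 n d →+* A, π = π₀.toRingHom := ⟨_, rfl⟩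
  have hπ : ∀ c : invQ2 n d, (c : MvPolynomial (Fin n ⊕ Fin d) ℚ) ∈ Ideal.span (JgensQ n k d) →
      π c = 0 := by
    intro c hc
    rw [hπdef]
    exact hπ₀ c hc
  let ν : invQ2 n d →+* MvPolynomial (Fin n ⊕ Fin d) ℚ := (invQ2 n d).val.toRingHom
  have hν : Function.Injective ν := Subtype.val_injective
  have hl : EP n d ∈ Polynomial.lifts ν := by
    rw [Polynomial.lifts_iff_coeff_lifts]
    intro i
    rw [EP_coeff]
    exact ⟨(-1) ^ i * ⟨eY n d i, eY_mem n d i⟩, by simp [ν]⟩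
  obtain ⟨EI, hEI⟩ := hl
  change EI.map ν = EP n d at hEI
  have hEIdeg : EI.natDegree ≤ d := by
    rw [← Polynomial.natDegree_map_eq_of_injective hν, hEI]
    exact natDegree_EP_le n d
  have hEIc : ∀ a, ν (EI.coeff a) = (-1) ^ a * eY n d a := by
    intro a
    rw [← Polynomial.coeff_map, hEI, EP_coeff]
  let HI : PowerSeries (invQ2 n d) := PowerSeries.mk fun r => ⟨hY n d r, hY_mem n d r⟩
  have hHI : PowerSeries.map ν HI = HP n d := by
    ext1 r
    simp [HI, HP, ν]
  have hinj : Function.Injective (PowerSeries.map ν) := by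
    intro p q hpq
    ext1 r
    apply hν
    rw [← PowerSeries.coeff_map, ← PowerSeries.coeff_map, hpq]
  have hEHI : (EI : PowerSeries (invQ2 n d)) * HI = 1 := by
    apply hinj
    rw [map_mul, map_one, ← Polynomial.polynomial_map_coe, hEI, hHI, EP_mul_HP]
  let xI : Fin n → invQ2 n d := fun i => ⟨X (Sum.inl i), xX_mem n d i⟩
  let FI : Polynomial (invQ2 n d) := ∏ i, (1 - Polynomial.C (xI i) * Polynomial.X)
  have hFI : FI.map ν = FP n d := by
    simp only [FI, FP, Polynomial.map_prod]
    simp [ν, xI]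
  have hE0 : EI.coeff 0 = 1 := by
    apply hν
    rw [hEIc, map_one, eY]
    simp
  have hEdeg : (EI.map π).natDegree ≤ d := Polynomial.natDegree_map_le.trans hEIdeg
  have hEH : ((EI.map π : Polynomial _) : PowerSeries A) *
      PowerSeries.map π HI = 1 := by
    rw [Polynomial.polynomial_map_coe, ← map_mul, hEHI, map_one]
  set f := Polynomial.reflect d (EI.map π) with hf
  have hfc : f.coeff d = 1 := by
    rw [hf, Polynomial.coeff_reflect, Polynomial.revAt_le le_rfl, Nat.sub_self,
      Polynomial.coeff_map, hE0, map_one]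
  have hfd : f.natDegree ≤ d := by
    have := Polynomial.natDegree_reflect_le (N := d) (p := EI.map π)
    rwa [max_eq_left hEdeg] at this
  have hfdeg : f.natDegree = d :=
    le_antisymm hfd (Polynomial.le_natDegree_of_ne_zero (by rw [hfc]; exact one_ne_zero))
  refine upper_abstract n k d f (fun i => π (xI i)) ?_ hfdeg ?_ ?_ ?_ ?_
  · rw [Polynomial.Monic, Polynomial.leadingCoeff, hfdeg, hfc]
  · have := dvd_of_series hk (EI.map π) 1 hEdeg _ hEH (fun r hr => ?_)
    · rwa [Polynomial.reflect_one] at this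
    · rw [Polynomial.coe_one, one_mul, PowerSeries.coeff_map]
      apply hπ
      apply Ideal.subset_span
      exact Or.inl (Or.inl ⟨r, hr, by simp [HI]⟩)
  · have := dvd_of_series (hk.trans hn) (EI.map π) (FI.map π) hEdeg _ hEH (fun r hr => ?_)
    · have h2 := reflect_prod_one_sub (Finset.univ : Finset (Fin n)) (fun i => π (xI i))
      rw [Finset.card_univ, Fintype.card_fin] at h2
      rw [← h2]
      convert this using 2
      simp [FI, Polynomial.map_prod]
    · rw [Polynomial.polynomial_map_coe, ← map_mul, PowerSeries.coeff_map]
      apply hπ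
      change ν _ ∈ _
      rw [← PowerSeries.coeff_map, map_mul, ← Polynomial.polynomial_map_coe, hFI, hHI,
        coeff_FP_mul_HP]
      apply Ideal.mul_mem_left
      apply Ideal.subset_span
      exact Or.inl (Or.inr ⟨r, hr, rfl⟩)
  · intro i
    rw [hf, eval_reflect _ _ hEdeg]
    simp only [Polynomial.coeff_map, ← map_pow, ← map_mul, ← map_sum]
    apply hπ
    apply Ideal.subset_span
    refine Or.inr ⟨i, ?_⟩
    change ν _ = _
    rw [map_sum, genPow]
    refine Finset.sum_congr rfl fun j _ => ?_
    rw [map_mul, hEIc, map_pow]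
    change _ * X (Sum.inl i) ^ (d - j) = _
    ring
  · set B := Algebra.adjoin ℚ (Set.range f.coeff ∪ Set.range fun i => π (xI i)) with hB
    have key : ∀ p ∈ Algebra.adjoin ℚ (Set.range (fun j : Fin d => eY n d (j + 1)) ∪
      Set.range (fun i : Fin n => (X (Sum.inl i) : MvPolynomial (Fin n ⊕ Fin d) ℚ))),
        ∃ q : invQ2 n d, ν q = p ∧ π q ∈ B := by
      intro p hp
      induction hp using Algebra.adjoin_induction with
      | mem p hp =>
        rcases hp with ⟨j, rfl⟩ | ⟨i, rfl⟩
        · refine ⟨(-1) ^ ((j : ℕ) + 1) * EI.coeff (j + 1), ?_, ?_⟩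
          · rw [map_mul, hEIc, ← mul_assoc, map_pow, map_neg, map_one, ← mul_pow]
            simp
          · rw [map_mul, map_pow, map_neg, map_one]
            refine mul_mem (pow_mem (neg_mem (one_mem _)) _) (Algebra.subset_adjoin (Or.inl ?_))
            refine ⟨d - (j + 1), ?_⟩
            have := j.2
            rw [hf, Polynomial.coeff_reflect, Polynomial.revAt_le (by omega), Polynomial.coeff_map]
            congr 2
            omega
        · exact ⟨xI i, rfl, Algebra.subset_adjoin (Or.inr ⟨i, rfl⟩)⟩
      | algebraMap r =>
        refine ⟨algebraMap ℚ _ r, rfl, ?_⟩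
        have : π (algebraMap ℚ _ r) = algebraMap ℚ A r := by
          rw [hπdef]
          exact π₀.commutes r
        rw [this]
        exact B.algebraMap_mem r
      | add p q _ _ hp hq =>
        obtain ⟨p', rfl, hp⟩ := hp
        obtain ⟨q', rfl, hq⟩ := hq
        exact ⟨p' + q', map_add _ _ _, by rw [map_add]; exact add_mem hp hq⟩
      | mul p q _ _ hp hq =>
        obtain ⟨p', rfl, hp⟩ := hp
        obtain ⟨q', rfl, hq⟩ := hq
        exact ⟨p' * q', map_mul _ _ _, by rw [map_mul]; exact mul_mem hp hq⟩
    rw [eq_top_iff]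
    rintro y -
    obtain ⟨p, rfl⟩ := hsurj y
    obtain ⟨q, hq, hqB⟩ := key p.1 (inv_le_adjoin n d p.1 p.2)
    have : q = p := hν hq
    rw [← this]
    rw [hπdef] at hqB
    exact hqB


theorem GenBy.finite {M : Type} [AddCommGroup M] [Module ℚ M] {N : ℕ} (h : GenBy ℚ M N) :
    Module.Finite ℚ M ∧ Module.finrank ℚ M ≤ N := by
  classical
  obtain ⟨v, hv⟩ := h
  have hs : Submodule.span ℚ (Set.range v) = ⊤ := by
    rw [eq_top_iff]
    rintro m -
    obtain ⟨c, rfl⟩ := hv m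
    exact Submodule.sum_mem _ fun i _ => Submodule.smul_mem _ _ (Submodule.subset_span ⟨i, rfl⟩)
  refine ⟨⟨⟨Finset.univ.image v, by simpa using hs⟩⟩, ?_⟩
  have := finrank_range_le_card (R := ℚ) v
  rw [Set.finrank, hs, finrank_top] at this
  simpa using this

/-- Transfer of the algebra bound along any ring quotient, in generic form. -/
theorem genBy_quotient {R : Type} [CommRing R] [Algebra ℚ R] (N : ℕ) (I : Ideal R)
    (h : ∀ (A : Type) [CommRing A] [Algebra ℚ A] (π : R →ₐ[ℚ] A), Function.Surjective π →
      (∀ c ∈ I, π c = 0) → GenBy ℚ A N) : GenBy ℚ (R ⧸ I) N :=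
  h (R ⧸ I) (Ideal.Quotient.mkₐ ℚ I) (Ideal.Quotient.mkₐ_surjective ℚ I)
    fun _ hc => Ideal.Quotient.eq_zero_iff_mem.2 hc

theorem upper_bound (n k d : ℕ) (hk : d ≤ k) (hn : k ≤ n) :
    GenBy ℚ (↥(invQ2 n d) ⧸ Ideal.comap (invQ2 n d).val (Ideal.span (JgensQ n k d)))
      (k.choose d * (d.factorial * stirling2 n d)) :=
  genBy_quotient _ _ fun _ _ _ π hs hπ =>
    upper_bound_aux n k d hk hn π hs fun c hc => hπ c hc

theorem upper_bound_finrank (n k d : ℕ) (hk : d ≤ k) (hn : k ≤ n) :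
    Module.finrank ℚ
      (↥(invQ2 n d) ⧸ Ideal.comap (invQ2 n d).val (Ideal.span (JgensQ n k d))) ≤
      (k.choose d * (d.factorial * stirling2 n d)) :=
  (upper_bound n k d hk hn).finite.2

/-- The `ℚ[s]`-span of the image of an evaluation map. -/
noncomputable def spanM {R Z : Type} [CommRing R] [Algebra ℚ R]
    (ψ : R →ₐ[ℚ] (Z → Polynomial ℚ)) : Submodule (Polynomial ℚ) (Z → Polynomial ℚ) :=
  Submodule.span (Polynomial ℚ) (Set.range ψ)

theorem spanM_mul {R Z : Type} [CommRing R] [Algebra ℚ R]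
    (ψ : R →ₐ[ℚ] (Z → Polynomial ℚ)) (q : R) (m : Z → Polynomial ℚ) (hm : m ∈ spanM ψ) :
    ψ q * m ∈ spanM ψ := by
  unfold spanM at *
  induction hm using Submodule.span_induction with
  | mem x hx =>
    obtain ⟨y, rfl⟩ := hx
    exact Submodule.subset_span ⟨q * y, map_mul _ _ _⟩
  | zero => simp
  | add x y _ _ hx hy => rw [mul_add]; exact add_mem hx hy
  | smul c x _ hx => rw [mul_smul_comm]; exact Submodule.smul_mem _ _ hx

theorem lower_abstract {R Z : Type} [CommRing R] [Algebra ℚ R] [Fintype Z] [DecidableEq Z]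
    (ψ : R →ₐ[ℚ] (Z → Polynomial ℚ))
    (hsep : ∀ z : Z, ∃ c : Polynomial ℚ, c ≠ 0 ∧ Pi.single z c ∈ spanM ψ) :
    ∃ (r : ℕ) (L : R →ₗ[ℚ] (Fin r → ℚ)), Fintype.card Z ≤ r ∧ Function.Surjective L ∧
      ∀ p : R, (∃ m ∈ spanM ψ, ψ p = (Polynomial.X : Polynomial ℚ) • m) → L p = 0 := by
  have hb := (Module.finBasis (Polynomial ℚ) (spanM ψ))
  set r := Module.finrank (Polynomial ℚ) (spanM ψ) with hr
  obtain ⟨φ, hφs, hφb⟩ : ∃ φ : spanM ψ →ₗ[ℚ] (Fin r → ℚ),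
      (∀ (c : Polynomial ℚ) (m : spanM ψ), φ (c • m) = c.eval 0 • φ m) ∧
      ∀ i, φ (hb i) = Pi.single i 1 := by
    refine ⟨LinearMap.pi fun i => (Polynomial.aeval (0 : ℚ)).toLinearMap ∘ₗ
      (hb.coord i).restrictScalars ℚ, ?_, ?_⟩
    · intro c m
      ext i
      simp
    · intro i
      ext j
      by_cases h : i = j
      · subst h; simp
      · simp [Ne.symm h]
  let ψ' : R →ₗ[ℚ] spanM ψ :=
    { toFun := fun p => ⟨ψ p, Submodule.subset_span ⟨p, rfl⟩⟩
      map_add' := fun p q => Subtype.ext (map_add ψ p q)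
      map_smul' := fun c p => Subtype.ext (map_smul ψ c p) }
  refine ⟨r, φ ∘ₗ ψ', ?_, ?_, ?_⟩
  · choose c hc hp using hsep
    have hli : LinearIndependent (Polynomial ℚ) (fun z => (⟨Pi.single z (c z), hp z⟩ : spanM ψ)) := by
      rw [Fintype.linearIndependent_iff]
      intro g hg z
      have h1 := congrArg (fun m : spanM ψ => (m : Z → Polynomial ℚ) z) hg
      rw [Submodule.coe_sum, Finset.sum_apply, Finset.sum_eq_single z] at h1
      · simpa [hc z] using h1
      · intro b _ hbz
        simp [hbz.symm]
      · simp
    exact hli.fintype_card_le_finrank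
  · have key : ∀ m (hm : m ∈ spanM ψ), ∃ p, φ (ψ' p) = φ ⟨m, hm⟩ := by
      intro m hm
      induction hm using Submodule.span_induction with
      | mem x hx =>
        obtain ⟨y, rfl⟩ := hx
        exact ⟨y, rfl⟩
      | zero => exact ⟨0, by rw [map_zero]; rfl⟩
      | add x y hx hy ihx ihy =>
        obtain ⟨p, hp⟩ := ihx
        obtain ⟨q, hq⟩ := ihy
        refine ⟨p + q, ?_⟩
        rw [map_add, map_add, hp, hq]
        exact (map_add φ ⟨x, hx⟩ ⟨y, hy⟩).symm
      | smul c x hx ihx =>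
        obtain ⟨p, hp⟩ := ihx
        refine ⟨c.eval 0 • p, ?_⟩
        rw [map_smul, map_smul, hp]
        exact (hφs c ⟨x, hx⟩).symm
    intro v
    obtain ⟨p, hp⟩ := key _ (∑ i, (Polynomial.C (v i)) • hb i).2
    refine ⟨p, ?_⟩
    rw [LinearMap.comp_apply, hp]
    change φ (∑ i, (Polynomial.C (v i)) • hb i) = v
    rw [map_sum]
    ext i
    simp [hφs, hφb, Finset.sum_apply, Pi.single_apply]
  · rintro p ⟨m, hm, h⟩
    have : ψ' p = (Polynomial.X : Polynomial ℚ) • (⟨m, hm⟩ : spanM ψ) := Subtype.ext h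
    rw [LinearMap.comp_apply, this, hφs]
    simp

theorem finrank_quotient_ge {R : Type} [CommRing R] [Algebra ℚ R] (I : Ideal R)
    (hfin : Module.Finite ℚ (R ⧸ I)) (r : ℕ) (L : R →ₗ[ℚ] (Fin r → ℚ))
    (hL : Function.Surjective L) (hI : ∀ p ∈ I, L p = 0) : r ≤ Module.finrank ℚ (R ⧸ I) := by
  let L' : (R ⧸ I) →ₗ[ℚ] (Fin r → ℚ) :=
    { toFun := fun x => Quotient.liftOn' x L (fun a b hab => by
        have : L (a - b) = 0 := hI _ (by
          rw [← Ideal.Quotient.mk_eq_mk_iff_sub_mem]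
          exact Quotient.sound' hab)
        rwa [map_sub, sub_eq_zero] at this)
      map_add' := by
        intro x y
        obtain ⟨x, rfl⟩ := Ideal.Quotient.mk_surjective x
        obtain ⟨y, rfl⟩ := Ideal.Quotient.mk_surjective y
        exact map_add L x y
      map_smul' := by
        intro c x
        obtain ⟨x, rfl⟩ := Ideal.Quotient.mk_surjective x
        exact map_smul L c x }
  have hs : Function.Surjective L' := by
    intro v
    obtain ⟨p, hp⟩ := hL v
    exact ⟨Ideal.Quotient.mk I p, hp⟩
  have := LinearMap.finrank_le_finrank_of_surjective hs
  simpa using this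

/-- Averaging over the symmetric group. -/
noncomputable def reyn (n d : ℕ) (p : MvPolynomial (Fin n ⊕ Fin d) ℚ) :
    MvPolynomial (Fin n ⊕ Fin d) ℚ :=
  (C ((Nat.factorial d : ℚ)⁻¹)) * ∑ g : Equiv.Perm (Fin d), rename (⇑(permY n d g)) p

theorem reyn_mem (n d : ℕ) (p : MvPolynomial (Fin n ⊕ Fin d) ℚ) : reyn n d p ∈ invQ2 n d := by
  intro g
  rw [reyn, map_mul, rename_C, map_sum]
  congr 1
  refine Fintype.sum_equiv (Equiv.mulLeft g) _ _ fun h => ?_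
  rw [rename_rename]
  congr 2
  ext (i | j) <;> simp [permY]

theorem reyn_of_mem (n d : ℕ) (p : MvPolynomial (Fin n ⊕ Fin d) ℚ) (hp : p ∈ invQ2 n d) :
    reyn n d p = p := by
  rw [reyn, Finset.sum_congr rfl fun g _ => hp g, Finset.sum_const, Finset.card_univ,
    Fintype.card_perm, Fintype.card_fin, nsmul_eq_mul, ← mul_assoc]
  have : ((Nat.factorial d : ℕ) : MvPolynomial (Fin n ⊕ Fin d) ℚ) = C (Nat.factorial d : ℚ) := by
    simp
  rw [this, ← C_mul, inv_mul_cancel₀ (by positivity)]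
  simp

theorem reyn_mul (n d : ℕ) (a p : MvPolynomial (Fin n ⊕ Fin d) ℚ) (hp : p ∈ invQ2 n d) :
    reyn n d (a * p) = reyn n d a * p := by
  simp only [reyn, map_mul]
  rw [mul_assoc, Finset.sum_mul]
  congr 1
  exact Finset.sum_congr rfl fun g _ => by rw [hp g]

theorem reyn_add (n d : ℕ) (a b : MvPolynomial (Fin n ⊕ Fin d) ℚ) :
    reyn n d (a + b) = reyn n d a + reyn n d b := by
  simp only [reyn, map_add, Finset.sum_add_distrib, mul_add]

/-- An ideal of the invariant ring containing the generators contains `J ∩ inv`. -/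
theorem comap_le (n d : ℕ) (S : Set (MvPolynomial (Fin n ⊕ Fin d) ℚ))
    (hS : ∀ p ∈ S, p ∈ invQ2 n d) (T : invQ2 n d → Prop)
    (hadd : ∀ a b, T a → T b → T (a + b)) (h0 : T 0) (hmul : ∀ a b, T b → T (a * b))
    (hT : ∀ p (hp : p ∈ S), T ⟨p, hS p hp⟩) (p : invQ2 n d)
    (hp : (p : MvPolynomial (Fin n ⊕ Fin d) ℚ) ∈ Ideal.span S) : T p := by
  have key : ∀ q ∈ Ideal.span S, ∀ a, T ⟨reyn n d (a * q), reyn_mem n d _⟩ := by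
    intro q hq
    induction hq using Submodule.span_induction with
    | mem x hx =>
      intro a
      have : (⟨reyn n d (a * x), reyn_mem n d _⟩ : invQ2 n d) =
          ⟨reyn n d a, reyn_mem n d _⟩ * ⟨x, hS x hx⟩ := Subtype.ext (reyn_mul n d a x (hS x hx))
      rw [this]
      exact hmul _ _ (hT x hx)
    | zero =>
      intro a
      convert h0 using 1
      apply Subtype.ext
      simp [reyn]
    | add x y _ _ hx hy =>
      intro a
      have : (⟨reyn n d (a * (x + y)), reyn_mem n d _⟩ : invQ2 n d) =
          ⟨reyn n d (a * x), reyn_mem n d _⟩ + ⟨reyn n d (a * y), reyn_mem n d _⟩ :=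
        Subtype.ext ((congrArg _ (mul_add a x y)).trans (reyn_add n d _ _))
      rw [this]
      exact hadd _ _ (hx a) (hy a)
    | smul c x _ hx =>
      intro a
      have := hx (a * c)
      convert this using 3
      rw [smul_eq_mul]; ring
  have h := key _ hp 1
  have e : (⟨reyn n d (1 * p), reyn_mem n d _⟩ : invQ2 n d) = p :=
    Subtype.ext (by rw [one_mul]; exact reyn_of_mem n d _ p.2)
  rwa [e] at h

theorem coeff_zero_of_sub {A : Type} [CommRing A] {N d : ℕ} (a : Fin N → A) (b : Fin d → A)
    (σ : Fin d → Fin N) (hσ : Function.Injective σ) (hab : ∀ j, a (σ j) = b j)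
    (H : PowerSeries A)
    (hH : ((∏ j : Fin d, (1 - Polynomial.C (b j) * Polynomial.X) : Polynomial A) :
      PowerSeries A) * H = 1) (r : ℕ) (hr : N - d < r) :
    PowerSeries.coeff r
      (((∏ i : Fin N, (1 - Polynomial.C (a i) * Polynomial.X) : Polynomial A) :
      PowerSeries A) * H) = 0 := by
  classical
  rw [← Finset.prod_mul_prod_compl (Finset.univ.image σ), Finset.prod_image hσ.injOn]
  simp only [hab]
  rw [Polynomial.coe_mul, mul_right_comm, hH, one_mul, Polynomial.coeff_coe]
  apply Polynomial.coeff_eq_zero_of_natDegree_lt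
  refine (natDegree_prod_one_sub_le _ _).trans_lt ?_
  rw [Finset.card_compl, Finset.card_image_of_injective _ hσ]
  simpa using hr

theorem map_EP {A : Type} [CommRing A] [Algebra ℚ A] {n d : ℕ} (a : Fin n → A) (b : Fin d → A) :
    (EP n d).map (aeval (R := ℚ) (Sum.elim a b)).toRingHom =
      ∏ j : Fin d, (1 - Polynomial.C (b j) * Polynomial.X) := by
  rw [EP, Polynomial.map_prod]
  simp

theorem map_FP {A : Type} [CommRing A] [Algebra ℚ A] {n d : ℕ} (a : Fin n → A) (b : Fin d → A) :
    (FP n d).map (aeval (R := ℚ) (Sum.elim a b)).toRingHom =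
      ∏ i : Fin n, (1 - Polynomial.C (a i) * Polynomial.X) := by
  rw [FP, Polynomial.map_prod]
  simp

theorem map_EP_HP {A : Type} [CommRing A] [Algebra ℚ A] {n d : ℕ} (a : Fin n → A)
    (b : Fin d → A) :
    ((∏ j : Fin d, (1 - Polynomial.C (b j) * Polynomial.X) : Polynomial A) :
      PowerSeries A) * PowerSeries.map (aeval (R := ℚ) (Sum.elim a b)).toRingHom (HP n d) = 1 := by
  have h := congrArg (PowerSeries.map (aeval (R := ℚ) (Sum.elim a b)).toRingHom) (EP_mul_HP n d)
  rwa [map_mul, map_one, ← Polynomial.polynomial_map_coe, map_EP] at h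

theorem ev_genXY {A : Type} [CommRing A] [Algebra ℚ A] {n d : ℕ} (a : Fin n → A) (b : Fin d → A)
    (σ : Fin d → Fin n) (hσ : Function.Injective σ) (hab : ∀ j, a (σ j) = b j)
    (r : ℕ) (hr : n - d < r) : aeval (R := ℚ) (Sum.elim a b) (genXY n d r) = 0 := by
  have h := coeff_zero_of_sub a b σ hσ hab _ (map_EP_HP (n := n) a b) r hr
  rw [← map_FP (d := d) a b, Polynomial.polynomial_map_coe, ← map_mul, PowerSeries.coeff_map,
    coeff_FP_mul_HP] at h
  change aeval (R := ℚ) (Sum.elim a b) _ = 0 at h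
  rw [map_mul] at h
  have hu : IsUnit (aeval (R := ℚ) (Sum.elim a b) ((-1) ^ r : MvPolynomial (Fin n ⊕ Fin d) ℚ)) := by
    rw [map_pow, map_neg, map_one]
    exact (isUnit_one.neg).pow r
  exact (hu.mul_right_eq_zero).1 h

theorem ev_genPow {A : Type} [CommRing A] [Algebra ℚ A] {n d : ℕ} (a : Fin n → A) (b : Fin d → A)
    (i : Fin n) (j : Fin d) (hab : a i = b j) :
    aeval (R := ℚ) (Sum.elim a b) (genPow n d i) = 0 := by
  have h1 := reflect_prod_one_sub (Finset.univ : Finset (Fin d)) b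
  have h2 := natDegree_prod_one_sub_le (Finset.univ : Finset (Fin d)) b
  rw [Finset.card_univ, Fintype.card_fin] at h1 h2
  have h3 := eval_reflect d _ h2 (a i)
  rw [h1, Polynomial.eval_prod, Finset.prod_eq_zero (Finset.mem_univ j) (by simp [hab]),
    ← map_EP a b] at h3
  rw [h3, genPow, map_sum]
  refine Finset.sum_congr rfl fun l _ => ?_
  rw [Polynomial.coeff_map, EP_coeff]
  change _ = aeval (R := ℚ) (Sum.elim a b) _ * _
  simp only [map_mul, map_pow, map_neg, map_one, aeval_X, Sum.elim_inl]
  ring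

/-- `∏_{j<k} (1 - j s u)` over `ℚ[s]`. -/
noncomputable def Ft (k : ℕ) : Polynomial (Polynomial ℚ) :=
  ∏ j : Fin k, (1 - Polynomial.C (Polynomial.C (j : ℚ) * Polynomial.X) * Polynomial.X)

theorem Ft_map (k : ℕ) : (Ft k).map (Polynomial.evalRingHom 0) = 1 := by
  rw [Ft, Polynomial.map_prod]
  simp

theorem Ft_coeff_zero (k : ℕ) : (Ft k).coeff 0 = 1 := by
  rw [Ft, Polynomial.coeff_zero_eq_eval_zero, Polynomial.eval_prod]
  simp

theorem Ft_coeff_succ (k a : ℕ) : ∃ g : Polynomial ℚ, (Ft k).coeff (a + 1) = Polynomial.X * g := by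
  have h := congrArg (fun p => Polynomial.coeff p (a + 1)) (Ft_map k)
  simp only [Polynomial.coeff_map] at h
  have h' : ((Ft k).coeff (a + 1)).coeff 0 = 0 := by
    rw [Polynomial.coeff_zero_eq_eval_zero]
    simpa [Polynomial.coeff_one] using h
  exact Polynomial.X_dvd_iff.2 h'

theorem ev_hY_rec {n k d : ℕ} (a : Fin n → Polynomial ℚ) (σ : Fin d → Fin k)
    (hσ : Function.Injective σ) (G : ℕ → Polynomial ℚ)
    (hG : ∀ l, (Ft k).coeff (l + 1) = Polynomial.X * G l) (r : ℕ) (hr : k - d < r + 1) :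
    aeval (R := ℚ) (Sum.elim a fun j => Polynomial.C ((σ j : ℕ) : ℚ) * Polynomial.X)
      (hY n d (r + 1)) = Polynomial.X * (-∑ p ∈ Finset.HasAntidiagonal.antidiagonal r, G p.1 *
      aeval (R := ℚ) (Sum.elim a fun j => Polynomial.C ((σ j : ℕ) : ℚ) * Polynomial.X)
        (hY n d p.2)) := by
  set b : Fin d → Polynomial ℚ := fun j => Polynomial.C ((σ j : ℕ) : ℚ) * Polynomial.X with hb
  have h := coeff_zero_of_sub (fun j : Fin k => Polynomial.C ((j : ℕ) : ℚ) * Polynomial.X) b σ hσ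
    (fun j => rfl) _ (map_EP_HP (n := n) a b) (r + 1) hr
  change PowerSeries.coeff (r + 1) ((Ft k : PowerSeries (Polynomial ℚ)) * _) = 0 at h
  rw [PowerSeries.coeff_mul, Finset.Nat.sum_antidiagonal_succ] at h
  simp only [Polynomial.coeff_coe, Ft_coeff_zero, hG, PowerSeries.coeff_map, HP,
    PowerSeries.coeff_mk, one_mul] at h
  change aeval (R := ℚ) (Sum.elim a b) (hY n d (r + 1)) + ∑ p ∈ Finset.HasAntidiagonal.antidiagonal r,
    Polynomial.X * G p.1 * aeval (R := ℚ) (Sum.elim a b) (hY n d p.2) = 0 at h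
  simp only [mul_assoc, ← Finset.mul_sum] at h
  linear_combination h

theorem genXY_mem (n d r : ℕ) : genXY n d r ∈ invQ2 n d := by
  have hX : ∀ a, eX n d a ∈ invQ2 n d := by
    intro a g
    rw [eX, rename_rename]
    congr 2
  exact Subalgebra.sum_mem _ fun j _ => mul_mem (pow_mem (neg_mem (one_mem _)) _)
    (mul_mem (hX _) (hY_mem n d j))

theorem genPow_mem (n d : ℕ) (i : Fin n) : genPow n d i ∈ invQ2 n d :=
  Subalgebra.sum_mem _ fun j _ => mul_mem (pow_mem (neg_mem (one_mem _)) _)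
    (mul_mem (pow_mem (xX_mem n d i) _) (eY_mem n d j))

theorem Jgens_mem (n k d : ℕ) (p : MvPolynomial (Fin n ⊕ Fin d) ℚ) (hp : p ∈ JgensQ n k d) :
    p ∈ invQ2 n d := by
  rcases hp with (⟨r, -, rfl⟩ | ⟨r, -, rfl⟩) | ⟨i, rfl⟩
  · exact hY_mem n d r
  · exact genXY_mem n d r
  · exact genPow_mem n d i

/-- Functions with exactly `d` values. -/
abbrev ZZ (n k d : ℕ) : Type := {z : Fin n → Fin k // (Finset.univ.image z).card = d}

/-- Enumeration of the values. -/
def zval {n k d : ℕ} (z : ZZ n k d) : Fin d → Fin k :=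
  (Finset.univ.image z.1).orderEmbOfFin z.2

theorem zval_inj {n k d : ℕ} (z : ZZ n k d) : Function.Injective (zval z) :=
  ((Finset.univ.image z.1).orderEmbOfFin z.2).injective

theorem zval_surj {n k d : ℕ} (z : ZZ n k d) (i : Fin n) : ∃ j, zval z j = z.1 i := by
  have h : z.1 i ∈ Set.range ((Finset.univ.image z.1).orderEmbOfFin z.2) := by
    rw [Finset.range_orderEmbOfFin]
    simp
  exact h

theorem zval_lift {n k d : ℕ} (z : ZZ n k d) (j : Fin d) : ∃ i, z.1 i = zval z j := by
  have h : zval z j ∈ Finset.univ.image z.1 := Finset.orderEmbOfFin_mem _ _ _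
  simpa using h

/-- Evaluation at one point (scaled by `s`). -/
noncomputable def evz {n k d : ℕ} (z : ZZ n k d) :
    MvPolynomial (Fin n ⊕ Fin d) ℚ →ₐ[ℚ] Polynomial ℚ :=
  aeval (R := ℚ) (Sum.elim (fun i => Polynomial.C ((z.1 i : ℕ) : ℚ) * Polynomial.X)
    fun j => Polynomial.C ((zval z j : ℕ) : ℚ) * Polynomial.X)

/-- Evaluation of invariants at all points. -/
noncomputable def evI (n k d : ℕ) : invQ2 n d →ₐ[ℚ] (ZZ n k d → Polynomial ℚ) :=
  (AlgHom.pi fun z => evz z).comp (invQ2 n d).val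

theorem evI_apply {n k d : ℕ} (p : invQ2 n d) (z : ZZ n k d) :
    evI n k d p z = evz z (p : MvPolynomial (Fin n ⊕ Fin d) ℚ) := rfl

theorem evI_sep (n k d : ℕ) (z : ZZ n k d) (S : Finset (ZZ n k d)) (hS : z ∉ S) :
    ∃ m ∈ spanM (evI n k d), m z ≠ 0 ∧ ∀ w ∈ S, m w = 0 := by
  induction S using Finset.induction_on with
  | empty =>
    refine ⟨1, Submodule.subset_span ⟨1, map_one _⟩, by simp, by simp⟩
  | insert w S hw ih =>
    rw [Finset.mem_insert, not_or] at hS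
    obtain ⟨m, hm, hmz, hmS⟩ := ih hS.2
    have hne : z.1 ≠ w.1 := fun h => hS.1 (Subtype.ext h)
    obtain ⟨i, hi⟩ := Function.ne_iff.1 hne
    refine ⟨evI n k d ⟨X (Sum.inl i), xX_mem n d i⟩ * m -
      (Polynomial.C ((w.1 i : ℕ) : ℚ) * Polynomial.X) • m,
      sub_mem (spanM_mul _ _ _ hm) (Submodule.smul_mem _ _ hm), ?_, ?_⟩
    · have e : (evI n k d ⟨X (Sum.inl i), xX_mem n d i⟩ * m -
        (Polynomial.C ((w.1 i : ℕ) : ℚ) * Polynomial.X) • m) z =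
          (Polynomial.C (((z.1 i : ℕ) : ℚ) - ((w.1 i : ℕ) : ℚ)) * Polynomial.X) * m z := by
        rw [Pi.sub_apply, Pi.mul_apply, Pi.smul_apply, evI_apply, evz, smul_eq_mul, aeval_X,
          Sum.elim_inl, Polynomial.C_sub]
        ring
      rw [e]
      refine mul_ne_zero (mul_ne_zero ?_ Polynomial.X_ne_zero) hmz
      rw [Polynomial.C_ne_zero, sub_ne_zero]
      intro h
      exact hi (Fin.ext (by exact_mod_cast h))
    · intro v hv
      rw [Pi.sub_apply, Pi.mul_apply, Pi.smul_apply, evI_apply, evz, smul_eq_mul, aeval_X,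
          Sum.elim_inl]
      rcases Finset.mem_insert.1 hv with rfl | hv
      · ring
      · rw [hmS v hv]; ring

theorem evI_gens (n k d : ℕ) (p : MvPolynomial (Fin n ⊕ Fin d) ℚ) (hp : p ∈ JgensQ n k d) :
    ∃ m ∈ spanM (evI n k d),
      evI n k d ⟨p, Jgens_mem n k d p hp⟩ = (Polynomial.X : Polynomial ℚ) • m := by
  have hz : (∀ z : ZZ n k d, evz z p = 0) → ∃ m ∈ spanM (evI n k d),
      evI n k d ⟨p, Jgens_mem n k d p hp⟩ = (Polynomial.X : Polynomial ℚ) • m := by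
    intro h
    refine ⟨0, zero_mem _, ?_⟩
    rw [smul_zero]
    funext z
    exact h z
  rcases hp with (⟨r, hr, hpe⟩ | ⟨r, hr, hpe⟩) | ⟨i, hpe⟩
  · clear hz
    obtain ⟨r, rfl⟩ : ∃ r', r = r' + 1 := ⟨r - 1, by omega⟩
    choose G hG using Ft_coeff_succ k
    refine ⟨-∑ q ∈ Finset.HasAntidiagonal.antidiagonal r,
      G q.1 • evI n k d ⟨hY n d q.2, hY_mem n d q.2⟩, neg_mem (sum_mem fun q _ =>
        Submodule.smul_mem _ _ (Submodule.subset_span ⟨_, rfl⟩)), ?_⟩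
    funext z
    rw [evI_apply, Pi.smul_apply, Pi.neg_apply, Finset.sum_apply, smul_eq_mul]
    change evz z p = _
    rw [hpe]
    exact ev_hY_rec _ (zval z) (zval_inj z) G hG r hr
  · apply hz
    intro z
    choose τ hτ using zval_lift z
    rw [hpe]
    refine ev_genXY _ _ τ ?_ ?_ r hr
    · intro a b hab
      apply zval_inj z
      rw [← hτ, ← hτ, hab]
    · intro j
      rw [hτ]
  · apply hz
    intro z
    obtain ⟨j, hj⟩ := zval_surj z i
    rw [hpe]
    exact ev_genPow _ _ i j (by rw [hj])

theorem lower_bound (n k d : ℕ) (hk : d ≤ k) (hn : k ≤ n) :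
    Fintype.card (ZZ n k d) ≤ Module.finrank ℚ
      (↥(invQ2 n d) ⧸ Ideal.comap (invQ2 n d).val (Ideal.span (JgensQ n k d))) := by
  classical
  obtain ⟨r, L, hr, hL, hker⟩ := lower_abstract (evI n k d) (fun z => by
    obtain ⟨m, hm, hmz, hm0⟩ := evI_sep n k d z (Finset.univ.erase z) (by simp)
    refine ⟨m z, hmz, ?_⟩
    have : Pi.single z (m z) = m := by
      funext w
      by_cases h : w = z
      · subst h; simp
      · rw [Pi.single_eq_of_ne h, hm0 w (by simp [h])]
    rw [this]
    exact hm)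
  refine hr.trans (finrank_quotient_ge _ (upper_bound n k d hk hn).finite.1 r L hL ?_)
  intro p hp
  apply hker
  refine comap_le n d (JgensQ n k d) (Jgens_mem n k d)
    (fun p => ∃ m ∈ spanM (evI n k d), evI n k d p = (Polynomial.X : Polynomial ℚ) • m)
    ?_ ?_ ?_ (evI_gens n k d) p hp
  · rintro a b ⟨m, hm, h⟩ ⟨m', hm', h'⟩
    exact ⟨m + m', add_mem hm hm', by rw [map_add, h, h', smul_add]⟩
  · exact ⟨0, zero_mem _, by rw [map_zero, smul_zero]⟩
  · rintro a b ⟨m, hm, h⟩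
    exact ⟨_, spanM_mul _ a m hm, by rw [map_mul, h, mul_smul_comm]⟩

theorem card_image_cons {n k : ℕ} (w : Fin n → Fin k) (a : Fin k) :
    (Finset.univ.image (Fin.cons a w : Fin (n + 1) → Fin k)) =
      insert a (Finset.univ.image w) := by
  ext x
  simp only [Finset.mem_image, Finset.mem_univ, true_and, Finset.mem_insert, Fin.exists_fin_succ,
    Fin.cons_zero, Fin.cons_succ]
  tauto

/-- Counting by sums. -/
theorem card_ZZ (n k d : ℕ) : Fintype.card (ZZ n k d) =
    ∑ z : Fin n → Fin k, if (Finset.univ.image z).card = d then 1 else 0 := by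
  rw [Fintype.card_subtype, Finset.card_filter]

theorem inner_count {k : ℕ} (S : Finset (Fin k)) (d : ℕ) :
    (∑ a : Fin k, if (insert a S).card = d + 1 then 1 else 0) =
      (d + 1) * (if S.card = d + 1 then 1 else 0) + (k - d) * (if S.card = d then 1 else 0) := by
  have h1 : (∑ a : Fin k, if (insert a S).card = d + 1 then 1 else 0) =
      (∑ a ∈ S, if S.card = d + 1 then 1 else 0) +
        ∑ a ∈ Sᶜ, if S.card + 1 = d + 1 then 1 else 0 := by
    rw [← Finset.sum_add_sum_compl S]
    congr 1
    · exact Finset.sum_congr rfl fun a ha => by rw [Finset.insert_eq_of_mem ha]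
    · exact Finset.sum_congr rfl fun a ha => by
        rw [Finset.card_insert_of_notMem (Finset.mem_compl.1 ha)]
  rw [h1, Finset.sum_const, Finset.sum_const, Finset.card_compl, Fintype.card_fin]
  by_cases h2 : S.card = d + 1
  · simp [h2]
  · by_cases h3 : S.card = d
    · simp [h3]
    · simp [h2, h3]

theorem card_ZZ_succ (n k d : ℕ) : Fintype.card (ZZ (n + 1) k (d + 1)) =
    (d + 1) * Fintype.card (ZZ n k (d + 1)) + (k - d) * Fintype.card (ZZ n k d) := by
  rw [card_ZZ, card_ZZ, card_ZZ, ← (Fin.consEquiv fun _ : Fin (n + 1) => Fin k).sum_comp,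
    Fintype.sum_prod_type_right, Finset.mul_sum, Finset.mul_sum, ← Finset.sum_add_distrib]
  refine Finset.sum_congr rfl fun w _ => ?_
  rw [← inner_count]
  refine Finset.sum_congr rfl fun a _ => ?_
  rw [← card_image_cons]
  rfl

theorem card_ZZ_eq (k : ℕ) : ∀ n d, Fintype.card (ZZ n k d) = k.descFactorial d * stirling2 n d := by
  intro n
  induction n with
  | zero =>
    intro d
    rw [card_ZZ]
    cases d with
    | zero => simp [stirling2]
    | succ d => simp [stirling2]
  | succ n ih =>
    intro d
    cases d with
    | zero =>
      rw [card_ZZ, Finset.sum_eq_zero]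
      · simp [stirling2]
      · intro z _
        rw [if_neg]
        rw [Finset.card_eq_zero, Finset.image_eq_empty]
        exact Finset.univ_nonempty.ne_empty
    | succ d =>
      rw [card_ZZ_succ, ih, ih, stir_rec, Nat.descFactorial_succ]
      ring


/-- For `n ≥ k ≥ d ≥ 1`, the quotient of the invariant ring
`ℚ[x,y]^{S_d}` by `J_{n,k,d}^ℚ ∩ ℚ[x,y]^{S_d}` has `ℚ`-dimension
`(k!/(k−d)!)·Stir(n,d)`. -/
theorem finrank_invariant_quotient (n k d : ℕ) (hd : 1 ≤ d) (hk : d ≤ k) (hn : k ≤ n) :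
    Module.finrank ℚ
      (↥(invQ2 n d) ⧸ Ideal.comap (invQ2 n d).val (Ideal.span (JgensQ n k d))) =
      Nat.factorial k / Nat.factorial (k - d) * stirling2 n d := by
  have h1 := upper_bound_finrank n k d hk hn
  have h2 := lower_bound n k d hk hn
  rw [card_ZZ_eq] at h2
  rw [← mul_assoc, mul_comm (k.choose d), ← Nat.descFactorial_eq_factorial_mul_choose] at h1
  rw [← Nat.descFactorial_eq_div hk]
  exact le_antisymm h1 h2
end
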